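/- arXiv:1908.04496 — 2 statements merged into one kernel-verified Lean document; each statement's English description precedes it below -/
import Mathlib

section
/- Fix masses m₁, m₂, m₃ > 0 and μ₁ > 0. Then there exist ε > 0 and functions q₁, q₂, q₃, q₄ : (0, ε) → ℝ with the asymptotic behaviour q₁(μ₂)/(κμ₁²u(μ₂)²) → 1, q₄(μ₂)/(κμ₁²) → 1, q₂(μ₂) = O(u(μ₂)¹⁰), q₃(μ₂) = O(u(μ₂)¹²) as μ₂ → 0⁺ (where κ = M_tot/(m₁²(m₂+m₃)²) and u(μ₂) = (μ₂/μ₁)/(m₂m₃√(κ/(m₂+m₃)))), such that for every μ₂ ∈ (0, ε) the point with positions (q₁(μ₂), q₂(μ₂), q₃(μ₂), q₄(μ₂)) and zero momenta is a critical point of the fully reduced Hamiltonian H with parameters (μ₁, μ₂) and moreover a strict local minimum of H. In particular, the corresponding relative equilibrium of the three-body problem in ℝ⁴ is Lyapunov stable. -/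
noncomputable section

/-- `f(q_i, q_j, L₃) = ((L_d + L_s)²q_i² + (L_d − L_s)²q_j²)/(16A²)`,
with `L_d = √(Δ² − L₃²)`, `L_s = √(Σ² − L₃²)`, `Δ = μ₁ − μ₂`, `Σ = μ₁ + μ₂`. -/
def fred (μ₁ μ₂ A qi qj L₃ : ℝ) : ℝ :=
  let Ld := Real.sqrt ((μ₁ - μ₂) ^ 2 - L₃ ^ 2)
  let Ls := Real.sqrt ((μ₁ + μ₂) ^ 2 - L₃ ^ 2)
  ((Ld + Ls) ^ 2 * qi ^ 2 + (Ld - Ls) ^ 2 * qj ^ 2) / (16 * A ^ 2)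

/-- The fully reduced Hamiltonian of the three-body problem in `ℝ⁴` on the phase space
`ℝ⁴ × ℝ⁴` (positions `q`, momenta `p`). -/
def Hred (ν₁ ν₂ μ₁ μ₂ : ℝ) (V : (Fin 3 → ℝ) → ℝ) (z : (Fin 4 → ℝ) × (Fin 4 → ℝ)) : ℝ :=
  let q := z.1; let p := z.2
  let A := (q 0 * q 3 - q 1 * q 2) / 2
  let L₃ := q 0 * p 1 - q 1 * p 0 + q 2 * p 3 - q 3 * p 2
  (1 / (2 * ν₁)) * (p 0 ^ 2 + p 1 ^ 2 + fred μ₁ μ₂ A (q 2) (q 3) L₃) +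
    (1 / (2 * ν₂)) * (p 2 ^ 2 + p 3 ^ 2 + fred μ₁ μ₂ A (q 0) (q 1) L₃) +
    V ![q 0 ^ 2 + q 1 ^ 2, q 2 ^ 2 + q 3 ^ 2, q 0 * q 2 + q 1 * q 3]

/-- The Newtonian potential of the three-body problem in the translation-reduced
variables: `V(s₁,s₂,s₃) = −m₂m₃/√s₁ − m₃m₁/√(a₂²s₁+s₂+2a₂s₃) − m₁m₂/√(a₃²s₁+s₂−2a₃s₃)`
with `a₂ = m₂/(m₂+m₃)`, `a₃ = m₃/(m₂+m₃)`. -/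
def Vnewt (m₁ m₂ m₃ : ℝ) (s : Fin 3 → ℝ) : ℝ :=
  -(m₂ * m₃ / Real.sqrt (s 0)) -
    m₃ * m₁ / Real.sqrt ((m₂ / (m₂ + m₃)) ^ 2 * s 0 + s 1 + 2 * (m₂ / (m₂ + m₃)) * s 2) -
    m₁ * m₂ / Real.sqrt ((m₃ / (m₂ + m₃)) ^ 2 * s 0 + s 1 - 2 * (m₃ / (m₂ + m₃)) * s 2)

open Filter Topology Asymptotics


lemma mixed_diff {E : Type*} [NormedAddCommGroup E] [NormedSpace ℝ E] (Ψ : E → ℝ) (z₀ : E)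
    (hΨ : ContDiffAt ℝ 2 Ψ z₀) :
    ∃ C > 0, ∃ r > 0, ContinuousOn Ψ (Metric.ball z₀ r) ∧
      (∀ v ∈ Metric.ball z₀ r, |Ψ v| ≤ C) ∧
      ∀ v h k, v ∈ Metric.ball z₀ r → v + h ∈ Metric.ball z₀ r → v + k ∈ Metric.ball z₀ r →
        v + k + h ∈ Metric.ball z₀ r →
        |Ψ (v + k + h) - Ψ (v + k) - (Ψ (v + h) - Ψ v)| ≤ C * ‖h‖ * ‖k‖ := by
  have h1 : ContDiffAt ℝ 1 (fderiv ℝ Ψ) z₀ := hΨ.fderiv_right (m := 1) (by norm_num)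
  obtain ⟨K, s, hs, hK⟩ := h1.exists_lipschitzOnWith
  have h2 : ∀ᶠ y in 𝓝 z₀, DifferentiableAt ℝ Ψ y :=
    (hΨ.eventually (by simp)).mono fun y hy => hy.differentiableAt (by norm_num)
  have h3 : ∀ᶠ y in 𝓝 z₀, |Ψ y| ≤ |Ψ z₀| + 1 := by
    have := hΨ.continuousAt.abs.eventually_lt continuousAt_const (show |Ψ z₀| < |Ψ z₀| + 1 by linarith)
    exact this.mono fun y hy => hy.le
  obtain ⟨r, hr, hball⟩ := Metric.eventually_nhds_iff_ball.1 (h2.and (h3.and hs))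
  refine ⟨max K (|Ψ z₀| + 1), lt_of_lt_of_le (by positivity) (le_max_right _ _), r, hr, ?_, ?_, ?_⟩
  · intro v hv
    exact (hball v hv).1.continuousAt.continuousWithinAt
  · intro v hv
    exact (hball v hv).2.1.trans (le_max_right _ _)
  · intro v h k hv hvh hvk hvkh
    let S : Set E := Metric.ball z₀ r ∩ (fun x => x + h) ⁻¹' Metric.ball z₀ r
    have hS : Convex ℝ S := (convex_ball _ _).inter ((convex_ball _ _).translate_preimage_left h)
    have key := hS.norm_image_sub_le_of_norm_hasFDerivWithin_le
      (f := fun x => Ψ (x + h) - Ψ x) (f' := fun x => fderiv ℝ Ψ (x + h) - fderiv ℝ Ψ x)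
      (C := K * ‖h‖) (x := v) (y := v + k) ?_ ?_ ⟨hv, hvh⟩ ⟨hvk, hvkh⟩
    · simp only [Real.norm_eq_abs, add_sub_cancel_left] at key
      refine key.trans ?_
      gcongr
      exact le_max_left _ _
    · intro x hx
      have e1 := (hball _ hx.2).1.hasFDerivAt
      have e2 := (hball _ hx.1).1.hasFDerivAt
      have e3 : HasFDerivAt (fun x => Ψ (x + h)) (fderiv ℝ Ψ (x + h)) x := by
        exact (hasFDerivAt_comp_add_right h).2 e1
      exact (e3.sub e2).hasFDerivWithinAt
    · intro x hx
      have := hK.norm_sub_le (hball _ hx.2).2.2 (hball _ hx.1).2.2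
      simpa using this

/-- the perturbed quadratic function -/
def Fper (σ : ℝ) (Ev Th : ℝ × ℝ × ℝ × ℝ → ℝ) (w X Y T : ℝ) : ℝ :=
  (X ^ 2 + T ^ 2) / 2 - X + σ * w * (Y ^ 2 / 2 - Y) + w ^ 2 * (Ev (w, X, Y, T) + w * Th (w, X, Y, T))

set_option maxHeartbeats 4000000 in
lemma exists_min (σ : ℝ) (hσ : 0 < σ) (Ev Th : ℝ × ℝ × ℝ × ℝ → ℝ)
    (hE : ContDiffAt ℝ 2 Ev (0, 1, 1, 0)) (hT : ContDiffAt ℝ 2 Th (0, 1, 1, 0))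
    (hEe : ∀ w X Y T, Ev (w, X, Y, -T) = Ev (w, X, Y, T))
    (hTe : ∀ X Y T, Th (0, X, Y, -T) = Th (0, X, Y, T)) :
    ∃ C > 0, ∃ w₀ > 0, ∀ w, 0 < w → w < w₀ → ∃ X Y T : ℝ,
      (X - 1) ^ 2 ≤ C * w ∧ (Y - 1) ^ 2 ≤ C * w ∧ |T| ≤ C * w ^ 4 ∧
      ∀ᶠ z : ℝ × ℝ × ℝ in 𝓝 (X, Y, T), z ≠ (X, Y, T) →
        Fper σ Ev Th w X Y T < Fper σ Ev Th w z.1 z.2.1 z.2.2 := by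
  set Ψ : ℝ × ℝ × ℝ × ℝ → ℝ := fun z => Ev z + z.1 * Th z with hΨdef
  have hΨ : ContDiffAt ℝ 2 Ψ (0, 1, 1, 0) := hE.add (contDiffAt_fst.mul hT)
  obtain ⟨C, hC, r₁, hr₁, hcont, hbd, hmix⟩ := mixed_diff Ψ _ hΨ
  obtain ⟨C', hC', r₂, hr₂, -, -, hmix'⟩ := mixed_diff Th _ hT
  set r := min r₁ r₂ with hr
  have hrpos : 0 < r := lt_min hr₁ hr₂
  set η := r / 2 with hη
  have hηpos : 0 < η := by positivity
  have mem : ∀ w X Y T, |w| ≤ η → |X - 1| ≤ η → |Y - 1| ≤ η → |T| ≤ η →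
      (w, X, Y, T) ∈ Metric.ball ((0 : ℝ), (1 : ℝ), (1 : ℝ), (0 : ℝ)) r₁ ∧
      (w, X, Y, T) ∈ Metric.ball ((0 : ℝ), (1 : ℝ), (1 : ℝ), (0 : ℝ)) r₂ := by
    intro w X Y T hw hX hY hT
    have : dist (w, X, Y, T) ((0 : ℝ), (1 : ℝ), (1 : ℝ), (0 : ℝ)) ≤ η := by
      simp only [Prod.dist_eq, Real.dist_eq, sub_zero]
      exact max_le hw (max_le hX (max_le hY hT))
    have h3 : η < r := by rw [hη]; linarith
    exact ⟨Metric.mem_ball.2 (lt_of_le_of_lt this (h3.trans_le (min_le_left _ _))),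
      Metric.mem_ball.2 (lt_of_le_of_lt this (h3.trans_le (min_le_right _ _)))⟩
  obtain ⟨w₀, hw₀, hw1, hw2, hw3, hw4, hw5, hw6, hw7⟩ : ∃ w₀ : ℝ, 0 < w₀ ∧ w₀ ≤ η ∧ w₀ ≤ 1 ∧ 
      4 * C * w₀ < η ^ 2 ∧ 4 * C * w₀ < η ^ 2 * σ ∧ 2 * C * w₀ < 1 ∧ C * w₀ < σ ∧ w₀ ≤ 1 := by
    have : ∀ᶠ w in 𝓝[>] (0 : ℝ), (w ≤ η ∧ w ≤ 1 ∧ 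
      4 * C * w < η ^ 2 ∧ 4 * C * w < η ^ 2 * σ ∧ 2 * C * w < 1 ∧ C * w < σ ∧ w ≤ 1) := by
      have hc : ∀ a b : ℝ, 0 < b → ∀ᶠ w in 𝓝[>] (0 : ℝ), a * w < b := by
        intro a b hb
        have : ContinuousAt (fun w : ℝ => a * w) 0 := by fun_prop
        exact (this.eventually_lt continuousAt_const (by simpa using hb)).filter_mono nhdsWithin_le_nhds
      filter_upwards [hc 1 η hηpos, hc 1 1 one_pos, hc (4 * C) (η ^ 2) (by positivity),
        hc (4 * C) (η ^ 2 * σ) (by positivity), hc (2 * C) 1 one_pos, hc C σ hσ] with w a b c d e f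
      refine ⟨by linarith, by linarith, c, d, e, f, by linarith⟩
    obtain ⟨w, hw, hw'⟩ := (this.and self_mem_nhdsWithin).exists
    exact ⟨w, hw', hw⟩
  refine ⟨max (max (4 * C) (4 * C / σ)) (4 * C'), lt_of_lt_of_le (by positivity) (le_max_right _ _), w₀, hw₀, ?_⟩
  intro w hw hww
  have hwη : |w| ≤ η := by rw [abs_of_pos hw]; linarith
  have g3 : 4 * C * w < η ^ 2 := lt_trans (by gcongr) hw3
  have g4 : 4 * C * w < η ^ 2 * σ := lt_trans (by gcongr) hw4
  have g5 : 2 * C * w < 1 := lt_trans (by gcongr) hw5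
  have g6 : C * w < σ := lt_trans (by gcongr) hw6
  have g7 : w ≤ 1 := by linarith
  set f : ℝ × ℝ × ℝ → ℝ := fun z => Fper σ Ev Th w z.1 z.2.1 z.2.2 with hf
  have hfe : ∀ X Y T, f (X, Y, T) = (X ^ 2 + T ^ 2) / 2 - X + σ * w * (Y ^ 2 / 2 - Y) + w ^ 2 * Ψ (w, X, Y, T) := by
    intro X Y T; rfl
  set K : Set (ℝ × ℝ × ℝ) := Metric.closedBall (1, 1, 0) η with hKdef
  have memK : ∀ X Y T, (X, Y, T) ∈ K ↔ (|X - 1| ≤ η ∧ |Y - 1| ≤ η ∧ |T| ≤ η) := by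
    intro X Y T
    simp [hKdef, Metric.mem_closedBall, Prod.dist_eq, Real.dist_eq]
  have hKc : IsCompact K := isCompact_closedBall _ _
  have hfc : ContinuousOn f K := by
    have : ContinuousOn (fun z : ℝ × ℝ × ℝ => Ψ (w, z)) K := by
      refine hcont.comp (by fun_prop) ?_
      rintro ⟨X, Y, T⟩ hz
      obtain ⟨a, b, c⟩ := (memK _ _ _).1 hz
      exact (mem w X Y T hwη a b c).1
    have e : f = fun z => (z.1 ^ 2 + z.2.2 ^ 2) / 2 - z.1 + σ * w * (z.2.1 ^ 2 / 2 - z.2.1) + w ^ 2 * Ψ (w, z) := rfl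
    rw [e]
    exact ContinuousOn.add (by fun_prop) (continuousOn_const.mul this)
  have hne : K.Nonempty := ⟨(1, 1, 0), Metric.mem_closedBall_self hηpos.le⟩
  obtain ⟨⟨X, Y, T⟩, hzK, hmin⟩ := hKc.exists_isMinOn hne hfc
  obtain ⟨hX, hY, hT'⟩ := (memK _ _ _).1 hzK
  have hmin' : ∀ X' Y' T', |X' - 1| ≤ η → |Y' - 1| ≤ η → |T'| ≤ η → f (X, Y, T) ≤ f (X', Y', T') :=
    fun X' Y' T' a b c => hmin ((memK _ _ _).2 ⟨a, b, c⟩)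
  have hq : (X - 1) ^ 2 + T ^ 2 + σ * w * (Y - 1) ^ 2 ≤ 4 * C * w ^ 2 := by
    have h0 := hmin' 1 1 0 (by simp [hηpos.le]) (by simp [hηpos.le]) (by simp [hηpos.le])
    rw [hfe, hfe] at h0
    have b1 := abs_le.1 (hbd _ (mem w X Y T hwη hX hY hT').1)
    have b2 := abs_le.1 (hbd _ (mem w 1 1 0 hwη (by simp [hηpos.le]) (by simp [hηpos.le]) (by simp [hηpos.le])).1)
    have : w ^ 2 * (Ψ (w, 1, 1, 0) - Ψ (w, X, Y, T)) ≤ w ^ 2 * (2 * C) := by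
      gcongr; linarith
    linarith
  have hww2 : w ^ 2 ≤ w := by nlinarith only [hw, g7]
  have bX : (X - 1) ^ 2 ≤ 4 * C * w ^ 2 := by
    have : 0 ≤ σ * w * (Y - 1) ^ 2 := by positivity
    linarith [sq_nonneg T]
  have bX' : (X - 1) ^ 2 ≤ 4 * C * w := bX.trans (by gcongr)
  have bT : T ^ 2 ≤ 4 * C * w := by
    have : 0 ≤ σ * w * (Y - 1) ^ 2 := by positivity
    have h4 : 4 * C * w ^ 2 ≤ 4 * C * w := by gcongr
    linarith [sq_nonneg (X - 1)]
  have bY : σ * (Y - 1) ^ 2 ≤ 4 * C * w := by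
    have : w * (σ * (Y - 1) ^ 2) ≤ w * (4 * C * w) := by linarith [sq_nonneg (X - 1), sq_nonneg T, hq]
    exact le_of_mul_le_mul_left this hw
  have iX : |X - 1| < η := abs_lt_of_sq_lt_sq (by linarith) hηpos.le
  have iT : |T| < η := abs_lt_of_sq_lt_sq (by linarith) hηpos.le
  have iY : |Y - 1| < η := by
    refine abs_lt_of_sq_lt_sq ?_ hηpos.le
    have : σ * (Y - 1) ^ 2 < σ * η ^ 2 := by linarith
    exact lt_of_mul_lt_mul_left this hσ.le
  refine ⟨X, Y, T, ?_, ?_, ?_, ?_⟩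
  · refine bX'.trans ?_
    gcongr
    exact (le_max_left _ _).trans (le_max_left _ _)
  · have : (Y - 1) ^ 2 ≤ 4 * C / σ * w := by
      rw [div_mul_eq_mul_div, le_div_iff₀ hσ]; linarith
    refine this.trans ?_
    gcongr
    exact (le_max_right _ _).trans (le_max_left _ _)
  · -- the T estimate
    have hTn : |-T| ≤ η := by rw [abs_neg]; exact hT'
    have h0 := hmin' X Y 0 hX hY (by simp [hηpos.le])
    rw [hfe, hfe] at h0
    have z0 := mem w X Y 0 hwη hX hY (by simp [hηpos.le])
    have zp := mem w X Y T hwη hX hY hT'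
    have zm := mem w X Y (-T) hwη hX hY hTn
    have yp := mem 0 X Y T (by simp [hηpos.le]) hX hY hT'
    have ym := mem 0 X Y (-T) (by simp [hηpos.le]) hX hY hTn
    have m1 := hmix (w, X, Y, -T) (0, 0, 0, T) (0, 0, 0, T) zm.1 (by simpa using z0.1) (by simpa using z0.1)
      (by simpa using zp.1)
    have m2 := hmix' (0, X, Y, -T) (w, 0, 0, 0) (0, 0, 0, 2 * T) ym.2 (by simpa using zm.2)
      (by convert yp.2 using 1; simp; ring) (by convert zp.2 using 1; simp; ring)
    have n1 : ‖((0 : ℝ), (0 : ℝ), (0 : ℝ), T)‖ = |T| := by simp [Prod.norm_def]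
    have n2 : ‖(w, (0 : ℝ), (0 : ℝ), (0 : ℝ))‖ = w := by simp [Prod.norm_def, abs_of_pos hw, hw.le]
    have n3 : ‖((0 : ℝ), (0 : ℝ), (0 : ℝ), 2 * T)‖ = 2 * |T| := by simp [Prod.norm_def]
    rw [n1] at m1
    rw [n2, n3] at m2
    simp only [Prod.mk_add_mk, add_zero, zero_add, neg_add_cancel] at m1 m2
    rw [show -T + 2 * T = T by ring, hTe] at m2
    have m1' := (abs_le.1 m1).1
    have m2' := (abs_le.1 m2).1
    have odd : Ψ (w, X, Y, -T) - Ψ (w, X, Y, T) = - w * (Th (w, X, Y, T) - Th (w, X, Y, -T)) := by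
      simp only [hΨdef, hEe]; ring
    have hTT : |T| * |T| = T ^ 2 := by rw [← sq, sq_abs]
    have a1 : Ψ (w, X, Y, 0) - Ψ (w, X, Y, T) ≤ (C * T ^ 2 + w * (C' * w * (2 * |T|))) / 2 := by
      have o2 := mul_le_mul_of_nonneg_left m2' hw.le
      rw [mul_assoc, hTT] at m1'
      linarith only [o2, m1', odd]
    have a2 : T ^ 2 ≤ w ^ 2 * (C * T ^ 2 + w * (C' * w * (2 * |T|))) := by
      have := mul_le_mul_of_nonneg_left a1 (sq_nonneg w)
      linarith
    have a3 : w ^ 2 * C * T ^ 2 ≤ T ^ 2 / 2 := by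
      have : w ^ 2 * C ≤ 1 / 2 := by nlinarith only [g5, hww2, hC, hw]
      nlinarith only [sq_nonneg T, this]
    have a4 : |T| * |T| ≤ |T| * (4 * C' * w ^ 4) := by rw [hTT]; linarith only [a2, a3]
    have a5 : |T| ≤ 4 * C' * w ^ 4 := by
      rcases (abs_nonneg T).eq_or_lt with h | h
      · rw [← h]; positivity
      · exact le_of_mul_le_mul_left a4 h
    refine a5.trans ?_
    gcongr
    exact le_max_right _ _
  · have hnb : Metric.ball ((1 : ℝ), (1 : ℝ), (0 : ℝ)) η ∈ 𝓝 (X, Y, T) := by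
      apply Metric.isOpen_ball.mem_nhds
      simp [Metric.mem_ball, Prod.dist_eq, Real.dist_eq, iX, iY, iT]
    filter_upwards [hnb] with z hz hzne
    obtain ⟨X', Y', T'⟩ := z
    obtain ⟨hX2, hY2, hT2⟩ := (memK _ _ _).1 (Metric.ball_subset_closedBall hz)
    have hle := hmin' X' Y' T' hX2 hY2 hT2
    refine lt_of_le_of_ne hle ?_
    intro heq
    change f (X, Y, T) = f (X', Y', T') at heq
    apply hzne
    have cX : |(X + X') / 2 - 1| ≤ η := by
      rw [abs_le] at *; constructor <;> linarith
    have cY : |(Y + Y') / 2 - 1| ≤ η := by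
      rw [abs_le] at *; constructor <;> linarith
    have cT : |(T + T') / 2| ≤ η := by
      rw [abs_le] at *; constructor <;> linarith
    have h0 := hmin' _ _ _ cX cY cT
    have z0 := mem w _ _ _ hwη cX cY cT
    have zp := mem w X' Y' T' hwη hX2 hY2 hT2
    have zm := mem w X Y T hwη hX hY hT'
    have e1 : (w, X, Y, T) + (0, (X' - X) / 2, (Y' - Y) / 2, (T' - T) / 2) =
      (w, (X + X') / 2, (Y + Y') / 2, (T + T') / 2) := by
      simp only [Prod.mk_add_mk, Prod.mk.injEq]; refine ⟨by ring, by ring, by ring, by ring⟩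
    have e2 : (w, (X + X') / 2, (Y + Y') / 2, (T + T') / 2) + (0, (X' - X) / 2, (Y' - Y) / 2, (T' - T) / 2) =
      (w, X', Y', T') := by
      simp only [Prod.mk_add_mk, Prod.mk.injEq]; refine ⟨by ring, by ring, by ring, by ring⟩
    have m1 := hmix (w, X, Y, T) (0, (X' - X) / 2, (Y' - Y) / 2, (T' - T) / 2)
      (0, (X' - X) / 2, (Y' - Y) / 2, (T' - T) / 2) zm.1 (e1 ▸ z0.1) (e1 ▸ z0.1) (by rw [e1, e2]; exact zp.1)
    rw [e1, e2] at m1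
    have m1' := (abs_le.1 m1).1
    set N := ‖((0 : ℝ), (X' - X) / 2, (Y' - Y) / 2, (T' - T) / 2)‖ with hN
    have hNN : N * N ≤ ((X' - X) ^ 2 + (Y' - Y) ^ 2 + (T' - T) ^ 2) / 4 := by
      have hN0 : 0 ≤ N := norm_nonneg _
      have : N ≤ Real.sqrt (((X' - X) ^ 2 + (Y' - Y) ^ 2 + (T' - T) ^ 2) / 4) := by
        rw [hN]
        simp only [Prod.norm_def, Real.norm_eq_abs]
        have p1 := sq_nonneg (X' - X)
        have p2 := sq_nonneg (Y' - Y)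
        have p3 := sq_nonneg (T' - T)
        refine max_le (by rw [abs_zero]; exact Real.sqrt_nonneg _) (max_le ?_ (max_le ?_ ?_)) <;>
        · apply Real.abs_le_sqrt
          linarith only [p1, p2, p3]
      calc N * N ≤ _ := mul_self_le_mul_self hN0 this
        _ = _ := Real.mul_self_sqrt (by positivity)
    rw [hfe] at h0 heq
    rw [hfe] at h0 heq
    have q1 : C * w ^ 2 < 1 := by nlinarith only [g5, hww2, hC, hw]
    have q2 : C * w ^ 2 < σ * w := by nlinarith only [g6, hw]
    have q3 : w ^ 2 * (C * (N * N)) ≤ w ^ 2 * (C * (((X' - X) ^ 2 + (Y' - Y) ^ 2 + (T' - T) ^ 2) / 4)) := by gcongr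
    have q4 : w ^ 2 * (2 * Ψ (w, (X + X') / 2, (Y + Y') / 2, (T + T') / 2) - Ψ (w, X', Y', T') - Ψ (w, X, Y, T)) ≤ w ^ 2 * (C * (N * N)) := by
      gcongr; linarith
    have q5 : (1 - C * w ^ 2) * (X' - X) ^ 2 + (1 - C * w ^ 2) * (T' - T) ^ 2 + (σ * w - C * w ^ 2) * (Y' - Y) ^ 2 ≤ 0 := by
      linarith
    have p1 : 0 ≤ (1 - C * w ^ 2) * (X' - X) ^ 2 := mul_nonneg (by linarith) (sq_nonneg _)
    have p2 : 0 ≤ (1 - C * w ^ 2) * (T' - T) ^ 2 := mul_nonneg (by linarith) (sq_nonneg _)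
    have p3 : 0 ≤ (σ * w - C * w ^ 2) * (Y' - Y) ^ 2 := mul_nonneg (by linarith) (sq_nonneg _)
    have o1 : (1 - C * w ^ 2) * (X' - X) ^ 2 = 0 := by linarith
    have o2 : (1 - C * w ^ 2) * (T' - T) ^ 2 = 0 := by linarith
    have o3 : (σ * w - C * w ^ 2) * (Y' - Y) ^ 2 = 0 := by linarith
    have s1 : X' - X = 0 := by
      rcases mul_eq_zero.1 o1 with h | h
      · linarith
      · exact pow_eq_zero_iff (two_ne_zero) |>.1 h
    have s2 : T' - T = 0 := by
      rcases mul_eq_zero.1 o2 with h | h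
      · linarith
      · exact pow_eq_zero_iff (two_ne_zero) |>.1 h
    have s3 : Y' - Y = 0 := by
      rcases mul_eq_zero.1 o3 with h | h
      · linarith
      · exact pow_eq_zero_iff (two_ne_zero) |>.1 h
    simp only [Prod.mk.injEq]
    exact ⟨by linarith, by linarith, by linarith⟩

/-- remainder of the expansion of `1/√(1+ξ)` -/
def kf (ξ : ℝ) : ℝ :=
  (Real.sqrt (1 + ξ) + 2) / (2 * Real.sqrt (1 + ξ) * (Real.sqrt (1 + ξ) + 1) ^ 2)

lemma inv_sqrt_expand (ξ : ℝ) (h : 0 < 1 + ξ) :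
    1 / Real.sqrt (1 + ξ) = 1 - ξ / 2 + ξ ^ 2 * kf ξ := by
  unfold kf
  have hs : 0 < Real.sqrt (1 + ξ) := Real.sqrt_pos.2 h
  have hq := Real.sq_sqrt h.le
  set s := Real.sqrt (1 + ξ)
  have : ξ = s ^ 2 - 1 := by linarith
  rw [this]
  field_simp
  ring

lemma kf_contDiffAt (ξ : ℝ) (h : 0 < 1 + ξ) : ContDiffAt ℝ 2 kf ξ := by
  unfold kf
  have hs : 0 < Real.sqrt (1 + ξ) := Real.sqrt_pos.2 h
  have h1 : ContDiffAt ℝ 2 (fun ξ : ℝ => Real.sqrt (1 + ξ)) ξ :=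
    ContDiffAt.sqrt (by fun_prop) h.ne'
  exact (h1.add contDiffAt_const).div ((contDiffAt_const.mul h1).mul ((h1.add contDiffAt_const).pow 2))
    (by positivity)

/-- part of the remainder coming from the potential -/
def ThF (m₁ m₂ m₃ : ℝ) (v : ℝ × ℝ × ℝ × ℝ) : ℝ :=
  1 / (m₂ * m₃) * (v.2.2.1 ^ 3 / v.2.1 ^ 2) *
    (m₁ * m₃ * (m₂ / (m₂ + m₃)) ^ 2 / 2 + m₁ * m₂ * (m₃ / (m₂ + m₃)) ^ 2 / 2
      - m₁ * m₃ * ((m₂ / (m₂ + m₃)) ^ 2 * (v.1 * v.2.2.1 / v.2.1)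
          + 2 * (m₂ / (m₂ + m₃)) * (v.2.2.2 / Real.sqrt (v.2.1 ^ 2 + v.2.2.2 ^ 2))) ^ 2
        * kf ((m₂ / (m₂ + m₃)) ^ 2 * (v.1 * v.2.2.1 / v.2.1) ^ 2
          + 2 * (m₂ / (m₂ + m₃)) * (v.1 * v.2.2.1 / v.2.1)
            * (v.2.2.2 / Real.sqrt (v.2.1 ^ 2 + v.2.2.2 ^ 2)))
      - m₁ * m₂ * ((m₃ / (m₂ + m₃)) ^ 2 * (v.1 * v.2.2.1 / v.2.1)
          - 2 * (m₃ / (m₂ + m₃)) * (v.2.2.2 / Real.sqrt (v.2.1 ^ 2 + v.2.2.2 ^ 2))) ^ 2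
        * kf ((m₃ / (m₂ + m₃)) ^ 2 * (v.1 * v.2.2.1 / v.2.1) ^ 2
          - 2 * (m₃ / (m₂ + m₃)) * (v.1 * v.2.2.1 / v.2.1)
            * (v.2.2.2 / Real.sqrt (v.2.1 ^ 2 + v.2.2.2 ^ 2))))

def Rroot (b t2 : ℝ) : ℝ := Real.sqrt ((1 - b) ^ 2 + 4 * b * t2)

/-- part of the remainder coming from the kinetic term -/
def EvF (χ σ : ℝ) (v : ℝ × ℝ × ℝ × ℝ) : ℝ :=
  χ * v.2.2.1 ^ 2 * v.2.2.2 ^ 2 / (2 * v.2.1 ^ 2)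
    - (σ - v.1 * χ) * v.2.2.1 ^ 2 * (2 * χ * v.1 * v.2.2.1 ^ 2 / v.2.1 ^ 2) *
      ((v.2.2.2 ^ 2 / (v.2.1 ^ 2 + v.2.2.2 ^ 2)) /
        ((1 - χ * (v.1 * v.2.2.1 / v.2.1) ^ 2 +
            Rroot (χ * (v.1 * v.2.2.1 / v.2.1) ^ 2) (v.2.2.2 ^ 2 / (v.2.1 ^ 2 + v.2.2.2 ^ 2))) *
         (1 + χ * (v.1 * v.2.2.1 / v.2.1) ^ 2 +
            Rroot (χ * (v.1 * v.2.2.1 / v.2.1) ^ 2) (v.2.2.2 ^ 2 / (v.2.1 ^ 2 + v.2.2.2 ^ 2)))))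

lemma ThF_contDiffAt (m₁ m₂ m₃ : ℝ) : ContDiffAt ℝ 2 (ThF m₁ m₂ m₃) (0, 1, 1, 0) := by
  have hX : ContDiffAt ℝ 2 (fun v : ℝ × ℝ × ℝ × ℝ => v.2.1) (0, 1, 1, 0) := by fun_prop
  have hz : ContDiffAt ℝ 2 (fun v : ℝ × ℝ × ℝ × ℝ => v.1 * v.2.2.1 / v.2.1) (0, 1, 1, 0) :=
    ContDiffAt.div (by fun_prop) hX (by norm_num)
  have ht : ContDiffAt ℝ 2 (fun v : ℝ × ℝ × ℝ × ℝ => v.2.2.2 / Real.sqrt (v.2.1 ^ 2 + v.2.2.2 ^ 2)) (0, 1, 1, 0) :=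
    ContDiffAt.div (by fun_prop) (ContDiffAt.sqrt (by fun_prop) (by norm_num)) (by norm_num)
  have hk1 := ContDiffAt.comp (𝕜 := ℝ) ((0, 1, 1, 0) : ℝ × ℝ × ℝ × ℝ) (g := kf) (f := fun v : ℝ × ℝ × ℝ × ℝ => (m₂ / (m₂ + m₃)) ^ 2 * (v.1 * v.2.2.1 / v.2.1) ^ 2
          + 2 * (m₂ / (m₂ + m₃)) * (v.1 * v.2.2.1 / v.2.1)
            * (v.2.2.2 / Real.sqrt (v.2.1 ^ 2 + v.2.2.2 ^ 2))) (kf_contDiffAt _ (by norm_num))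
     ((contDiffAt_const.mul (hz.pow 2)).add ((contDiffAt_const.mul hz).mul ht))
  have hk2 := ContDiffAt.comp (𝕜 := ℝ) ((0, 1, 1, 0) : ℝ × ℝ × ℝ × ℝ) (g := kf) (f := fun v : ℝ × ℝ × ℝ × ℝ => (m₃ / (m₂ + m₃)) ^ 2 * (v.1 * v.2.2.1 / v.2.1) ^ 2
          - 2 * (m₃ / (m₂ + m₃)) * (v.1 * v.2.2.1 / v.2.1)
            * (v.2.2.2 / Real.sqrt (v.2.1 ^ 2 + v.2.2.2 ^ 2))) (kf_contDiffAt _ (by norm_num))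
     ((contDiffAt_const.mul (hz.pow 2)).sub ((contDiffAt_const.mul hz).mul ht))
  have hY : ContDiffAt ℝ 2 (fun v : ℝ × ℝ × ℝ × ℝ => v.2.2.1 ^ 3 / v.2.1 ^ 2) (0, 1, 1, 0) :=
    ContDiffAt.div (by fun_prop) (hX.pow 2) (by norm_num)
  refine (contDiffAt_const.mul hY).mul ((contDiffAt_const.sub ?_).sub ?_)
  · exact (contDiffAt_const.mul (((contDiffAt_const.mul hz).add (contDiffAt_const.mul ht)).pow 2)).mul hk1
  · exact (contDiffAt_const.mul (((contDiffAt_const.mul hz).sub (contDiffAt_const.mul ht)).pow 2)).mul hk2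

lemma EvF_contDiffAt (χ σ : ℝ) : ContDiffAt ℝ 2 (EvF χ σ) (0, 1, 1, 0) := by
  have hX : ContDiffAt ℝ 2 (fun v : ℝ × ℝ × ℝ × ℝ => v.2.1) (0, 1, 1, 0) := by fun_prop
  have hz : ContDiffAt ℝ 2 (fun v : ℝ × ℝ × ℝ × ℝ => v.1 * v.2.2.1 / v.2.1) (0, 1, 1, 0) :=
    ContDiffAt.div (by fun_prop) hX (by norm_num)
  have ht : ContDiffAt ℝ 2 (fun v : ℝ × ℝ × ℝ × ℝ => v.2.2.2 ^ 2 / (v.2.1 ^ 2 + v.2.2.2 ^ 2)) (0, 1, 1, 0) :=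
    ContDiffAt.div (by fun_prop) (by fun_prop) (by norm_num)
  have hb : ContDiffAt ℝ 2 (fun v : ℝ × ℝ × ℝ × ℝ => χ * (v.1 * v.2.2.1 / v.2.1) ^ 2) (0, 1, 1, 0) :=
    contDiffAt_const.mul (hz.pow 2)
  have hR : ContDiffAt ℝ 2 (fun v : ℝ × ℝ × ℝ × ℝ => Rroot (χ * (v.1 * v.2.2.1 / v.2.1) ^ 2) (v.2.2.2 ^ 2 / (v.2.1 ^ 2 + v.2.2.2 ^ 2))) (0, 1, 1, 0) := by
    unfold Rroot
    exact ContDiffAt.sqrt (((contDiffAt_const.sub hb).pow 2).add ((contDiffAt_const.mul hb).mul ht)) (by norm_num)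
  refine ContDiffAt.sub (ContDiffAt.div (by fun_prop) (by fun_prop) (by norm_num)) ?_
  refine ContDiffAt.mul (ContDiffAt.mul (by fun_prop) (ContDiffAt.div (by fun_prop) (by fun_prop) (by norm_num))) ?_
  refine ht.div (((contDiffAt_const.sub hb).add hR).mul ((contDiffAt_const.add hb).add hR)) ?_
  norm_num [Rroot]

lemma EvF_even (χ σ w X Y T : ℝ) : EvF χ σ (w, X, Y, -T) = EvF χ σ (w, X, Y, T) := by
  simp [EvF]

lemma ThF_even (m₁ m₂ m₃ X Y T : ℝ) : ThF m₁ m₂ m₃ (0, X, Y, -T) = ThF m₁ m₂ m₃ (0, X, Y, T) := by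
  simp only [ThF, even_two, Even.neg_pow, zero_mul, zero_div, mul_zero, neg_div]
  ring

/-- kinetic identity -/
lemma kin_identity (ν₁ ν₂ m₁ m₂ m₃ μ₁ μ₂ ℓ w r ρ D s : ℝ) (hν₁ : 0 < ν₁) (hν₂ : 0 < ν₂)
    (hm₁ : 0 < m₁) (hm₂ : 0 < m₂) (hm₃ : 0 < m₃) (hℓ : 0 < ℓ) (hw : 0 < w) (hr : 0 < r) (hρ : 0 < ρ) (hD : 0 < D)
    (hDs : D ^ 2 + s ^ 2 = r ^ 2 * ρ ^ 2)
    (h1 : μ₁ ^ 2 = ν₂ * ℓ * (m₁ * (m₂ + m₃))) (h2 : μ₂ ^ 2 = w * ν₁ * ℓ * (m₂ * m₃))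
    (hAB : r ^ 2 / ν₂ < ρ ^ 2 / ν₁) :
    ((μ₁ ^ 2 + μ₂ ^ 2) * (ρ ^ 2 / ν₁ + r ^ 2 / ν₂)
      - (μ₁ ^ 2 - μ₂ ^ 2) * Real.sqrt ((ρ ^ 2 / ν₁ - r ^ 2 / ν₂) ^ 2 + 4 * s ^ 2 / (ν₁ * ν₂))) / (4 * D ^ 2)
    = m₂ * m₃ / (ℓ * w) * (((ℓ * w / r) ^ 2 + (ℓ * w / r * (s / D)) ^ 2) / 2
      + m₁ * (m₂ + m₃) / (m₂ * m₃) * w * ((ℓ / ρ) ^ 2 / 2)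
      + w ^ 2 * EvF (ν₁ / ν₂) (m₁ * (m₂ + m₃) / (m₂ * m₃)) (w, ℓ * w / r, ℓ / ρ, ℓ * w / r * (s / D))) := by
  have hb : w * (ℓ / ρ) / (ℓ * w / r) = r / ρ := by field_simp
  have ht : (ℓ * w / r * (s / D)) ^ 2 / ((ℓ * w / r) ^ 2 + (ℓ * w / r * (s / D)) ^ 2) = s ^ 2 / (r ^ 2 * ρ ^ 2) := by
    rw [← hDs]; field_simp
  unfold EvF
  simp only [hb, ht]
  set b := ν₁ / ν₂ * (r / ρ) ^ 2 with hbdef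
  set t2 := s ^ 2 / (r ^ 2 * ρ ^ 2) with ht2
  have hb0 : 0 < b := by positivity
  have ht20 : 0 ≤ t2 := by positivity
  have hb1 : b < 1 := by
    rw [div_lt_div_iff₀ hν₂ hν₁] at hAB
    rw [hbdef, div_pow, div_mul_div_comm, div_lt_one (by positivity)]; linarith
  have hR : Real.sqrt ((ρ ^ 2 / ν₁ - r ^ 2 / ν₂) ^ 2 + 4 * s ^ 2 / (ν₁ * ν₂)) = ρ ^ 2 / ν₁ * Rroot b t2 := by
    unfold Rroot
    rw [← Real.sqrt_sq (show 0 ≤ ρ ^ 2 / ν₁ by positivity), ← Real.sqrt_mul (sq_nonneg _),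
      Real.sqrt_sq (show 0 ≤ ρ ^ 2 / ν₁ by positivity)]
    congr 1
    rw [hbdef, ht2]; field_simp
  rw [hR]
  have hRsq : Rroot b t2 ^ 2 = (1 - b) ^ 2 + 4 * b * t2 := Real.sq_sqrt (by positivity)
  have hR0 : 0 ≤ Rroot b t2 := Real.sqrt_nonneg _
  set R := Rroot b t2
  have hP : 0 < 1 + b + R := by linarith
  have hM : 0 < 1 - b + R := by linarith
  set J := t2 / ((1 - b + R) * (1 + b + R)) with hJ
  have e1 : 1 / (1 + b + R) = 1 / 2 - 2 * b * J := by
    rw [hJ]; field_simp; linear_combination -hRsq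
  have e2 : R = 1 + b - 4 * b * (1 - t2) * (1 / 2 - 2 * b * J) := by
    rw [← e1]; field_simp; linear_combination hRsq
  have ht2' : 1 - t2 = D ^ 2 / (r ^ 2 * ρ ^ 2) := by
    rw [ht2]; field_simp; linarith
  have hT : (ℓ * w / r) ^ 2 + (ℓ * w / r * (s / D)) ^ 2 = (ℓ * w * ρ / D) ^ 2 := by
    field_simp; linear_combination hDs
  have hT2 : (ℓ * w / r * (s / D)) ^ 2 = (ℓ * w * ρ / D) ^ 2 - (ℓ * w / r) ^ 2 := by linarith
  rw [hT, hT2, e2, ht2', h1, h2]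
  clear_value J
  rw [hbdef]
  clear hJ e1 e2 hRsq ht2' hT hT2 hR hDs
  field_simp
  ring

lemma pot_identity (m₁ m₂ m₃ ℓ w r ρ D s : ℝ)
    (hm₁ : 0 < m₁) (hm₂ : 0 < m₂) (hm₃ : 0 < m₃) (hℓ : 0 < ℓ) (hw : 0 < w) (hr : 0 < r) (hρ : 0 < ρ) (hD : 0 < D)
    (hDs : D ^ 2 + s ^ 2 = r ^ 2 * ρ ^ 2) :
    -(m₂ * m₃ / r) - m₃ * m₁ / Real.sqrt ((m₂ / (m₂ + m₃)) ^ 2 * r ^ 2 + ρ ^ 2 + 2 * (m₂ / (m₂ + m₃)) * s)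
      - m₁ * m₂ / Real.sqrt ((m₃ / (m₂ + m₃)) ^ 2 * r ^ 2 + ρ ^ 2 - 2 * (m₃ / (m₂ + m₃)) * s)
    = m₂ * m₃ / (ℓ * w) * (- (ℓ * w / r) - m₁ * (m₂ + m₃) / (m₂ * m₃) * w * (ℓ / ρ)
      + w ^ 3 * ThF m₁ m₂ m₃ (w, ℓ * w / r, ℓ / ρ, ℓ * w / r * (s / D))) := by
  have hb : w * (ℓ / ρ) / (ℓ * w / r) = r / ρ := by field_simp
  have ht : ℓ * w / r * (s / D) / Real.sqrt ((ℓ * w / r) ^ 2 + (ℓ * w / r * (s / D)) ^ 2) = s / (r * ρ) := by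
    have : (ℓ * w / r) ^ 2 + (ℓ * w / r * (s / D)) ^ 2 = (ℓ * w * ρ / D) ^ 2 := by
      field_simp; linear_combination hDs
    rw [this, Real.sqrt_sq (by positivity)]; field_simp
  unfold ThF
  simp only [hb, ht]
  have key : ∀ a : ℝ, 1 / Real.sqrt (a ^ 2 * r ^ 2 + ρ ^ 2 + 2 * a * s) =
      1 / ρ * (1 - (a ^ 2 * (r / ρ) ^ 2 + 2 * a * (r / ρ) * (s / (r * ρ))) / 2 +
        (a ^ 2 * (r / ρ) ^ 2 + 2 * a * (r / ρ) * (s / (r * ρ))) ^ 2 * kf (a ^ 2 * (r / ρ) ^ 2 + 2 * a * (r / ρ) * (s / (r * ρ)))) := by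
    intro a
    have e : a ^ 2 * r ^ 2 + ρ ^ 2 + 2 * a * s = ρ ^ 2 * (1 + (a ^ 2 * (r / ρ) ^ 2 + 2 * a * (r / ρ) * (s / (r * ρ)))) := by
      field_simp
      ring
    have hpos : 0 < 1 + (a ^ 2 * (r / ρ) ^ 2 + 2 * a * (r / ρ) * (s / (r * ρ))) := by
      have : 1 + (a ^ 2 * (r / ρ) ^ 2 + 2 * a * (r / ρ) * (s / (r * ρ))) = (a * (r / ρ) + s / (r * ρ)) ^ 2 + (D / (r * ρ)) ^ 2 := by
        field_simp
        linear_combination - hDs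
      rw [this]; positivity
    rw [e, Real.sqrt_mul (sq_nonneg _), Real.sqrt_sq hρ.le, ← inv_sqrt_expand _ hpos, div_mul_div_comm, one_mul]
  have k2 := key (m₂ / (m₂ + m₃))
  have k3 := key (-(m₃ / (m₂ + m₃)))
  have c3 : (-(m₃ / (m₂ + m₃))) ^ 2 * r ^ 2 + ρ ^ 2 + 2 * (-(m₃ / (m₂ + m₃))) * s = (m₃ / (m₂ + m₃)) ^ 2 * r ^ 2 + ρ ^ 2 - 2 * (m₃ / (m₂ + m₃)) * s := by ring
  have d3 : (-(m₃ / (m₂ + m₃))) ^ 2 * (r / ρ) ^ 2 + 2 * (-(m₃ / (m₂ + m₃))) * (r / ρ) * (s / (r * ρ)) = (m₃ / (m₂ + m₃)) ^ 2 * (r / ρ) ^ 2 - 2 * (m₃ / (m₂ + m₃)) * (r / ρ) * (s / (r * ρ)) := by ring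
  rw [c3, d3] at k3
  rw [div_eq_mul_one_div (m₃ * m₁), div_eq_mul_one_div (m₁ * m₂), k2, k3]
  generalize kf ((m₂ / (m₂ + m₃)) ^ 2 * (r / ρ) ^ 2 + 2 * (m₂ / (m₂ + m₃)) * (r / ρ) * (s / (r * ρ))) = k₂
  generalize kf ((m₃ / (m₂ + m₃)) ^ 2 * (r / ρ) ^ 2 - 2 * (m₃ / (m₂ + m₃)) * (r / ρ) * (s / (r * ρ))) = k₃
  clear k2 k3 c3 d3 key
  field_simp
  ring

lemma mom_ineq (μ₁ μ₂ L P₁ P₄ : ℝ) (h2 : 0 < μ₂) (h12 : μ₂ < μ₁) (hP₁ : 0 ≤ P₁) (hP₄ : 0 ≤ P₄)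
    (hc : μ₁ ^ 2 * P₁ ≤ μ₂ ^ 2 * P₄) (hL : L ^ 2 ≤ (μ₁ - μ₂) ^ 2) :
    4 * μ₁ ^ 2 * P₁ + 4 * μ₂ ^ 2 * P₄ ≤
      (Real.sqrt ((μ₁ - μ₂) ^ 2 - L ^ 2) + Real.sqrt ((μ₁ + μ₂) ^ 2 - L ^ 2)) ^ 2 * P₁ +
      (Real.sqrt ((μ₁ - μ₂) ^ 2 - L ^ 2) - Real.sqrt ((μ₁ + μ₂) ^ 2 - L ^ 2)) ^ 2 * P₄ := by
  have hΔ : 0 < μ₁ - μ₂ := by linarith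
  have hΔS : (μ₁ - μ₂) ^ 2 ≤ (μ₁ + μ₂) ^ 2 := by nlinarith
  have d2 := Real.sq_sqrt (show 0 ≤ (μ₁ - μ₂) ^ 2 - L ^ 2 by linarith)
  have s2 := Real.sq_sqrt (show 0 ≤ (μ₁ + μ₂) ^ 2 - L ^ 2 by linarith)
  have d0 := Real.sqrt_nonneg ((μ₁ - μ₂) ^ 2 - L ^ 2)
  have s0 := Real.sqrt_nonneg ((μ₁ + μ₂) ^ 2 - L ^ 2)
  set d := Real.sqrt ((μ₁ - μ₂) ^ 2 - L ^ 2)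
  set s := Real.sqrt ((μ₁ + μ₂) ^ 2 - L ^ 2)
  set G := μ₁ ^ 2 - μ₂ ^ 2 with hG
  have hG0 : 0 < G := by rw [hG]; nlinarith
  have e : d * s * G ≤ G ^ 2 - L ^ 2 * (μ₁ ^ 2 + μ₂ ^ 2) := by
    apply abs_le_of_sq_le_sq' _ _ |>.2
    · have : (d * s * G) ^ 2 = d ^ 2 * s ^ 2 * G ^ 2 := by ring
      rw [this, d2, s2]
      have : (G ^ 2 - L ^ 2 * (μ₁ ^ 2 + μ₂ ^ 2)) ^ 2 - ((μ₁ - μ₂) ^ 2 - L ^ 2) * ((μ₁ + μ₂) ^ 2 - L ^ 2) * G ^ 2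
        = 4 * L ^ 4 * μ₁ ^ 2 * μ₂ ^ 2 := by rw [hG]; ring
      have : 0 ≤ 4 * L ^ 4 * μ₁ ^ 2 * μ₂ ^ 2 := by positivity
      linarith
    · have : L ^ 2 * (μ₁ ^ 2 + μ₂ ^ 2) ≤ (μ₁ - μ₂) ^ 2 * (μ₁ ^ 2 + μ₂ ^ 2) := by gcongr
      have : 0 ≤ (μ₁ - μ₂) ^ 2 * (2 * μ₁ * μ₂) := by
        have : 0 < μ₁ := by linarith
        positivity
      rw [hG]; nlinarith
  have hP : P₁ ≤ P₄ := by
    by_contra h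
    push Not at h
    have : μ₂ ^ 2 * P₄ ≤ μ₁ ^ 2 * P₄ := by
      have : μ₂ ^ 2 ≤ μ₁ ^ 2 := by linarith
      gcongr
    have h3 : 0 < μ₁ ^ 2 := by nlinarith
    nlinarith
  have e2 := mul_le_mul_of_nonneg_right e (sub_nonneg.2 hP)
  have fin : 0 ≤ G * ((d + s) ^ 2 * P₁ + (d - s) ^ 2 * P₄ - (4 * μ₁ ^ 2 * P₁ + 4 * μ₂ ^ 2 * P₄)) := by
    have : G * ((d + s) ^ 2 * P₁ + (d - s) ^ 2 * P₄ - (4 * μ₁ ^ 2 * P₁ + 4 * μ₂ ^ 2 * P₄)) =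
      2 * (((G ^ 2 - L ^ 2 * (μ₁ ^ 2 + μ₂ ^ 2)) * (P₄ - P₁)) - d * s * G * (P₄ - P₁))
        + 4 * L ^ 2 * (μ₂ ^ 2 * P₄ - μ₁ ^ 2 * P₁) := by
      have : (d + s) ^ 2 * P₁ + (d - s) ^ 2 * P₄ = (d ^ 2 + s ^ 2) * (P₁ + P₄) + 2 * (d * s) * (P₁ - P₄) := by ring
      rw [this, d2, s2, hG]; ring
    rw [this]
    have : 0 ≤ L ^ 2 * (μ₂ ^ 2 * P₄ - μ₁ ^ 2 * P₁) := mul_nonneg (sq_nonneg _) (by linarith)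
    linarith
  have := nonneg_of_mul_nonneg_right fin hG0
  linarith

/-- the effective potential -/
def W0 (ν₁ ν₂ μ₁ μ₂ m₁ m₂ m₃ a b c d : ℝ) : ℝ :=
  (μ₁ ^ 2 * (c ^ 2 / ν₁ + a ^ 2 / ν₂) + μ₂ ^ 2 * (d ^ 2 / ν₁ + b ^ 2 / ν₂)) / (2 * (a * d - b * c) ^ 2)
    + Vnewt m₁ m₂ m₃ ![a ^ 2 + b ^ 2, c ^ 2 + d ^ 2, a * c + b * d]

lemma Hred_ge (ν₁ ν₂ μ₁ μ₂ m₁ m₂ m₃ : ℝ) (q p : Fin 4 → ℝ) (hν₁ : 0 < ν₁) (hν₂ : 0 < ν₂)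
    (h2 : 0 < μ₂) (h12 : μ₂ < μ₁)
    (hc : μ₁ ^ 2 * (q 2 ^ 2 / ν₁ + q 0 ^ 2 / ν₂) ≤ μ₂ ^ 2 * (q 3 ^ 2 / ν₁ + q 1 ^ 2 / ν₂))
    (hL : (q 0 * p 1 - q 1 * p 0 + q 2 * p 3 - q 3 * p 2) ^ 2 ≤ (μ₁ - μ₂) ^ 2) :
    W0 ν₁ ν₂ μ₁ μ₂ m₁ m₂ m₃ (q 0) (q 1) (q 2) (q 3) +
      ((p 0 ^ 2 + p 1 ^ 2) / (2 * ν₁) + (p 2 ^ 2 + p 3 ^ 2) / (2 * ν₂)) ≤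
      Hred ν₁ ν₂ μ₁ μ₂ (Vnewt m₁ m₂ m₃) (q, p) := by
  have key := mom_ineq μ₁ μ₂ _ _ _ h2 h12 (by positivity) (by positivity) hc hL
  simp only [W0, Hred, fred]
  set L := q 0 * p 1 - q 1 * p 0 + q 2 * p 3 - q 3 * p 2
  set d := Real.sqrt ((μ₁ - μ₂) ^ 2 - L ^ 2)
  set s := Real.sqrt ((μ₁ + μ₂) ^ 2 - L ^ 2)
  set V := Vnewt m₁ m₂ m₃ ![q 0 ^ 2 + q 1 ^ 2, q 2 ^ 2 + q 3 ^ 2, q 0 * q 2 + q 1 * q 3]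
  set D := q 0 * q 3 - q 1 * q 2
  have := mul_le_mul_of_nonneg_left key (show 0 ≤ 1 / (8 * D ^ 2) by positivity)
  have e1 : (μ₁ ^ 2 * (q 2 ^ 2 / ν₁ + q 0 ^ 2 / ν₂) + μ₂ ^ 2 * (q 3 ^ 2 / ν₁ + q 1 ^ 2 / ν₂)) / (2 * D ^ 2)
    = 1 / (8 * D ^ 2) * (4 * μ₁ ^ 2 * (q 2 ^ 2 / ν₁ + q 0 ^ 2 / ν₂) + 4 * μ₂ ^ 2 * (q 3 ^ 2 / ν₁ + q 1 ^ 2 / ν₂)) := by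
    by_cases hD : D = 0
    · simp [hD]
    · field_simp; ring
  have e2 : 1 / (2 * ν₁) * (p 0 ^ 2 + p 1 ^ 2 + ((d + s) ^ 2 * q 2 ^ 2 + (d - s) ^ 2 * q 3 ^ 2) / (16 * (D / 2) ^ 2)) +
        1 / (2 * ν₂) * (p 2 ^ 2 + p 3 ^ 2 + ((d + s) ^ 2 * q 0 ^ 2 + (d - s) ^ 2 * q 1 ^ 2) / (16 * (D / 2) ^ 2)) =
      (p 0 ^ 2 + p 1 ^ 2) / (2 * ν₁) + (p 2 ^ 2 + p 3 ^ 2) / (2 * ν₂) + 1 / (8 * D ^ 2) *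
       ((d + s) ^ 2 * (q 2 ^ 2 / ν₁ + q 0 ^ 2 / ν₂) + (d - s) ^ 2 * (q 3 ^ 2 / ν₁ + q 1 ^ 2 / ν₂)) := by
    by_cases hD : D = 0
    · simp [hD]; field_simp
    · field_simp; ring
  rw [e1, e2]
  linarith

lemma Hred_zero (ν₁ ν₂ μ₁ μ₂ m₁ m₂ m₃ a b c d : ℝ) (hν₁ : 0 < ν₁) (hν₂ : 0 < ν₂)
    (h2 : 0 < μ₂) (h12 : μ₂ < μ₁) :
    Hred ν₁ ν₂ μ₁ μ₂ (Vnewt m₁ m₂ m₃) (![a, b, c, d], 0) = W0 ν₁ ν₂ μ₁ μ₂ m₁ m₂ m₃ a b c d := by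
  have h1 : Real.sqrt ((μ₁ - μ₂) ^ 2) = μ₁ - μ₂ := Real.sqrt_sq (by linarith)
  have h3 : Real.sqrt ((μ₁ + μ₂) ^ 2) = μ₁ + μ₂ := Real.sqrt_sq (by linarith)
  simp [W0, Hred, fred, h1, h3]
  by_cases hD : a * d - b * c = 0
  · simp [hD]
  · field_simp; ring

lemma W0_eq (ν₁ ν₂ m₁ m₂ m₃ μ₁ μ₂ ℓ w a b c d : ℝ) (hν₁ : 0 < ν₁) (hν₂ : 0 < ν₂)
    (hm₁ : 0 < m₁) (hm₂ : 0 < m₂) (hm₃ : 0 < m₃) (hℓ : 0 < ℓ) (hw : 0 < w) (hD : 0 < a * d - b * c)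
    (h1 : μ₁ ^ 2 = ν₂ * ℓ * (m₁ * (m₂ + m₃))) (h2 : μ₂ ^ 2 = w * ν₁ * ℓ * (m₂ * m₃))
    (hAB : (a ^ 2 + b ^ 2) / ν₂ < (c ^ 2 + d ^ 2) / ν₁) :
    W0 ν₁ ν₂ μ₁ μ₂ m₁ m₂ m₃ a b c d =
      m₂ * m₃ / (ℓ * w) * Fper (m₁ * (m₂ + m₃) / (m₂ * m₃)) (EvF (ν₁ / ν₂) (m₁ * (m₂ + m₃) / (m₂ * m₃)))
        (ThF m₁ m₂ m₃) w (ℓ * w / Real.sqrt (a ^ 2 + b ^ 2)) (ℓ / Real.sqrt (c ^ 2 + d ^ 2))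
        (ℓ * w / Real.sqrt (a ^ 2 + b ^ 2) * ((a * c + b * d) / (a * d - b * c)))
      + (μ₁ ^ 2 - μ₂ ^ 2) / (4 * (a * d - b * c) ^ 2) *
        (Real.sqrt ((d ^ 2 / ν₁ + b ^ 2 / ν₂ - c ^ 2 / ν₁ - a ^ 2 / ν₂) ^ 2 + (2 * (c * d / ν₁ + a * b / ν₂)) ^ 2)
          - (d ^ 2 / ν₁ + b ^ 2 / ν₂ - c ^ 2 / ν₁ - a ^ 2 / ν₂)) := by
  have hs1 : 0 < a ^ 2 + b ^ 2 := by
    by_contra h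
    have ha : a = 0 := by nlinarith [sq_nonneg a, sq_nonneg b]
    have hb : b = 0 := by nlinarith [sq_nonneg a, sq_nonneg b]
    simp [ha, hb] at hD
  have hs2 : 0 < c ^ 2 + d ^ 2 := by
    by_contra h
    have ha : c = 0 := by nlinarith [sq_nonneg c, sq_nonneg d]
    have hb : d = 0 := by nlinarith [sq_nonneg c, sq_nonneg d]
    simp [ha, hb] at hD
  have hr := Real.sqrt_pos.2 hs1
  have hρ := Real.sqrt_pos.2 hs2
  have hr2 := Real.sq_sqrt hs1.le
  have hρ2 := Real.sq_sqrt hs2.le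
  set r := Real.sqrt (a ^ 2 + b ^ 2) with hrdef
  set ρ := Real.sqrt (c ^ 2 + d ^ 2) with hρdef
  have hDs : (a * d - b * c) ^ 2 + (a * c + b * d) ^ 2 = r ^ 2 * ρ ^ 2 := by rw [hr2, hρ2]; ring
  have K := kin_identity ν₁ ν₂ m₁ m₂ m₃ μ₁ μ₂ ℓ w r ρ _ _ hν₁ hν₂ hm₁ hm₂ hm₃ hℓ hw hr hρ hD hDs h1 h2 (by rw [hr2, hρ2]; exact hAB)
  have P := pot_identity m₁ m₂ m₃ ℓ w r ρ _ _ hm₁ hm₂ hm₃ hℓ hw hr hρ hD hDs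
  have hR : (ρ ^ 2 / ν₁ - r ^ 2 / ν₂) ^ 2 + 4 * (a * c + b * d) ^ 2 / (ν₁ * ν₂) =
      (d ^ 2 / ν₁ + b ^ 2 / ν₂ - c ^ 2 / ν₁ - a ^ 2 / ν₂) ^ 2 + (2 * (c * d / ν₁ + a * b / ν₂)) ^ 2 := by
    rw [hr2, hρ2]; field_simp; ring
  rw [hR] at K
  set R := Real.sqrt ((d ^ 2 / ν₁ + b ^ 2 / ν₂ - c ^ 2 / ν₁ - a ^ 2 / ν₂) ^ 2 + (2 * (c * d / ν₁ + a * b / ν₂)) ^ 2)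
  have hV : Vnewt m₁ m₂ m₃ ![a ^ 2 + b ^ 2, c ^ 2 + d ^ 2, a * c + b * d] =
    -(m₂ * m₃ / r) - m₃ * m₁ / Real.sqrt ((m₂ / (m₂ + m₃)) ^ 2 * r ^ 2 + ρ ^ 2 + 2 * (m₂ / (m₂ + m₃)) * (a * c + b * d))
      - m₁ * m₂ / Real.sqrt ((m₃ / (m₂ + m₃)) ^ 2 * r ^ 2 + ρ ^ 2 - 2 * (m₃ / (m₂ + m₃)) * (a * c + b * d)) := by
    rw [hr2, hρ2, hrdef]
    simp [Vnewt]
  have hkin : (μ₁ ^ 2 * (c ^ 2 / ν₁ + a ^ 2 / ν₂) + μ₂ ^ 2 * (d ^ 2 / ν₁ + b ^ 2 / ν₂)) / (2 * (a * d - b * c) ^ 2) =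
     ((μ₁ ^ 2 + μ₂ ^ 2) * (ρ ^ 2 / ν₁ + r ^ 2 / ν₂) - (μ₁ ^ 2 - μ₂ ^ 2) * R) / (4 * (a * d - b * c) ^ 2)
      + (μ₁ ^ 2 - μ₂ ^ 2) / (4 * (a * d - b * c) ^ 2) * (R - (d ^ 2 / ν₁ + b ^ 2 / ν₂ - c ^ 2 / ν₁ - a ^ 2 / ν₂)) := by
    rw [hr2, hρ2]; field_simp; ring
  unfold W0
  rw [hkin, hV, K, P]
  unfold Fper
  ring

lemma rot_uniq (ν₁ ν₂ a b c d a' b' c' d' : ℝ) (hν₁ : 0 < ν₁) (hν₂ : 0 < ν₂)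
    (hD : 0 < a * d - b * c) (hD' : a' * d' - b' * c' = a * d - b * c)
    (h1 : a' ^ 2 + b' ^ 2 = a ^ 2 + b ^ 2) (h2 : c' ^ 2 + d' ^ 2 = c ^ 2 + d ^ 2)
    (h3 : a' * c' + b' * d' = a * c + b * d)
    (hY : c * d / ν₁ + a * b / ν₂ = 0) (hY' : c' * d' / ν₁ + a' * b' / ν₂ = 0)
    (hX : 0 < d ^ 2 / ν₁ + b ^ 2 / ν₂ - c ^ 2 / ν₁ - a ^ 2 / ν₂)
    (hX' : 0 ≤ d' ^ 2 / ν₁ + b' ^ 2 / ν₂ - c' ^ 2 / ν₁ - a' ^ 2 / ν₂)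
    (hd : 0 < d) (hd' : 0 < d') : a' = a ∧ b' = b ∧ c' = c ∧ d' = d := by
  have hs1 : 0 < a ^ 2 + b ^ 2 := by
    by_contra h
    have ha : a = 0 := by nlinarith [sq_nonneg a, sq_nonneg b]
    have hb : b = 0 := by nlinarith [sq_nonneg a, sq_nonneg b]
    simp [ha, hb] at hD
  set S := a ^ 2 + b ^ 2 with hS
  obtain ⟨C, hC⟩ : ∃ C, C = (a' * a + b' * b) / S := ⟨_, rfl⟩
  obtain ⟨s, hs⟩ : ∃ s, s = (b' * a - a' * b) / S := ⟨_, rfl⟩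
  have hCs : C ^ 2 + s ^ 2 = 1 := by
    rw [hC, hs]; field_simp
    have : (a' * a + b' * b) ^ 2 + (b' * a - a' * b) ^ 2 = (a' ^ 2 + b' ^ 2) * S := by rw [hS]; ring
    rw [h1] at this
    linear_combination this
  have ea : a' = C * a - s * b := by rw [hC, hs]; field_simp; rw [hS]; ring
  have eb : b' = s * a + C * b := by rw [hC, hs]; field_simp; rw [hS]; ring
  have c1 : S * c = (a * c + b * d) * a - (a * d - b * c) * b := by rw [hS]; ring
  have d1 : S * d = (a * c + b * d) * b + (a * d - b * c) * a := by rw [hS]; ring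
  have c2 : S * c' = (a * c + b * d) * a' - (a * d - b * c) * b' := by rw [← h1, ← h3, ← hD']; ring
  have d2 : S * d' = (a * c + b * d) * b' + (a * d - b * c) * a' := by rw [← h1, ← h3, ← hD']; ring
  have ec : c' = C * c - s * d := by
    apply mul_left_cancel₀ hs1.ne'
    rw [c2, ea, eb]; linear_combination - C * c1 + s * d1
  have ed : d' = s * c + C * d := by
    apply mul_left_cancel₀ hs1.ne'
    rw [d2, ea, eb]; linear_combination - C * d1 - s * c1
  set x := d ^ 2 / ν₁ + b ^ 2 / ν₂ - c ^ 2 / ν₁ - a ^ 2 / ν₂ with hx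
  have eX : d' ^ 2 / ν₁ + b' ^ 2 / ν₂ - c' ^ 2 / ν₁ - a' ^ 2 / ν₂ = (C ^ 2 - s ^ 2) * x + 4 * C * s * (c * d / ν₁ + a * b / ν₂) := by
    rw [ea, eb, ec, ed, hx]; ring
  have eY : c' * d' / ν₁ + a' * b' / ν₂ = (C ^ 2 - s ^ 2) * (c * d / ν₁ + a * b / ν₂) - C * s * x := by
    rw [ea, eb, ec, ed, hx]; ring
  rw [hY, mul_zero, add_zero] at eX
  rw [hY, hY', mul_zero, zero_sub] at eY
  have hCs0 : C * s = 0 := by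
    have : (C * s) * x = 0 := by linarith
    exact (mul_eq_zero.1 this).resolve_right hX.ne'
  have hs0 : s = 0 := by
    rcases mul_eq_zero.1 hCs0 with h | h
    · exfalso
      rw [h] at eX hCs
      rw [eX] at hX'
      have : s ^ 2 = 1 := by linarith
      rw [this] at hX'
      linarith
    · exact h
  rw [hs0] at ea eb ec ed hCs
  have hC1 : C = 1 := by
    have : (C - 1) * (C + 1) = 0 := by linarith
    rcases mul_eq_zero.1 this with h | h
    · linarith
    · exfalso
      have : C = -1 := by linarith
      rw [this] at ed
      linarith
  rw [hC1] at ea eb ec ed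
  exact ⟨by linarith, by linarith, by linarith, by linarith⟩

lemma exists_rot (x y : ℝ) (hx : 0 < x) : ∃ c s : ℝ, c ^ 2 + s ^ 2 = 1 ∧ 0 < c ∧ |s| ≤ |y| / x ∧
    2 * c * s * x = (c ^ 2 - s ^ 2) * y ∧ 0 < (c ^ 2 - s ^ 2) * x + 2 * c * s * y := by
  have hR : 0 < Real.sqrt (x ^ 2 + y ^ 2) := Real.sqrt_pos.2 (by positivity)
  have hR2 := Real.sq_sqrt (show 0 ≤ x ^ 2 + y ^ 2 by positivity)
  have hRx : x ≤ Real.sqrt (x ^ 2 + y ^ 2) := Real.le_sqrt_of_sq_le (by nlinarith [sq_nonneg y])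
  set R := Real.sqrt (x ^ 2 + y ^ 2)
  have hp : 0 < (1 + x / R) / 2 := by positivity
  have hc := Real.sqrt_pos.2 hp
  have hc2 := Real.sq_sqrt hp.le
  set c := Real.sqrt ((1 + x / R) / 2)
  have hcR : 2 * c ^ 2 * R = R + x := by rw [hc2]; field_simp
  obtain ⟨s, hs⟩ : ∃ s, s = y / (2 * R * c) := ⟨_, rfl⟩
  have hs1 : 2 * R * c * s = y := by rw [hs]; field_simp
  have hs2 : 2 * s ^ 2 * R = R - x := by
    have h4 : (2 * s ^ 2 * R) * (2 * c ^ 2 * R) = (R - x) * (R + x) := by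
      have : (2 * s ^ 2 * R) * (2 * c ^ 2 * R) = (2 * R * c * s) ^ 2 := by ring
      rw [this, hs1]; linarith
    rw [hcR] at h4
    exact mul_right_cancel₀ (by positivity) h4
  have hcs : c ^ 2 + s ^ 2 = 1 := by
    have : 2 * R * (c ^ 2 + s ^ 2) = 2 * R * 1 := by linarith
    exact mul_left_cancel₀ (by positivity) this
  have hcs2 : R * (c ^ 2 - s ^ 2) = x := by linarith
  refine ⟨c, s, hcs, hc, ?_, ?_, ?_⟩
  · rw [hs, abs_div, abs_of_pos (show 0 < 2 * R * c by positivity)]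
    gcongr
    have h1 : 1 / 2 ≤ c := by
      have : 0 < x / R := by positivity
      nlinarith
    nlinarith
  · rw [← hcs2, ← hs1]; ring
  · rw [← hcs2, ← hs1]
    have : (c ^ 2 - s ^ 2) * (R * (c ^ 2 - s ^ 2)) + 2 * c * s * (2 * R * c * s) = R * (c ^ 2 + s ^ 2) ^ 2 := by ring
    rw [this, hcs]; linarith

set_option maxHeartbeats 4000000 in
lemma strict_min_at (ν₁ ν₂ m₁ m₂ m₃ μ₁ μ₂ ℓ w a b c d : ℝ) (hν₁ : 0 < ν₁) (hν₂ : 0 < ν₂)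
    (hm₁ : 0 < m₁) (hm₂ : 0 < m₂) (hm₃ : 0 < m₃) (hℓ : 0 < ℓ) (hw : 0 < w)
    (hμ₂ : 0 < μ₂) (h12 : μ₂ < μ₁) (hD : 0 < a * d - b * c)
    (h1 : μ₁ ^ 2 = ν₂ * ℓ * (m₁ * (m₂ + m₃))) (h2 : μ₂ ^ 2 = w * ν₁ * ℓ * (m₂ * m₃))
    (hAB : (a ^ 2 + b ^ 2) / ν₂ < (c ^ 2 + d ^ 2) / ν₁)
    (hc : μ₁ ^ 2 * (c ^ 2 / ν₁ + a ^ 2 / ν₂) < μ₂ ^ 2 * (d ^ 2 / ν₁ + b ^ 2 / ν₂))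
    (hY : c * d / ν₁ + a * b / ν₂ = 0)
    (hX : 0 < d ^ 2 / ν₁ + b ^ 2 / ν₂ - c ^ 2 / ν₁ - a ^ 2 / ν₂) (hd : 0 < d)
    (X Y T : ℝ) (eX : X = ℓ * w / Real.sqrt (a ^ 2 + b ^ 2)) (eY : Y = ℓ / Real.sqrt (c ^ 2 + d ^ 2))
    (eT : T = ℓ * w / Real.sqrt (a ^ 2 + b ^ 2) * ((a * c + b * d) / (a * d - b * c)))
    (hmin : ∀ᶠ z : ℝ × ℝ × ℝ in 𝓝 (X, Y, T), z ≠ (X, Y, T) →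
        Fper (m₁ * (m₂ + m₃) / (m₂ * m₃)) (EvF (ν₁ / ν₂) (m₁ * (m₂ + m₃) / (m₂ * m₃))) (ThF m₁ m₂ m₃) w X Y T <
        Fper (m₁ * (m₂ + m₃) / (m₂ * m₃)) (EvF (ν₁ / ν₂) (m₁ * (m₂ + m₃) / (m₂ * m₃))) (ThF m₁ m₂ m₃) w z.1 z.2.1 z.2.2) :
    ∀ᶠ z in 𝓝[{((![a, b, c, d], (0 : Fin 4 → ℝ)))}ᶜ] ((![a, b, c, d], (0 : Fin 4 → ℝ))),
      Hred ν₁ ν₂ μ₁ μ₂ (Vnewt m₁ m₂ m₃) (![a, b, c, d], (0 : Fin 4 → ℝ)) <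
        Hred ν₁ ν₂ μ₁ μ₂ (Vnewt m₁ m₂ m₃) z := by
  have hs1 : 0 < a ^ 2 + b ^ 2 := by
    by_contra h
    have ha : a = 0 := by nlinarith [sq_nonneg a, sq_nonneg b]
    have hb : b = 0 := by nlinarith [sq_nonneg a, sq_nonneg b]
    simp [ha, hb] at hD
  have hs2 : 0 < c ^ 2 + d ^ 2 := by positivity
  rw [eventually_nhdsWithin_iff, Hred_zero _ _ _ _ _ _ _ _ _ _ _ hν₁ hν₂ hμ₂ h12]
  set z₀ : (Fin 4 → ℝ) × (Fin 4 → ℝ) := (![a, b, c, d], 0) with hz₀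
  have c1 : ∀ᶠ z in 𝓝 z₀, 0 < z.1 0 * z.1 3 - z.1 1 * z.1 2 := by
    have : ContinuousAt (fun z : (Fin 4 → ℝ) × (Fin 4 → ℝ) => z.1 0 * z.1 3 - z.1 1 * z.1 2) z₀ := by fun_prop
    exact continuousAt_const.eventually_lt this (by simpa [hz₀] using hD)
  have c2 : ∀ᶠ z in 𝓝 z₀, (z.1 0 ^ 2 + z.1 1 ^ 2) / ν₂ < (z.1 2 ^ 2 + z.1 3 ^ 2) / ν₁ := by
    have l : ContinuousAt (fun z : (Fin 4 → ℝ) × (Fin 4 → ℝ) => (z.1 0 ^ 2 + z.1 1 ^ 2) / ν₂) z₀ := by fun_prop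
    have r : ContinuousAt (fun z : (Fin 4 → ℝ) × (Fin 4 → ℝ) => (z.1 2 ^ 2 + z.1 3 ^ 2) / ν₁) z₀ := by fun_prop
    exact l.eventually_lt r (by simpa [hz₀] using hAB)
  have c3 : ∀ᶠ z in 𝓝 z₀, μ₁ ^ 2 * (z.1 2 ^ 2 / ν₁ + z.1 0 ^ 2 / ν₂) < μ₂ ^ 2 * (z.1 3 ^ 2 / ν₁ + z.1 1 ^ 2 / ν₂) := by
    have l : ContinuousAt (fun z : (Fin 4 → ℝ) × (Fin 4 → ℝ) => μ₁ ^ 2 * (z.1 2 ^ 2 / ν₁ + z.1 0 ^ 2 / ν₂)) z₀ := by fun_prop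
    have r : ContinuousAt (fun z : (Fin 4 → ℝ) × (Fin 4 → ℝ) => μ₂ ^ 2 * (z.1 3 ^ 2 / ν₁ + z.1 1 ^ 2 / ν₂)) z₀ := by fun_prop
    exact l.eventually_lt r (by simpa [hz₀] using hc)
  have c4 : ∀ᶠ z in 𝓝 z₀, (z.1 0 * z.2 1 - z.1 1 * z.2 0 + z.1 2 * z.2 3 - z.1 3 * z.2 2) ^ 2 < (μ₁ - μ₂) ^ 2 := by
    have l : ContinuousAt (fun z : (Fin 4 → ℝ) × (Fin 4 → ℝ) => (z.1 0 * z.2 1 - z.1 1 * z.2 0 + z.1 2 * z.2 3 - z.1 3 * z.2 2) ^ 2) z₀ := by fun_prop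
    refine l.eventually_lt continuousAt_const ?_
    have : 0 < (μ₁ - μ₂) ^ 2 := by
      have : 0 < μ₁ - μ₂ := by linarith
      positivity
    simpa [hz₀] using this
  have c5 : ∀ᶠ z in 𝓝 z₀, 0 < z.1 3 := by
    have : ContinuousAt (fun z : (Fin 4 → ℝ) × (Fin 4 → ℝ) => z.1 3) z₀ := by fun_prop
    exact continuousAt_const.eventually_lt this (by simpa [hz₀] using hd)
  set Φ : (Fin 4 → ℝ) × (Fin 4 → ℝ) → ℝ × ℝ × ℝ := fun z =>
    (ℓ * w / Real.sqrt (z.1 0 ^ 2 + z.1 1 ^ 2), ℓ / Real.sqrt (z.1 2 ^ 2 + z.1 3 ^ 2),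
      ℓ * w / Real.sqrt (z.1 0 ^ 2 + z.1 1 ^ 2) * ((z.1 0 * z.1 2 + z.1 1 * z.1 3) / (z.1 0 * z.1 3 - z.1 1 * z.1 2))) with hΦ
  have hΦ0 : Φ z₀ = (X, Y, T) := by
    simp [hΦ, hz₀, eX, eY, eT]
  have hΦc : ContinuousAt Φ z₀ := by
    have k1 : ContinuousAt (fun z : (Fin 4 → ℝ) × (Fin 4 → ℝ) => ℓ * w / Real.sqrt (z.1 0 ^ 2 + z.1 1 ^ 2)) z₀ := by
      refine ContinuousAt.div continuousAt_const (ContinuousAt.sqrt (by fun_prop)) ?_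
      have := (Real.sqrt_pos.2 hs1).ne'
      simpa [hz₀] using this
    have k2 : ContinuousAt (fun z : (Fin 4 → ℝ) × (Fin 4 → ℝ) => ℓ / Real.sqrt (z.1 2 ^ 2 + z.1 3 ^ 2)) z₀ := by
      refine ContinuousAt.div continuousAt_const (ContinuousAt.sqrt (by fun_prop)) ?_
      have := (Real.sqrt_pos.2 hs2).ne'
      simpa [hz₀] using this
    have k3 : ContinuousAt (fun z : (Fin 4 → ℝ) × (Fin 4 → ℝ) => (z.1 0 * z.1 2 + z.1 1 * z.1 3) / (z.1 0 * z.1 3 - z.1 1 * z.1 2)) z₀ := by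
      refine ContinuousAt.div (by fun_prop) (by fun_prop) ?_
      have := hD.ne'
      simpa [hz₀] using this
    exact k1.prodMk (k2.prodMk (k1.mul k3))
  have hΦc' : Tendsto Φ (𝓝 z₀) (𝓝 (X, Y, T)) := hΦ0 ▸ hΦc
  have c6 := hΦc'.eventually hmin
  filter_upwards [c1, c2, c3, c4, c5, c6] with z k1 k2 k3 k4 k5 k6 hz
  have hge := Hred_ge ν₁ ν₂ μ₁ μ₂ m₁ m₂ m₃ z.1 z.2 hν₁ hν₂ hμ₂ h12 k3.le k4.le
  change _ ≤ Hred ν₁ ν₂ μ₁ μ₂ (Vnewt m₁ m₂ m₃) z at hge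
  have hp : 0 ≤ (z.2 0 ^ 2 + z.2 1 ^ 2) / (2 * ν₁) + (z.2 2 ^ 2 + z.2 3 ^ 2) / (2 * ν₂) := by positivity
  by_contra hcon
  push Not at hcon
  have w0 := W0_eq ν₁ ν₂ m₁ m₂ m₃ μ₁ μ₂ ℓ w a b c d hν₁ hν₂ hm₁ hm₂ hm₃ hℓ hw hD h1 h2 hAB
  have eT' : T = X * ((a * c + b * d) / (a * d - b * c)) := by rw [eT, eX]
  rw [hY, mul_zero, zero_pow two_ne_zero, add_zero, Real.sqrt_sq hX.le, sub_self, mul_zero, add_zero, ← eX, ← eY, ← eT'] at w0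
  have w1 := W0_eq ν₁ ν₂ m₁ m₂ m₃ μ₁ μ₂ ℓ w (z.1 0) (z.1 1) (z.1 2) (z.1 3) hν₁ hν₂ hm₁ hm₂ hm₃ hℓ hw k1 h1 h2 k2
  have hcpos : 0 < m₂ * m₃ / (ℓ * w) := by positivity
  have hG : 0 < (μ₁ ^ 2 - μ₂ ^ 2) / (4 * (z.1 0 * z.1 3 - z.1 1 * z.1 2) ^ 2) := by
    have : 0 < μ₁ ^ 2 - μ₂ ^ 2 := by have := mul_pos (sub_pos.2 h12) (add_pos (hμ₂.trans h12) hμ₂); linarith [this, show (μ₁ - μ₂) * (μ₁ + μ₂) = μ₁ ^ 2 - μ₂ ^ 2 by ring]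
    positivity
  set x := z.1 3 ^ 2 / ν₁ + z.1 1 ^ 2 / ν₂ - z.1 2 ^ 2 / ν₁ - z.1 0 ^ 2 / ν₂ with hx
  set y := z.1 2 * z.1 3 / ν₁ + z.1 0 * z.1 1 / ν₂ with hy
  have hR : 0 ≤ Real.sqrt (x ^ 2 + (2 * y) ^ 2) - x := by
    have : |x| ≤ Real.sqrt (x ^ 2 + (2 * y) ^ 2) := Real.abs_le_sqrt (by nlinarith [sq_nonneg y])
    linarith [le_abs_self x]
  have hGR := mul_nonneg hG.le hR
  have hΦeq : Φ z = (X, Y, T) := by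
    by_contra hne
    have := mul_lt_mul_of_pos_left (k6 hne) hcpos
    change _ < m₂ * m₃ / (ℓ * w) * Fper (m₁ * (m₂ + m₃) / (m₂ * m₃)) (EvF (ν₁ / ν₂) (m₁ * (m₂ + m₃) / (m₂ * m₃)))
        (ThF m₁ m₂ m₃) w (ℓ * w / Real.sqrt (z.1 0 ^ 2 + z.1 1 ^ 2)) (ℓ / Real.sqrt (z.1 2 ^ 2 + z.1 3 ^ 2))
        (ℓ * w / Real.sqrt (z.1 0 ^ 2 + z.1 1 ^ 2) * ((z.1 0 * z.1 2 + z.1 1 * z.1 3) / (z.1 0 * z.1 3 - z.1 1 * z.1 2))) at this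
    linarith
  simp only [hΦ, Prod.mk.injEq] at hΦeq
  obtain ⟨f1, f2, f3⟩ := hΦeq
  rw [f3, f1, f2] at w1
  have hGR0 : (μ₁ ^ 2 - μ₂ ^ 2) / (4 * (z.1 0 * z.1 3 - z.1 1 * z.1 2) ^ 2) * (Real.sqrt (x ^ 2 + (2 * y) ^ 2) - x) = 0 := by
    linarith
  have hp0 : (z.2 0 ^ 2 + z.2 1 ^ 2) / (2 * ν₁) + (z.2 2 ^ 2 + z.2 3 ^ 2) / (2 * ν₂) = 0 := by linarith
  have hRx : Real.sqrt (x ^ 2 + (2 * y) ^ 2) = x := by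
    have := (mul_eq_zero.1 hGR0).resolve_left hG.ne'
    linarith
  have hx0 : 0 ≤ x := hRx ▸ Real.sqrt_nonneg _
  have hy0 : y = 0 := by
    have h3 := Real.sq_sqrt (show 0 ≤ x ^ 2 + (2 * y) ^ 2 by positivity)
    rw [hRx] at h3
    have : y ^ 2 = 0 := by linarith
    exact pow_eq_zero_iff two_ne_zero |>.1 this
  -- the momenta vanish
  have hp' : z.2 = 0 := by
    have t1 : 0 ≤ (z.2 0 ^ 2 + z.2 1 ^ 2) / (2 * ν₁) := by positivity
    have t2 : 0 ≤ (z.2 2 ^ 2 + z.2 3 ^ 2) / (2 * ν₂) := by positivity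
    have t3 : (z.2 0 ^ 2 + z.2 1 ^ 2) / (2 * ν₁) = 0 := by linarith
    have t4 : (z.2 2 ^ 2 + z.2 3 ^ 2) / (2 * ν₂) = 0 := by linarith
    have t5 := (div_eq_zero_iff.1 t3).resolve_right (by positivity)
    have t6 := (div_eq_zero_iff.1 t4).resolve_right (by positivity)
    have u0 := sq_nonneg (z.2 0)
    have u1 := sq_nonneg (z.2 1)
    have u2 := sq_nonneg (z.2 2)
    have u3 := sq_nonneg (z.2 3)
    funext i
    fin_cases i
    · exact pow_eq_zero_iff two_ne_zero |>.1 (show z.2 0 ^ 2 = 0 by linarith)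
    · exact pow_eq_zero_iff two_ne_zero |>.1 (show z.2 1 ^ 2 = 0 by linarith)
    · exact pow_eq_zero_iff two_ne_zero |>.1 (show z.2 2 ^ 2 = 0 by linarith)
    · exact pow_eq_zero_iff two_ne_zero |>.1 (show z.2 3 ^ 2 = 0 by linarith)
  -- the Gram data agree
  have inj : ∀ k u v : ℝ, 0 < k → 0 < u → 0 ≤ v → k / Real.sqrt v = k / Real.sqrt u → v = u := by
    intro k u v hk hu hv h
    have hu' := Real.sqrt_pos.2 hu
    have : 0 < k / Real.sqrt v := by rw [h]; positivity
    have hv' : 0 < Real.sqrt v := by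
      by_contra h0
      have h00 : Real.sqrt v = 0 := le_antisymm (not_lt.1 h0) (Real.sqrt_nonneg _)
      rw [h00, div_zero] at this
      exact lt_irrefl _ this
    have : Real.sqrt v = Real.sqrt u := by
      field_simp at h; linarith
    exact (Real.sqrt_inj hv hu.le).1 this
  have g1 : z.1 0 ^ 2 + z.1 1 ^ 2 = a ^ 2 + b ^ 2 := inj (ℓ * w) _ _ (by positivity) hs1 (by positivity) (f1.trans eX)
  have g2 : z.1 2 ^ 2 + z.1 3 ^ 2 = c ^ 2 + d ^ 2 := inj ℓ _ _ hℓ hs2 (by positivity) (f2.trans eY)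
  have hX0 : 0 < X := by rw [eX]; have := Real.sqrt_pos.2 hs1; positivity
  have g3 : (z.1 0 * z.1 2 + z.1 1 * z.1 3) / (z.1 0 * z.1 3 - z.1 1 * z.1 2) = (a * c + b * d) / (a * d - b * c) := by
    rw [eT, f1, ← eX] at f3
    exact mul_left_cancel₀ hX0.ne' f3
  rw [div_eq_div_iff k1.ne' hD.ne'] at g3
  set D' := z.1 0 * z.1 3 - z.1 1 * z.1 2 with hD'
  set s' := z.1 0 * z.1 2 + z.1 1 * z.1 3 with hs'
  set D := a * d - b * c with hDdef
  set s := a * c + b * d with hsdef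
  have L1 : D' ^ 2 + s' ^ 2 = (z.1 0 ^ 2 + z.1 1 ^ 2) * (z.1 2 ^ 2 + z.1 3 ^ 2) := by rw [hD', hs']; ring
  have L2 : D ^ 2 + s ^ 2 = (a ^ 2 + b ^ 2) * (c ^ 2 + d ^ 2) := by rw [hDdef, hsdef]; ring
  have L3 : D' ^ 2 + s' ^ 2 = D ^ 2 + s ^ 2 := by rw [L1, L2, g1, g2]
  have L4 : D' = D := by
    have : D' ^ 2 * (D ^ 2 + s ^ 2) = D ^ 2 * (D ^ 2 + s ^ 2) := by
      have : D' ^ 2 * s ^ 2 = D ^ 2 * s' ^ 2 := by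
        have : (s' * D) ^ 2 = (s * D') ^ 2 := by rw [g3]
        linarith
      linear_combination this + D ^ 2 * L3
    have := mul_right_cancel₀ (by positivity) this
    exact (pow_left_inj₀ k1.le hD.le two_ne_zero).1 this
  have L5 : s' = s := by
    rw [L4] at g3
    exact mul_right_cancel₀ hD.ne' g3
  obtain ⟨r1, r2, r3, r4⟩ := rot_uniq ν₁ ν₂ a b c d (z.1 0) (z.1 1) (z.1 2) (z.1 3) hν₁ hν₂ hD L4 g1 g2 L5 hY hy0 hX hx0 hd k5
  apply hz
  have hz1 : z.1 = ![a, b, c, d] := by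
    funext i
    fin_cases i
    · exact r1
    · exact r2
    · exact r3
    · exact r4
  exact Prod.ext hz1 hp'

lemma sub_one_abs_le (c s : ℝ) (h : c ^ 2 + s ^ 2 = 1) (hc : 0 < c) : |c - 1| ≤ |s| := by
  have hc1 : c ≤ 1 := by nlinarith [sq_nonneg s]
  have hs1 : |s| ≤ 1 := by
    have : |s| ^ 2 ≤ 1 := by rw [sq_abs]; nlinarith [sq_nonneg c]
    nlinarith [abs_nonneg s]
  have hs2 : |s| ^ 2 = s ^ 2 := sq_abs s
  rw [abs_of_nonpos (by linarith)]
  nlinarith [abs_nonneg s]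

lemma cos_le_one_aux (c s : ℝ) (h : c ^ 2 + s ^ 2 = 1) : c ≤ 1 := by
  nlinarith [sq_nonneg s, sq_nonneg (c - 1)]

lemma sin_abs_le_one_aux (c s : ℝ) (h : c ^ 2 + s ^ 2 = 1) : |s| ≤ 1 := by
  rw [← sq_le_one_iff_abs_le_one]; nlinarith [sq_nonneg c]

lemma ratio_aux (X Y : ℝ) (hX : 1 / 2 ≤ X) (hY0 : 0 < Y) (hY : Y ≤ 2) : Y ^ 2 / X ^ 2 ≤ 16 := by
  rw [div_le_iff₀ (by positivity)]
  nlinarith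

lemma le_half_mul_aux (x P Q : ℝ) (hX : 1 / 2 ≤ x) (hQ : 0 ≤ Q) (h : 2 * P ≤ Q) : P ≤ Q * x := by
  nlinarith

set_option maxHeartbeats 1000000 in
lemma construct (ν₁ ν₂ m₁ m₂ m₃ μ₁ μ₂ ℓ w : ℝ) (hν₁ : 0 < ν₁) (hν₂ : 0 < ν₂)
    (hm₁ : 0 < m₁) (hm₂ : 0 < m₂) (hm₃ : 0 < m₃) (hℓ : 0 < ℓ) (hw : 0 < w)
    (hμ₂ : 0 < μ₂) (h12 : μ₂ < μ₁)
    (h1 : μ₁ ^ 2 = ν₂ * ℓ * (m₁ * (m₂ + m₃))) (h2 : μ₂ ^ 2 = w * ν₁ * ℓ * (m₂ * m₃))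
    (hs1 : 128 * (ν₁ / ν₂) * w ^ 2 ≤ 1 / 2)
    (hs2 : 288 * μ₁ ^ 2 * (ν₁ / ν₂) * w < ν₁ * ℓ * (m₂ * m₃))
    (X Y T : ℝ) (hX1 : 1 / 2 ≤ X) (hX2 : X ≤ 2) (hY1 : 1 / 2 ≤ Y) (hY2 : Y ≤ 2) (hT : |T| ≤ 1)
    (hmin : ∀ᶠ z : ℝ × ℝ × ℝ in 𝓝 (X, Y, T), z ≠ (X, Y, T) →
        Fper (m₁ * (m₂ + m₃) / (m₂ * m₃)) (EvF (ν₁ / ν₂) (m₁ * (m₂ + m₃) / (m₂ * m₃))) (ThF m₁ m₂ m₃) w X Y T <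
        Fper (m₁ * (m₂ + m₃) / (m₂ * m₃)) (EvF (ν₁ / ν₂) (m₁ * (m₂ + m₃) / (m₂ * m₃))) (ThF m₁ m₂ m₃) w z.1 z.2.1 z.2.2) :
    ∃ a b c d : ℝ, |a / (ℓ * w) - 1| ≤ 6 * |T| + 2 * |X - 1| ∧ |d / ℓ - 1| ≤ |T| + 2 * |Y - 1| ∧
      |b| ≤ 5 * ℓ * w * |T| ∧ |c| ≤ 256 * ℓ * (ν₁ / ν₂) * w ^ 2 * |T| ∧
    ∀ᶠ z in 𝓝[{((![a, b, c, d], (0 : Fin 4 → ℝ)))}ᶜ] ((![a, b, c, d], (0 : Fin 4 → ℝ))),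
      Hred ν₁ ν₂ μ₁ μ₂ (Vnewt m₁ m₂ m₃) (![a, b, c, d], (0 : Fin 4 → ℝ)) <
        Hred ν₁ ν₂ μ₁ μ₂ (Vnewt m₁ m₂ m₃) z := by
  have hX0 : 0 < X := by linarith
  have hY0 : 0 < Y := by linarith
  set χ := ν₁ / ν₂ with hχ
  have hχ0 : 0 < χ := by positivity
  obtain ⟨r, hr⟩ : ∃ r, r = ℓ * w / X := ⟨_, rfl⟩
  obtain ⟨ρ, hρ⟩ : ∃ ρ, ρ = ℓ / Y := ⟨_, rfl⟩
  have hr0 : 0 < r := by rw [hr]; positivity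
  have hρ0 : 0 < ρ := by rw [hρ]; positivity
  obtain ⟨Q, hQ⟩ : ∃ Q, Q = Real.sqrt (X ^ 2 + T ^ 2) := ⟨_, rfl⟩
  have hQ2 : Q ^ 2 = X ^ 2 + T ^ 2 := by rw [hQ]; exact Real.sq_sqrt (by positivity)
  have hQ0 : 0 < Q := by rw [hQ]; exact Real.sqrt_pos.2 (by positivity)
  have hQX : X ≤ Q := by rw [hQ]; exact Real.le_sqrt_of_sq_le (by nlinarith [sq_nonneg T])
  obtain ⟨σ, hσ⟩ : ∃ σ, σ = X / Q := ⟨_, rfl⟩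
  obtain ⟨t, ht⟩ : ∃ t, t = T / Q := ⟨_, rfl⟩
  have hσ0 : 0 < σ := by rw [hσ]; positivity
  have hσt : σ ^ 2 + t ^ 2 = 1 := by
    rw [hσ, ht]; field_simp; linarith
  have hσ1 : σ ≤ 1 := cos_le_one_aux σ t hσt
  have hTt : T = X * (t / σ) := by rw [hσ, ht]; field_simp
  have htT : |t| ≤ 2 * |T| := by
    rw [ht, abs_div, abs_of_pos hQ0, div_le_iff₀ hQ0]
    exact (le_half_mul_aux Q |T| (2 * |T|) (by linarith) (by positivity) le_rfl)
  obtain ⟨A, hA⟩ : ∃ A, A = ρ ^ 2 / ν₁ := ⟨_, rfl⟩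
  obtain ⟨B, hB⟩ : ∃ B, B = r ^ 2 / ν₂ := ⟨_, rfl⟩
  have hA0 : 0 < A := by rw [hA]; positivity
  have hB0 : 0 < B := by rw [hB]; positivity
  have hBA : B ≤ 16 * χ * w ^ 2 * A := by
    have e : B = χ * w ^ 2 * (Y ^ 2 / X ^ 2) * A := by
      rw [hB, hA, hχ, hr, hρ]; field_simp
    have : Y ^ 2 / X ^ 2 ≤ 16 := ratio_aux X Y hX1 hY0 hY2
    rw [e]
    calc χ * w ^ 2 * (Y ^ 2 / X ^ 2) * A ≤ χ * w ^ 2 * 16 * A := by gcongr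
      _ = _ := by ring
  have hBA' : B ≤ A / 16 := by
    have := mul_le_mul_of_nonneg_right hs1 hA0.le
    linarith
  have hX0ge : A / 2 ≤ A - B * (σ ^ 2 - t ^ 2) := by
    have : B * (σ ^ 2 - t ^ 2) ≤ B * 1 := by gcongr; linarith [sq_nonneg t]
    linarith
  obtain ⟨c, s, hcs, hc0, hsb, heq, hpos⟩ := exists_rot (A - B * (σ ^ 2 - t ^ 2)) (2 * B * t * σ) (by linarith)
  have hsT : |s| ≤ 128 * χ * w ^ 2 * |T| := by
    refine hsb.trans ?_
    rw [div_le_iff₀ (by linarith)]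
    have e : |2 * B * t * σ| = 2 * B * |t| * σ := by
      rw [abs_mul, abs_mul, abs_of_pos hσ0, abs_of_pos (by positivity : 0 < 2 * B)]
    rw [e]
    calc 2 * B * |t| * σ ≤ 2 * (16 * χ * w ^ 2 * A) * (2 * |T|) * 1 := by gcongr
      _ = 128 * χ * w ^ 2 * |T| * (A / 2) := by ring
      _ ≤ _ := by gcongr
  have hs128 : |s| ≤ 128 * χ * w ^ 2 := by
    refine hsT.trans ?_
    calc 128 * χ * w ^ 2 * |T| ≤ 128 * χ * w ^ 2 * 1 := by gcongr
      _ = _ := by ring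
  have hsT2 : |s| ≤ |T| / 2 := by
    refine hsT.trans ?_
    calc 128 * χ * w ^ 2 * |T| ≤ 1 / 2 * |T| := by gcongr
      _ = _ := by ring
  have hshalf : |s| ≤ 1 / 2 := by linarith
  have hssq : s ^ 2 ≤ |s| := by
    rw [← sq_abs, sq]; exact mul_le_of_le_one_left (abs_nonneg s) (by linarith)
  have hc1 := sub_one_abs_le c s hcs hc0
  have hσt1 := sub_one_abs_le σ t hσt hσ0
  have hcle : c ≤ 1 := cos_le_one_aux c s hcs
  have habs_t : |t| ≤ 1 := sin_abs_le_one_aux σ t hσt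
  have nT := abs_nonneg T
  have ns := abs_nonneg s
  have nt := abs_nonneg t
  refine ⟨r * (c * σ - s * t), r * (s * σ + c * t), -s * ρ, c * ρ, ?_, ?_, ?_, ?_, ?_⟩
  · have e : r * (c * σ - s * t) / (ℓ * w) - 1 = (c * σ - s * t - X) / X := by
      rw [hr]; field_simp
    rw [e, abs_div, abs_of_pos hX0, div_le_iff₀ hX0]
    have k : |c * σ - s * t - X| ≤ |s| + |t| + |s| + |X - 1| := by
      have e2 : c * σ - s * t - X = (c - 1) * σ + (σ - 1) - s * t - (X - 1) := by ring
      have z1 : |(c - 1) * σ| ≤ |s| := by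
        rw [abs_mul, abs_of_pos hσ0]
        calc |c - 1| * σ ≤ |s| * 1 := by gcongr
          _ = _ := by ring
      have z2 : |s * t| ≤ |s| := by
        rw [abs_mul]
        calc |s| * |t| ≤ |s| * 1 := by gcongr
          _ = _ := by ring
      rw [e2]
      calc _ ≤ |(c - 1) * σ + (σ - 1) - s * t| + |X - 1| := abs_sub _ _
        _ ≤ |(c - 1) * σ + (σ - 1)| + |s * t| + |X - 1| := by gcongr; exact abs_sub _ _
        _ ≤ |(c - 1) * σ| + |σ - 1| + |s * t| + |X - 1| := by gcongr; exact abs_add_le _ _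
        _ ≤ _ := by gcongr
    have nX := abs_nonneg (X - 1)
    exact le_half_mul_aux X _ _ hX1 (by positivity) (by linarith)
  · have e : c * ρ / ℓ - 1 = (c - Y) / Y := by
      rw [hρ]; field_simp
    rw [e, abs_div, abs_of_pos hY0, div_le_iff₀ hY0]
    have k : |c - Y| ≤ |s| + |Y - 1| := by
      have e2 : c - Y = (c - 1) - (Y - 1) := by ring
      rw [e2]
      exact (abs_sub _ _).trans (by gcongr)
    have nX := abs_nonneg (Y - 1)
    exact le_half_mul_aux Y _ _ hY1 (by positivity) (by linarith)
  · have hr2 : r ≤ 2 * ℓ * w := by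
      rw [hr, div_le_iff₀ hX0]
      exact le_half_mul_aux X _ _ hX1 (by positivity) (by linarith)
    have k : |s * σ + c * t| ≤ |s| * 1 + 1 * |t| := by
      refine (abs_add_le _ _).trans ?_
      rw [abs_mul, abs_mul, abs_of_pos hσ0, abs_of_pos hc0]
      gcongr
    rw [abs_mul, abs_of_pos hr0]
    calc r * |s * σ + c * t| ≤ (2 * ℓ * w) * (5 / 2 * |T|) := by
          gcongr
          linarith
      _ = _ := by ring
  · have hr2 : ρ ≤ 2 * ℓ := by
      rw [hρ, div_le_iff₀ hY0]
      exact le_half_mul_aux Y _ _ hY1 (by positivity) (by linarith)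
    rw [abs_mul, abs_of_pos hρ0, abs_neg]
    calc |s| * ρ ≤ (128 * χ * w ^ 2 * |T|) * (2 * ℓ) := by gcongr
      _ = _ := by ring
  · have E1 : (r * (c * σ - s * t)) ^ 2 + (r * (s * σ + c * t)) ^ 2 = r ^ 2 := by
      linear_combination r ^ 2 * (σ ^ 2 + t ^ 2) * hcs + r ^ 2 * hσt
    have E2 : (-s * ρ) ^ 2 + (c * ρ) ^ 2 = ρ ^ 2 := by
      linear_combination ρ ^ 2 * hcs
    have E3 : r * (c * σ - s * t) * (c * ρ) - r * (s * σ + c * t) * (-s * ρ) = r * ρ * σ := by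
      linear_combination r * ρ * σ * hcs
    have E4 : r * (c * σ - s * t) * (-s * ρ) + r * (s * σ + c * t) * (c * ρ) = r * ρ * t := by
      linear_combination r * ρ * t * hcs
    have F1 : (-s * ρ) ^ 2 / ν₁ = s ^ 2 * A := by rw [hA]; ring
    have F2 : (c * ρ) ^ 2 / ν₁ = c ^ 2 * A := by rw [hA]; ring
    have F3 : (r * (c * σ - s * t)) ^ 2 / ν₂ = (c * σ - s * t) ^ 2 * B := by rw [hB]; ring
    have F4 : (r * (s * σ + c * t)) ^ 2 / ν₂ = (s * σ + c * t) ^ 2 * B := by rw [hB]; ring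
    have F5 : -s * ρ * (c * ρ) / ν₁ = -s * c * A := by rw [hA]; ring
    have F6 : r * (c * σ - s * t) * (r * (s * σ + c * t)) / ν₂ = (c * σ - s * t) * (s * σ + c * t) * B := by
      rw [hB]; ring
    refine strict_min_at ν₁ ν₂ m₁ m₂ m₃ μ₁ μ₂ ℓ w _ _ _ _ hν₁ hν₂ hm₁ hm₂ hm₃ hℓ hw hμ₂ h12 ?_ h1 h2 ?_ ?_ ?_ ?_ ?_
      X Y T ?_ ?_ ?_ hmin
    · rw [E3]; positivity
    · rw [E1, E2, ← hA, ← hB]; linarith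
    · rw [F1, F2, F3, F4]
      have p1 : (c * σ - s * t) ^ 2 ≤ 1 := by
        have : (c * σ - s * t) ^ 2 + (s * σ + c * t) ^ 2 = 1 := by
          linear_combination (σ ^ 2 + t ^ 2) * hcs + hσt
        linarith [sq_nonneg (s * σ + c * t)]
      have hμ1 : 0 < μ₁ ^ 2 := by have := hμ₂.trans h12; positivity
      have L : μ₁ ^ 2 * (s ^ 2 * A + (c * σ - s * t) ^ 2 * B) ≤ μ₁ ^ 2 * (144 * χ * w ^ 2 * A) := by
        gcongr
        calc s ^ 2 * A + (c * σ - s * t) ^ 2 * B ≤ (128 * χ * w ^ 2) * A + 1 * (16 * χ * w ^ 2 * A) := by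
              gcongr
              exact hssq.trans hs128
          _ = _ := by ring
      have R : μ₂ ^ 2 * (1 / 2 * A) ≤ μ₂ ^ 2 * (c ^ 2 * A + (s * σ + c * t) ^ 2 * B) := by
        gcongr
        have : 0 ≤ (s * σ + c * t) ^ 2 * B := by positivity
        have : 1 / 2 * A ≤ c ^ 2 * A := by gcongr; linarith
        linarith
      have M : μ₁ ^ 2 * (144 * χ * w ^ 2 * A) < μ₂ ^ 2 * (1 / 2 * A) := by
        rw [h2]
        have := mul_lt_mul_of_pos_right hs2 (by positivity : 0 < w * A / 2)
        linarith
      linarith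
    · rw [F5, F6]
      linear_combination (-1 / 2) * heq + 0 * hcs
    · rw [F1, F2, F3, F4]
      linarith
    · positivity
    · rw [E1, Real.sqrt_sq hr0.le, hr]; field_simp
    · rw [E2, Real.sqrt_sq hρ0.le, hρ]; field_simp
    · rw [E1, E3, E4, Real.sqrt_sq hr0.le, hTt, hr]
      have : ρ ≠ 0 := hρ0.ne'
      field_simp

/-- Main theorem: for any masses and small `μ₂ > 0` the fully reduced Hamiltonian has a
zero-momentum critical point which is a strict local minimum (hence the corresponding
relative equilibrium of the three-body problem in `ℝ⁴` is Lyapunov stable), with the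
stated asymptotics as `μ₂ → 0⁺`. -/
theorem general_masses_minimum (m₁ m₂ m₃ μ₁ : ℝ) (hm₁ : 0 < m₁)
    (hm₂ : 0 < m₂) (hm₃ : 0 < m₃) (hμ₁ : 0 < μ₁) :
    (let Mtot := m₁ + m₂ + m₃
     let ν₁ := m₂ * m₃ / (m₂ + m₃)
     let ν₂ := m₁ * (m₂ + m₃) / Mtot
     let κ := Mtot / (m₁ ^ 2 * (m₂ + m₃) ^ 2)
     let u : ℝ → ℝ := fun μ₂ => (μ₂ / μ₁) / (m₂ * m₃ * Real.sqrt (κ / (m₂ + m₃)))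
     ∃ ε > 0, ∃ q₁ q₂ q₃ q₄ : ℝ → ℝ,
       Tendsto (fun μ₂ => q₁ μ₂ / (κ * μ₁ ^ 2 * u μ₂ ^ 2)) (𝓝[>] 0) (𝓝 1) ∧
       Tendsto (fun μ₂ => q₄ μ₂ / (κ * μ₁ ^ 2)) (𝓝[>] 0) (𝓝 1) ∧
       (q₂ =O[𝓝[>] 0] fun μ₂ => u μ₂ ^ 10) ∧
       (q₃ =O[𝓝[>] 0] fun μ₂ => u μ₂ ^ 12) ∧
       ∀ μ₂ ∈ Set.Ioo (0 : ℝ) ε,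
         fderiv ℝ (Hred ν₁ ν₂ μ₁ μ₂ (Vnewt m₁ m₂ m₃))
           (![q₁ μ₂, q₂ μ₂, q₃ μ₂, q₄ μ₂], (0 : Fin 4 → ℝ)) = 0 ∧
         ∀ᶠ z in nhdsWithin ((![q₁ μ₂, q₂ μ₂, q₃ μ₂, q₄ μ₂], (0 : Fin 4 → ℝ)))
             {((![q₁ μ₂, q₂ μ₂, q₃ μ₂, q₄ μ₂], (0 : Fin 4 → ℝ)))}ᶜ,
           Hred ν₁ ν₂ μ₁ μ₂ (Vnewt m₁ m₂ m₃)
               (![q₁ μ₂, q₂ μ₂, q₃ μ₂, q₄ μ₂], (0 : Fin 4 → ℝ)) <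
             Hred ν₁ ν₂ μ₁ μ₂ (Vnewt m₁ m₂ m₃) z) := by
  intro Mtot ν₁ ν₂ κ u
  have hM : 0 < Mtot := by simp only [Mtot]; positivity
  have hν₁ : 0 < ν₁ := by simp only [ν₁]; positivity
  have hν₂ : 0 < ν₂ := by simp only [ν₂]; positivity
  have hκ : 0 < κ := by simp only [κ]; positivity
  have hℓ : 0 < κ * μ₁ ^ 2 := by positivity
  have hS : 0 < Real.sqrt (κ / (m₂ + m₃)) := Real.sqrt_pos.2 (by positivity)
  have hS2 : Real.sqrt (κ / (m₂ + m₃)) ^ 2 = κ / (m₂ + m₃) := Real.sq_sqrt (by positivity)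
  have hu_pos : ∀ x, 0 < x → 0 < u x := by
    intro x hx
    simp only [u]
    positivity
  have h1 : μ₁ ^ 2 = ν₂ * (κ * μ₁ ^ 2) * (m₁ * (m₂ + m₃)) := by
    simp only [ν₂, κ]
    field_simp
  have h2 : ∀ x, x ^ 2 = u x ^ 2 * ν₁ * (κ * μ₁ ^ 2) * (m₂ * m₃) := by
    intro x
    simp only [u, ν₁]
    rw [div_pow, div_pow, mul_pow, hS2]
    field_simp
  have hu0 : Tendsto u (𝓝[>] 0) (𝓝 0) := by
    have : ContinuousAt u 0 := by simp only [u]; fun_prop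
    have h0 : u 0 = 0 := by simp [u]
    have := this.tendsto
    rw [h0] at this
    exact this.mono_left nhdsWithin_le_nhds
  have hpoly : ∀ (k : ℝ) (n : ℕ), n ≠ 0 → Tendsto (fun x => k * u x ^ n) (𝓝[>] 0) (𝓝 0) := by
    intro k n hn
    have := (hu0.pow n).const_mul k
    simpa [hn] using this
  obtain ⟨C, hC, w₀, hw₀, hmin⟩ := exists_min (m₁ * (m₂ + m₃) / (m₂ * m₃)) (by positivity)
    (EvF (ν₁ / ν₂) (m₁ * (m₂ + m₃) / (m₂ * m₃))) (ThF m₁ m₂ m₃) (EvF_contDiffAt _ _) (ThF_contDiffAt _ _ _)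
    (EvF_even _ _) (ThF_even _ _ _)
  have hlam : 0 < ν₁ * (κ * μ₁ ^ 2) * (m₂ * m₃) := by positivity
  have e1 := (hpoly 1 2 (by norm_num)).eventually_lt_const hw₀
  have e2 := (hpoly (128 * (ν₁ / ν₂)) 4 (by norm_num)).eventually_lt_const (show (0 : ℝ) < 1 / 2 by norm_num)
  have e3 := (hpoly (288 * μ₁ ^ 2 * (ν₁ / ν₂)) 2 (by norm_num)).eventually_lt_const hlam
  have e4 := (hpoly C 2 (by norm_num)).eventually_lt_const (show (0 : ℝ) < 1 / 4 by norm_num)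
  have e5 := (hpoly C 8 (by norm_num)).eventually_lt_const (show (0 : ℝ) < 1 by norm_num)
  have e6 : ∀ᶠ x in 𝓝[>] (0 : ℝ), x < μ₁ := nhdsWithin_le_nhds (Iio_mem_nhds hμ₁)
  obtain ⟨ε, hε, hsub⟩ := mem_nhdsGT_iff_exists_Ioo_subset.1
    (e1.and (e2.and (e3.and (e4.and (e5.and e6)))))
  have key : ∀ x : ℝ, ∃ a b c d : ℝ, x ∈ Set.Ioo (0 : ℝ) ε →
      |a / (κ * μ₁ ^ 2 * u x ^ 2) - 1| ≤ 6 * (C * u x ^ 8) + 2 * (Real.sqrt C * u x ^ 1) ∧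
      |d / (κ * μ₁ ^ 2) - 1| ≤ C * u x ^ 8 + 2 * (Real.sqrt C * u x ^ 1) ∧
      |b| ≤ 5 * (κ * μ₁ ^ 2) * C * u x ^ 10 ∧
      |c| ≤ 256 * (κ * μ₁ ^ 2) * (ν₁ / ν₂) * C * u x ^ 12 ∧
      ∀ᶠ z in 𝓝[{((![a, b, c, d], (0 : Fin 4 → ℝ)))}ᶜ] ((![a, b, c, d], (0 : Fin 4 → ℝ))),
        Hred ν₁ ν₂ μ₁ x (Vnewt m₁ m₂ m₃) (![a, b, c, d], (0 : Fin 4 → ℝ)) <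
          Hred ν₁ ν₂ μ₁ x (Vnewt m₁ m₂ m₃) z := by
    intro x
    by_cases hx : x ∈ Set.Ioo (0 : ℝ) ε
    swap
    · exact ⟨0, 0, 0, 0, fun h => absurd h hx⟩
    obtain ⟨k1, k2, k3, k4, k5, k6⟩ := hsub hx
    have hux := hu_pos x hx.1
    have hw : 0 < u x ^ 2 := by positivity
    obtain ⟨X, Y, T, bX, bY, bT, hm⟩ := hmin (u x ^ 2) hw (by simpa using k1)
    have bT' : |T| ≤ C * u x ^ 8 := by rw [← pow_mul] at bT; exact bT
    have sq : Real.sqrt (C * u x ^ 2) = Real.sqrt C * u x ^ 1 := by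
      rw [Real.sqrt_mul hC.le, Real.sqrt_sq hux.le, pow_one]
    have bX' : |X - 1| ≤ Real.sqrt C * u x ^ 1 := sq ▸ Real.abs_le_sqrt bX
    have bY' : |Y - 1| ≤ Real.sqrt C * u x ^ 1 := sq ▸ Real.abs_le_sqrt bY
    have half : Real.sqrt C * u x ^ 1 ≤ 1 / 2 := by
      rw [← sq]
      exact Real.sqrt_le_iff.2 ⟨by norm_num, by norm_num; linarith⟩
    have aX := abs_le.1 (bX'.trans half)
    have aY := abs_le.1 (bY'.trans half)
    obtain ⟨a, b, c, d, q1, q2, q3, q4, q5⟩ := construct ν₁ ν₂ m₁ m₂ m₃ μ₁ x (κ * μ₁ ^ 2) (u x ^ 2) hν₁ hν₂ hm₁ hm₂ hm₃ hℓ hw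
      hx.1 k6 h1 (h2 x) (by rw [← pow_mul]; exact k2.le) k3 X Y T (by linarith) (by linarith) (by linarith) (by linarith)
      (bT'.trans k5.le) hm
    refine ⟨a, b, c, d, fun _ => ⟨q1.trans (by gcongr), q2.trans (by gcongr), q3.trans ?_, q4.trans ?_, q5⟩⟩
    · calc 5 * (κ * μ₁ ^ 2) * u x ^ 2 * |T| ≤ 5 * (κ * μ₁ ^ 2) * u x ^ 2 * (C * u x ^ 8) := by gcongr
        _ = _ := by ring
    · calc 256 * (κ * μ₁ ^ 2) * (ν₁ / ν₂) * (u x ^ 2) ^ 2 * |T|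
          ≤ 256 * (κ * μ₁ ^ 2) * (ν₁ / ν₂) * (u x ^ 2) ^ 2 * (C * u x ^ 8) := by gcongr
        _ = _ := by ring
  choose q₁ q₂ q₃ q₄ hq using key
  have hev : ∀ᶠ x in 𝓝[>] (0 : ℝ), x ∈ Set.Ioo (0 : ℝ) ε := Ioo_mem_nhdsGT hε
  have hsq : ∀ (f g : ℝ → ℝ), Tendsto g (𝓝[>] 0) (𝓝 0) → (∀ x ∈ Set.Ioo (0 : ℝ) ε, |f x - 1| ≤ g x) →
      Tendsto f (𝓝[>] 0) (𝓝 1) := by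
    intro f g hg hfg
    rw [tendsto_iff_norm_sub_tendsto_zero]
    refine squeeze_zero' (Eventually.of_forall fun x => norm_nonneg _) ?_ hg
    filter_upwards [hev] with x hx
    exact hfg x hx
  refine ⟨ε, hε, q₁, q₂, q₃, q₄, ?_, ?_, ?_, ?_, ?_⟩
  · refine hsq _ (fun x => 6 * (C * u x ^ 8) + 2 * (Real.sqrt C * u x ^ 1)) ?_ (fun x hx => (hq x hx).1)
    have := ((hpoly C 8 (by norm_num)).const_mul 6).add ((hpoly (Real.sqrt C) 1 (by norm_num)).const_mul 2)
    simpa only [mul_zero, add_zero] using this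
  · refine hsq _ (fun x => C * u x ^ 8 + 2 * (Real.sqrt C * u x ^ 1)) ?_ (fun x hx => (hq x hx).2.1)
    have := (hpoly C 8 (by norm_num)).add ((hpoly (Real.sqrt C) 1 (by norm_num)).const_mul 2)
    simpa only [mul_zero, add_zero] using this
  · refine IsBigO.of_bound (5 * (κ * μ₁ ^ 2) * C) ?_
    filter_upwards [hev] with x hx
    have := (hq x hx).2.2.1
    have hux := hu_pos x hx.1
    rwa [Real.norm_eq_abs, Real.norm_eq_abs, abs_of_pos (by positivity : 0 < u x ^ 10)]
  · refine IsBigO.of_bound (256 * (κ * μ₁ ^ 2) * (ν₁ / ν₂) * C) ?_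
    filter_upwards [hev] with x hx
    have := (hq x hx).2.2.2.1
    have hux := hu_pos x hx.1
    rwa [Real.norm_eq_abs, Real.norm_eq_abs, abs_of_pos (by positivity : 0 < u x ^ 12)]
  · intro x hx
    have hst := (hq x hx).2.2.2.2
    refine ⟨?_, hst⟩
    apply IsLocalMin.fderiv_eq_zero
    rw [eventually_nhdsWithin_iff] at hst
    change ∀ᶠ z in 𝓝 _, _ ≤ _
    filter_upwards [hst] with z hz
    by_cases h : z = (![q₁ x, q₂ x, q₃ x, q₄ x], (0 : Fin 4 → ℝ))
    · rw [h]
    · exact (hz h).le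

end
end

section
/- For the Newtonian three-body problem in ℝ⁴ with any masses m₁, m₂, m₃ > 0, there exists a nonempty open set U ⊆ (ℝ⁴)³ × (ℝ⁴)³ of initial positions (with pairwise distinct position components) and velocities such that every solution of Newton's equations with initial data in U extends to all of ℝ and has uniformly bounded dynamics: for every twice differentiable curve (r₁, r₂, r₃) : I → (ℝ⁴)³ on a maximal interval I ∋ 0 solving m_i r̈_i(t) = Σ_{j≠i} m_i m_j (r_j(t) − r_i(t))/‖r_j(t) − r_i(t)‖³ for i = 1,2,3 and with (r₁(0), r₂(0), r₃(0), ṙ₁(0), ṙ₂(0), ṙ₃(0)) ∈ U, one has I = ℝ, inf over t ∈ ℝ of the minimum of the mutual distances ‖r_i(t) − r_j(t)‖ (i ≠ j) is positive, and sup over t ∈ ℝ of the maximum of the mutual distances ‖r_i(t) − r_j(t)‖ is finite. In particular U contains no initial condition whose orbit is unbounded in the mutual distances. -/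
noncomputable section

/-- Configuration space: positions in `ℝ⁴`. -/
abbrev E4 := EuclideanSpace ℝ (Fin 4)

/-- `r` solves Newton's equations of the three-body problem in `ℝ⁴` with masses `m`
on the set `I`: positions are pairwise distinct and
`m_i r̈_i = Σ_{j≠i} m_i m_j (r_j − r_i)/‖r_j − r_i‖³`. -/
def SolvesOn (m : Fin 3 → ℝ) (r : Fin 3 → ℝ → E4) (I : Set ℝ) : Prop :=
  ∀ t ∈ I, (∀ i j, i ≠ j → r i t ≠ r j t) ∧
    ∀ i, HasDerivAt (r i) (deriv (r i) t) t ∧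
      HasDerivAt (deriv (r i))
        ((m i)⁻¹ • ∑ j ∈ Finset.univ.erase i,
          (m i * m j / ‖r j t - r i t‖ ^ 3) • (r j t - r i t)) t

/-- The wedge `r ∧ v` as an antisymmetric endomorphism of `ℝ⁴`. -/
def wedge (r v : E4) : E4 →L[ℝ] E4 :=
  (innerSL ℝ v).smulRight r - (innerSL ℝ r).smulRight v

lemma wedge_apply (r v x : E4) : wedge r v x = inner ℝ v x • r - inner ℝ r x • v := by
  simp [wedge]

/-- Total mass times the angular momentum with respect to the centre of mass. -/
def Lam (ma mb mc : ℝ) (ra rb rc va vb vc : E4) : E4 →L[ℝ] E4 :=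
  (ma * mb) • wedge (ra - rb) (va - vb) + (mb * mc) • wedge (rb - rc) (vb - vc)
    + (mc * ma) • wedge (rc - ra) (vc - va)

/-- The energy. -/
def En (ma mb mc : ℝ) (ra rb rc va vb vc : E4) : ℝ :=
  1 / 2 * ma * ‖va‖ ^ 2 + 1 / 2 * mb * ‖vb‖ ^ 2 + 1 / 2 * mc * ‖vc‖ ^ 2
    - ma * mb / ‖ra - rb‖ - mb * mc / ‖rb - rc‖ - mc * ma / ‖rc - ra‖

lemma Lam_rot (ma mb mc : ℝ) (ra rb rc va vb vc : E4) :
    Lam mb mc ma rb rc ra vb vc va = Lam ma mb mc ra rb rc va vb vc := by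
  unfold Lam; abel

lemma En_rot (ma mb mc : ℝ) (ra rb rc va vb vc : E4) :
    En mb mc ma rb rc ra vb vc va = En ma mb mc ra rb rc va vb vc := by
  unfold En; ring

lemma wedge_norm_le (r v x : E4) : ‖wedge r v x‖ ≤ ‖r‖ * ‖v‖ * ‖x‖ := by
  rw [wedge_apply]
  by_cases hr : r = 0
  · subst hr; simp
  have hr0 : 0 < ‖r‖ := norm_pos_iff.mpr hr
  set α : ℝ := inner ℝ r v / ‖r‖ ^ 2 with hα
  set w : E4 := v - α • r with hw
  have hrw : inner ℝ r w = 0 := by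
    rw [hw, inner_sub_right, inner_smul_right, real_inner_self_eq_norm_sq, hα]
    field_simp; ring
  have hv : v = w + α • r := by rw [hw]; abel
  have hwr : inner ℝ w r = 0 := by rw [real_inner_comm]; exact hrw
  have hvn : ‖w‖ ^ 2 ≤ ‖v‖ ^ 2 := by
    rw [hv, ← real_inner_self_eq_norm_sq (w + α • r)]
    simp only [inner_add_left, inner_add_right, inner_smul_left, inner_smul_right, hwr, hrw,
      real_inner_self_eq_norm_sq]
    simp only [conj_trivial]
    nlinarith [sq_nonneg (α * ‖r‖)]
  have e1 : inner ℝ v x • r - inner ℝ r x • v = inner ℝ w x • r - inner ℝ r x • w := by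
    rw [hv, inner_add_left, inner_smul_left]
    simp only [conj_trivial]
    module
  rw [e1]
  set p : ℝ := inner ℝ w x with hp
  set q : ℝ := inner ℝ r x with hq
  have hxw : inner ℝ x w = p := by rw [hp, real_inner_comm]
  have hxr : inner ℝ x r = q := by rw [hq, real_inner_comm]
  have e2 : ‖p • r - q • w‖ ^ 2 = p ^ 2 * ‖r‖ ^ 2 + q ^ 2 * ‖w‖ ^ 2 := by
    rw [← real_inner_self_eq_norm_sq (p • r - q • w)]
    simp only [inner_sub_left, inner_sub_right, inner_smul_left, inner_smul_right, hwr, hrw,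
      real_inner_self_eq_norm_sq]
    simp only [conj_trivial]
    ring
  have e3 : p ^ 2 * ‖r‖ ^ 2 + q ^ 2 * ‖w‖ ^ 2 ≤ ‖r‖ ^ 2 * ‖w‖ ^ 2 * ‖x‖ ^ 2 := by
    by_cases hw0 : w = 0
    · simp [hp, hw0]
    have hwp : 0 < ‖w‖ := norm_pos_iff.mpr hw0
    have h0 : 0 ≤ ‖(‖r‖ ^ 2 * ‖w‖ ^ 2) • x - (q * ‖w‖ ^ 2) • r - (p * ‖r‖ ^ 2) • w‖ ^ 2 := by
      positivity
    rw [← real_inner_self_eq_norm_sq] at h0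
    simp only [inner_sub_left, inner_sub_right, inner_smul_left, inner_smul_right, hwr, hrw,
      real_inner_self_eq_norm_sq, hxw, hxr, ← hp, ← hq] at h0
    simp only [conj_trivial] at h0
    have h1 : 0 ≤ (‖r‖ ^ 2 * ‖w‖ ^ 2) *
        (‖r‖ ^ 2 * ‖w‖ ^ 2 * ‖x‖ ^ 2 - (p ^ 2 * ‖r‖ ^ 2 + q ^ 2 * ‖w‖ ^ 2)) := by
      linarith
    have h2 : 0 < ‖r‖ ^ 2 * ‖w‖ ^ 2 := by positivity
    have := nonneg_of_mul_nonneg_right h1 h2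
    linarith
  apply le_of_sq_le_sq _ (by positivity)
  rw [e2, mul_pow, mul_pow]
  refine e3.trans ?_
  gcongr

lemma exists_orth (u v : E4) : ∃ x : E4, x ≠ 0 ∧ inner ℝ u x = 0 ∧ inner ℝ v x = 0 := by
  let f : E4 →ₗ[ℝ] (Fin 2 → ℝ) :=
    LinearMap.pi ![(innerSL ℝ u).toLinearMap, (innerSL ℝ v).toLinearMap]
  have hker : LinearMap.ker f ≠ ⊥ := by
    apply LinearMap.ker_ne_bot_of_finrank_lt
    simp
  obtain ⟨x, hx, hx0⟩ := Submodule.exists_mem_ne_zero_of_ne_bot hker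
  refine ⟨x, hx0, ?_, ?_⟩
  · have := congrFun (LinearMap.mem_ker.mp hx) 0
    simpa [f] using this
  · have := congrFun (LinearMap.mem_ker.mp hx) 1
    simpa [f] using this

lemma pair_bound {ma mb mc l : ℝ} (ha : 0 < ma) (hb : 0 < mb) (hc : 0 < mc)
    {ra rb rc va vb vc : E4}
    (h : ∀ x, (ma + mb + mc) * l * ‖x‖ ≤ ‖Lam ma mb mc ra rb rc va vb vc x‖) :
    l * (ma + mb) ≤ ma * mb * ‖ra - rb‖ * ‖va - vb‖ := by
  obtain ⟨x, hx0, h1, h2⟩ := exists_orth ((ma + mb) • rc - ma • ra - mb • rb)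
    ((ma + mb) • vc - ma • va - mb • vb)
  have hx : 0 < ‖x‖ := norm_pos_iff.mpr hx0
  have key : (ma + mb) • Lam ma mb mc ra rb rc va vb vc x
      = ((ma + mb + mc) * (ma * mb)) • wedge (ra - rb) (va - vb) x := by
    simp only [Lam, add_apply, smul_apply, wedge_apply]
    have t1 : inner ℝ rc x = (ma * inner ℝ ra x + mb * inner ℝ rb x) / (ma + mb) := by
      simp only [inner_sub_left, inner_smul_left, conj_trivial] at h1
      field_simp; linarith
    have t2 : inner ℝ vc x = (ma * inner ℝ va x + mb * inner ℝ vb x) / (ma + mb) := by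
      simp only [inner_sub_left, inner_smul_left, conj_trivial] at h2
      field_simp; linarith
    simp only [inner_sub_left, t1, t2]
    match_scalars <;> field_simp <;> ring
  have h3 := h x
  have h4 := congrArg norm key
  rw [norm_smul, norm_smul, Real.norm_of_nonneg (by positivity),
    Real.norm_of_nonneg (by positivity)] at h4
  have h5 := wedge_norm_le (ra - rb) (va - vb) x
  have h6 : (ma + mb) * ((ma + mb + mc) * l * ‖x‖) ≤
      ((ma + mb + mc) * (ma * mb)) * (‖ra - rb‖ * ‖va - vb‖ * ‖x‖) := by
    calc _ ≤ (ma + mb) * ‖Lam ma mb mc ra rb rc va vb vc x‖ := by gcongr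
      _ = _ := h4
      _ ≤ _ := by gcongr
  have h7 : 0 < (ma + mb + mc) * ‖x‖ := by positivity
  refine le_of_mul_le_mul_left ?_ h7
  linarith

lemma kin_bound {ma mb : ℝ} (ha : 0 < ma) (hb : 0 < mb) (va vb : E4) :
    ma * mb / (ma + mb) * ‖va - vb‖ ^ 2 ≤ ma * ‖va‖ ^ 2 + mb * ‖vb‖ ^ 2 := by
  have h0 : 0 ≤ ‖ma • va + mb • vb‖ ^ 2 := by positivity
  rw [← real_inner_self_eq_norm_sq] at h0 ⊢
  simp only [inner_sub_left, inner_sub_right, inner_add_left, inner_add_right,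
    inner_smul_left, inner_smul_right, conj_trivial, real_inner_self_eq_norm_sq] at h0 ⊢
  rw [real_inner_comm va vb] at h0 ⊢
  rw [div_mul_eq_mul_div, div_le_iff₀ (by positivity)]
  nlinarith

lemma core_bound {ma mb mc l hh G gap : ℝ} (ha : 0 < ma) (hb : 0 < mb) (hc : 0 < mc)
    (hl : 0 < l) {ra rb rc va vb vc : E4}
    (h : ∀ x, (ma + mb + mc) * l * ‖x‖ ≤ ‖Lam ma mb mc ra rb rc va vb vc x‖)
    (hE : En ma mb mc ra rb rc va vb vc ≤ hh) (hneg : hh ≤ 0)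
    (hG : ma ^ 3 * mb ^ 3 ≤ G * (ma + mb)) (hgap : 0 < gap)
    (hhG : hh ≤ - G / (2 * l ^ 2) - gap)
    (hd : 0 < ‖ra - rb‖) (hd1 : ‖ra - rb‖ ≤ ‖rb - rc‖) (hd2 : ‖ra - rb‖ ≤ ‖rc - ra‖) :
    l ^ 2 / (2 * (ma + mb + mc) * (ma * mb + mb * mc + mc * ma)) ≤ ‖ra - rb‖ ∧
    ‖ra - rb‖ ≤ 2 * (ma * mb + mb * mc + mc * ma) / gap ∧
    ‖rb - rc‖ ≤ 2 * (ma * mb + mb * mc + mc * ma) / gap ∧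
    ‖rc - ra‖ ≤ 2 * (ma * mb + mb * mc + mc * ma) / gap := by
  have hp := pair_bound ha hb hc h
  have hk := kin_bound ha hb va vb
  have tri1 : ‖rb - rc‖ ≤ ‖ra - rb‖ + ‖rc - ra‖ := by
    have : rb - rc = -((ra - rb) + (rc - ra)) := by abel
    rw [this, norm_neg]; exact norm_add_le _ _
  have tri2 : ‖rc - ra‖ ≤ ‖ra - rb‖ + ‖rb - rc‖ := by
    have : rc - ra = -((ra - rb) + (rb - rc)) := by abel
    rw [this, norm_neg]; exact norm_add_le _ _
  unfold En at hE
  set d := ‖ra - rb‖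
  set e := ‖rb - rc‖
  set f := ‖rc - ra‖
  set v := ‖va - vb‖
  set S := ma * mb + mb * mc + mc * ma with hS
  have hSpos : 0 < S := by positivity
  set μ := ma * mb / (ma + mb) with hμ
  have hμpos : 0 < μ := by positivity
  have he : 0 < e := lt_of_lt_of_le hd hd1
  have hf : 0 < f := lt_of_lt_of_le hd hd2
  have hp' : l ≤ μ * d * v := by
    rw [hμ, div_mul_eq_mul_div, div_mul_eq_mul_div, le_div_iff₀ (by positivity)]; exact hp
  have hk2 : l ^ 2 / (2 * μ * d ^ 2) ≤ 1 / 2 * μ * v ^ 2 := by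
    rw [div_le_iff₀ (by positivity)]
    have : l ^ 2 ≤ (μ * d * v) ^ 2 := by gcongr
    nlinarith
  have hvc : 0 ≤ 1 / 2 * mc * ‖vc‖ ^ 2 := by positivity
  have hE2 : l ^ 2 / (2 * μ * d ^ 2) - ma * mb / d - mb * mc / e - mc * ma / f ≤ hh := by
    linarith
  have hμM : μ ≤ ma + mb + mc := by
    rw [hμ, div_le_iff₀ (by positivity)]
    nlinarith [mul_pos ha hb, mul_pos ha hc, mul_pos hb hc, sq_nonneg ma, sq_nonneg mb]
  have hG' : μ * (ma * mb) ^ 2 ≤ G := by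
    rw [hμ, div_mul_eq_mul_div, div_le_iff₀ (by positivity)]; linarith
  constructor
  · have i1 : mb * mc / e ≤ mb * mc / d := by gcongr
    have i2 : mc * ma / f ≤ mc * ma / d := by gcongr
    have i3 : l ^ 2 / (2 * μ * d ^ 2) ≤ S / d := by
      have : S / d = ma * mb / d + mb * mc / d + mc * ma / d := by rw [hS]; ring
      linarith
    rw [div_le_iff₀ (by positivity)] at i3 ⊢
    have i4 : S / d * (2 * μ * d ^ 2) = d * (2 * μ * S) := by field_simp
    rw [i4] at i3
    refine i3.trans ?_
    gcongr
  · have i5 : - G / (2 * l ^ 2) ≤ l ^ 2 / (2 * μ * d ^ 2) - ma * mb / d := by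
      have j1 : - (μ * (ma * mb) ^ 2) / (2 * l ^ 2) ≤ l ^ 2 / (2 * μ * d ^ 2) - ma * mb / d := by
        have : l ^ 2 / (2 * μ * d ^ 2) - ma * mb / d - (- (μ * (ma * mb) ^ 2) / (2 * l ^ 2))
          = (l / d - μ * (ma * mb) / l) ^ 2 / (2 * μ) := by
          field_simp; ring
        have : 0 ≤ (l / d - μ * (ma * mb) / l) ^ 2 / (2 * μ) := by positivity
        linarith
      refine le_trans ?_ j1
      gcongr
    have i6 : gap ≤ mb * mc / e + mc * ma / f := by linarith
    have hmab : 0 < ma * mb := by positivity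
    have key : ∀ g, 0 < g → g ≤ e → g ≤ f → g ≤ S / gap := by
      intro g hg h1 h2
      have j1 : mb * mc / e ≤ mb * mc / g := by gcongr
      have j2 : mc * ma / f ≤ mc * ma / g := by gcongr
      have j3 : gap ≤ S / g := by
        have : S / g = ma * mb / g + (mb * mc / g + mc * ma / g) := by rw [hS]; ring
        have : 0 < ma * mb / g := by positivity
        linarith
      rw [le_div_iff₀ hg] at j3
      rw [le_div_iff₀ hgap]; linarith
    have k1 := key (min e f) (lt_min he hf) (min_le_left _ _) (min_le_right _ _)
    have k2 : 2 * S / gap = 2 * (S / gap) := by ring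
    rw [k2]
    rcases le_total e f with hef | hef
    · rw [min_eq_left hef] at k1
      refine ⟨?_, ?_, ?_⟩ <;> linarith
    · rw [min_eq_right hef] at k1
      refine ⟨?_, ?_, ?_⟩ <;> linarith

lemma all_bound {ma mb mc l hh G gap : ℝ} (ha : 0 < ma) (hb : 0 < mb) (hc : 0 < mc)
    (hl : 0 < l) {ra rb rc va vb vc : E4}
    (h : ∀ x, (ma + mb + mc) * l * ‖x‖ ≤ ‖Lam ma mb mc ra rb rc va vb vc x‖)
    (hE : En ma mb mc ra rb rc va vb vc ≤ hh) (hneg : hh ≤ 0)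
    (hG1 : ma ^ 3 * mb ^ 3 ≤ G * (ma + mb)) (hG2 : mb ^ 3 * mc ^ 3 ≤ G * (mb + mc))
    (hG3 : mc ^ 3 * ma ^ 3 ≤ G * (mc + ma)) (hgap : 0 < gap)
    (hhG : hh ≤ - G / (2 * l ^ 2) - gap)
    (hab : ra ≠ rb) (hbc : rb ≠ rc) (hca : rc ≠ ra)
    {δ R : ℝ} (hδ : δ = l ^ 2 / (2 * (ma + mb + mc) * (ma * mb + mb * mc + mc * ma)))
    (hR : R = 2 * (ma * mb + mb * mc + mc * ma) / gap) :
    (δ ≤ ‖ra - rb‖ ∧ δ ≤ ‖rb - rc‖ ∧ δ ≤ ‖rc - ra‖) ∧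
    ‖ra - rb‖ ≤ R ∧ ‖rb - rc‖ ≤ R ∧ ‖rc - ra‖ ≤ R := by
  have pab : 0 < ‖ra - rb‖ := norm_pos_iff.mpr (sub_ne_zero.mpr hab)
  have pbc : 0 < ‖rb - rc‖ := norm_pos_iff.mpr (sub_ne_zero.mpr hbc)
  have pca : 0 < ‖rc - ra‖ := norm_pos_iff.mpr (sub_ne_zero.mpr hca)
  have E2 : En mb mc ma rb rc ra vb vc va ≤ hh := by rw [En_rot]; exact hE
  have E3 : En mc ma mb rc ra rb vc va vb ≤ hh := by rw [En_rot, En_rot]; exact hE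
  have L2 : ∀ x, (mb + mc + ma) * l * ‖x‖ ≤ ‖Lam mb mc ma rb rc ra vb vc va x‖ := by
    intro x; rw [Lam_rot, show mb + mc + ma = ma + mb + mc by ring]; exact h x
  have L3 : ∀ x, (mc + ma + mb) * l * ‖x‖ ≤ ‖Lam mc ma mb rc ra rb vc va vb x‖ := by
    intro x; rw [Lam_rot, Lam_rot, show mc + ma + mb = ma + mb + mc by ring]; exact h x
  have caseA : ‖ra - rb‖ ≤ ‖rb - rc‖ → ‖ra - rb‖ ≤ ‖rc - ra‖ → _ :=
    core_bound ha hb hc hl h hE hneg hG1 hgap hhG pab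
  have caseB : ‖rb - rc‖ ≤ ‖rc - ra‖ → ‖rb - rc‖ ≤ ‖ra - rb‖ → _ :=
    core_bound hb hc ha hl L2 E2 hneg hG2 hgap hhG pbc
  have caseC : ‖rc - ra‖ ≤ ‖ra - rb‖ → ‖rc - ra‖ ≤ ‖rb - rc‖ → _ :=
    core_bound hc ha hb hl L3 E3 hneg hG3 hgap hhG pca
  rw [show mb + mc + ma = ma + mb + mc by ring,
    show mb * mc + mc * ma + ma * mb = ma * mb + mb * mc + mc * ma by ring, ← hδ, ← hR] at caseB
  rw [show mc + ma + mb = ma + mb + mc by ring,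
    show mc * ma + ma * mb + mb * mc = ma * mb + mb * mc + mc * ma by ring, ← hδ, ← hR] at caseC
  rw [← hδ, ← hR] at caseA
  rcases le_total ‖ra - rb‖ ‖rb - rc‖ with h1 | h1
  · rcases le_total ‖ra - rb‖ ‖rc - ra‖ with h2 | h2
    · obtain ⟨x1, x2, x3, x4⟩ := caseA h1 h2
      exact ⟨⟨x1, x1.trans h1, x1.trans h2⟩, x2, x3, x4⟩
    · obtain ⟨x1, x2, x3, x4⟩ := caseC h2 (h2.trans h1)
      exact ⟨⟨x1.trans h2, x1.trans (h2.trans h1), x1⟩, x3, x4, x2⟩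
  · rcases le_total ‖rb - rc‖ ‖rc - ra‖ with h2 | h2
    · obtain ⟨x1, x2, x3, x4⟩ := caseB h2 h1
      exact ⟨⟨x1.trans h1, x1, x1.trans h2⟩, x4, x2, x3⟩
    · obtain ⟨x1, x2, x3, x4⟩ := caseC (h2.trans h1) h2
      exact ⟨⟨x1.trans (h2.trans h1), x1.trans h2, x1⟩, x3, x4, x2⟩


lemma exists_data {ma mb mc : ℝ} (ha : 0 < ma) (hb : 0 < mb) (hc : 0 < mc) :
    ∃ (l : ℝ) (ra rb rc va vb vc : E4), 0 < l ∧ ra ≠ rb ∧ rb ≠ rc ∧ rc ≠ ra ∧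
      (∀ x, (ma + mb + mc) * l * ‖x‖ ≤ ‖Lam ma mb mc ra rb rc va vb vc x‖) ∧
      (ma + mb) * En ma mb mc ra rb rc va vb vc < - (ma ^ 3 * mb ^ 3) / (2 * l ^ 2) := by
  set s := ma + mb with hs
  have hspos : 0 < s := by positivity
  set w := Real.sqrt s with hw
  have hwpos : 0 < w := Real.sqrt_pos.mpr hspos
  have hw2 : w ^ 2 = s := Real.sq_sqrt hspos.le
  set l := ma * mb / s * w with hl
  have hlpos : 0 < l := by positivity
  set ν := mc * s / (s + mc) with hν
  have hνpos : 0 < ν := by positivity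
  set R := 1 + l ^ 2 / (ν ^ 2 * s) with hR
  have hR1 : 1 ≤ R := by rw [hR]; have : 0 ≤ l ^ 2 / (ν ^ 2 * s) := by positivity
                         linarith
  have hRpos : 0 < R := by linarith
  set W := l / (ν * R) with hW
  let e0 : E4 := !₂[1, 0, 0, 0]
  let e1 : E4 := !₂[0, 1, 0, 0]
  let e2 : E4 := !₂[0, 0, 1, 0]
  let e3 : E4 := !₂[0, 0, 0, 1]
  have nsq : ∀ x : E4, ‖x‖ ^ 2 = x 0 ^ 2 + x 1 ^ 2 + x 2 ^ 2 + x 3 ^ 2 := by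
    intro x
    rw [EuclideanSpace.norm_sq_eq, Fin.sum_univ_four]; simp
  have hms : mb / s + ma / s = 1 := by rw [hs]; field_simp; ring
  have hab : (mb / s) • e0 - (-(ma / s)) • e0 = e0 := by
    rw [← sub_smul, sub_neg_eq_add, hms, one_smul]
  have hvab : (mb / s * w) • e1 - (-(ma / s * w)) • e1 = w • e1 := by
    rw [← sub_smul, sub_neg_eq_add, ← add_mul, hms, one_mul]
  have ne0 : ‖e0‖ = 1 := by
    rw [← sq_eq_sq₀ (norm_nonneg _) zero_le_one, nsq]; simp [e0]
  refine ⟨l, (mb / s) • e0, (-(ma / s)) • e0, R • e2, (mb / s * w) • e1, (-(ma / s * w)) • e1,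
    W • e3, hlpos, ?_, ?_, ?_, ?_, ?_⟩
  · rw [← sub_ne_zero, hab, ← norm_pos_iff, ne0]; norm_num
  · intro h
    have := congrArg (fun x : E4 => x 2) h
    simp [e0, e2] at this
    linarith
  · intro h
    have := congrArg (fun x : E4 => x 2) h
    simp [e0, e2] at this
    linarith
  · intro x
    have key : Lam ma mb mc ((mb / s) • e0) ((-(ma / s)) • e0) (R • e2) ((mb / s * w) • e1)
        ((-(ma / s * w)) • e1) (W • e3) x =
        ((s + mc) * l) • (!₂[x 1, - x 0, x 3, - x 2] : E4) := by
      ext i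
      have hRW : ν * R * W = l := by rw [hW]; field_simp
      have hRW' : mc * s * (R * W) = l * (s + mc) := by
        rw [hν] at hRW; field_simp at hRW; linarith
      simp only [Lam, add_apply, smul_apply, wedge_apply,
        PiLp.inner_apply, Fin.sum_univ_four]
      fin_cases i <;> simp [e0, e1, e2, e3]
      · rw [hl]; clear_value R W w l; field_simp; rw [hs]; ring
      · rw [hl]; clear_value R W w l; field_simp; rw [hs]; ring
      · linear_combination (x 3) * hRW' - mc * x 3 * W * R * hs
      · linear_combination -(x 2) * hRW' + mc * x 2 * W * R * hs
    rw [key, norm_smul, Real.norm_of_nonneg (by positivity)]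
    apply le_of_eq
    congr 1
    rw [← sq_eq_sq₀ (norm_nonneg _) (norm_nonneg _), nsq, nsq]
    simp; ring
  · have hva : ‖(mb / s * w) • e1‖ ^ 2 = mb ^ 2 / s := by
      rw [nsq]; simp [e1]
      rw [mul_pow, hw2]; field_simp
    have hvb : ‖(-(ma / s * w)) • e1‖ ^ 2 = ma ^ 2 / s := by
      rw [nsq]; simp [e1]
      rw [mul_pow, hw2]; field_simp
    have hvc : ‖W • e3‖ ^ 2 = W ^ 2 := by
      rw [nsq]; simp [e3]
    have hl2 : l ^ 2 = ma ^ 2 * mb ^ 2 / s := by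
      rw [hl, mul_pow, hw2]; field_simp
    have nR : ‖R • e2‖ = R := by
      rw [← sq_eq_sq₀ (norm_nonneg _) hRpos.le, nsq]; simp [e2]
    have nb : ‖(-(ma / s)) • e0‖ ≤ 1 := by
      rw [norm_smul, ne0, mul_one, norm_neg, Real.norm_of_nonneg (by positivity)]
      have : 0 ≤ mb / s := by positivity
      linarith
    have na : ‖(mb / s) • e0‖ ≤ 1 := by
      rw [norm_smul, ne0, mul_one, Real.norm_of_nonneg (by positivity)]
      have : 0 ≤ ma / s := by positivity
      linarith
    have dpos1 : 0 < ‖(-(ma / s)) • e0 - R • e2‖ := by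
      rw [norm_pos_iff]; intro h
      have := congrArg (fun x : E4 => x 2) h
      simp [e0, e2] at this
      linarith
    have dpos2 : 0 < ‖R • e2 - (mb / s) • e0‖ := by
      rw [norm_pos_iff]; intro h
      have := congrArg (fun x : E4 => x 2) h
      simp [e0, e2] at this
      linarith
    have d1 : ‖(-(ma / s)) • e0 - R • e2‖ ≤ 2 * R := by
      refine (norm_sub_le _ _).trans ?_
      linarith
    have d2 : ‖R • e2 - (mb / s) • e0‖ ≤ 2 * R := by
      refine (norm_sub_le _ _).trans ?_
      linarith
    have q1 : mb * mc / (2 * R) ≤ mb * mc / ‖(-(ma / s)) • e0 - R • e2‖ := by gcongr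
    have q2 : mc * ma / (2 * R) ≤ mc * ma / ‖R • e2 - (mb / s) • e0‖ := by gcongr
    have q3 : 1 / 2 * mc * W ^ 2 < mb * mc / (2 * R) + mc * ma / (2 * R) := by
      have z1 : mb * mc / (2 * R) + mc * ma / (2 * R) = mc * s / (2 * R) := by rw [hs]; ring
      rw [z1, hW, div_pow, lt_div_iff₀ (by positivity)]
      have z2 : 1 / 2 * mc * (l ^ 2 / (ν * R) ^ 2) * (2 * R) = mc * (l ^ 2 / ν ^ 2 / R) := by
        field_simp
      rw [z2]
      gcongr
      rw [div_lt_iff₀ hRpos, hR]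
      have : s * (1 + l ^ 2 / (ν ^ 2 * s)) = s + l ^ 2 / ν ^ 2 := by field_simp
      rw [this]; linarith
    have z3 : - (ma ^ 3 * mb ^ 3) / (2 * l ^ 2) = s * (- (ma * mb) / 2) := by
      rw [hl2]; field_simp
    rw [z3]
    unfold En
    rw [hab, ne0, hva, hvb, hvc]
    gcongr
    have z4 : 1 / 2 * ma * (mb ^ 2 / s) + 1 / 2 * mb * (ma ^ 2 / s) = ma * mb / 2 := by
      rw [hs]; field_simp; ring
    linarith

/-- Phase space. -/
abbrev PS := (Fin 3 → E4) × (Fin 3 → E4)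

/-- The Newtonian acceleration of body `i`. -/
def acc (m : Fin 3 → ℝ) (q : Fin 3 → E4) (i : Fin 3) : E4 :=
  (m i)⁻¹ • ∑ j ∈ Finset.univ.erase i, (m i * m j / ‖q j - q i‖ ^ 3) • (q j - q i)

/-- The vector field on phase space. -/
def vf (m : Fin 3 → ℝ) (z : PS) : PS := (z.2, acc m z.1)

/-- Configurations with mutual distances at least `d`. -/
def SepSet (d : ℝ) : Set PS := {z | ∀ i j, i ≠ j → d ≤ ‖z.1 i - z.1 j‖}

lemma ker_lip {d : ℝ} (hd : 0 < d) {x y : E4} (hx : d ≤ ‖x‖) (hy : d ≤ ‖y‖) :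
    ‖(1 / ‖x‖ ^ 3) • x - (1 / ‖y‖ ^ 3) • y‖ ≤ 4 / d ^ 3 * ‖x - y‖ := by
  have hx0 : 0 < ‖x‖ := hd.trans_le hx
  have hy0 : 0 < ‖y‖ := hd.trans_le hy
  have e : (1 / ‖x‖ ^ 3) • x - (1 / ‖y‖ ^ 3) • y
      = (1 / ‖x‖ ^ 3) • (x - y) + (1 / ‖x‖ ^ 3 - 1 / ‖y‖ ^ 3) • y := by module
  have h1 : ‖(1 / ‖x‖ ^ 3) • (x - y)‖ ≤ 1 / d ^ 3 * ‖x - y‖ := by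
    rw [norm_smul, Real.norm_of_nonneg (by positivity)]
    gcongr
  have h2 : ‖(1 / ‖x‖ ^ 3 - 1 / ‖y‖ ^ 3) • y‖ ≤ 3 / d ^ 3 * ‖x - y‖ := by
    rw [norm_smul, Real.norm_eq_abs]
    have e2 : 1 / ‖x‖ ^ 3 - 1 / ‖y‖ ^ 3 = (‖y‖ - ‖x‖) *
        (1 / (‖x‖ * ‖y‖ ^ 3) + 1 / (‖x‖ ^ 2 * ‖y‖ ^ 2) + 1 / (‖x‖ ^ 3 * ‖y‖)) := by
      field_simp; ring
    rw [e2, abs_mul, abs_of_pos (a := 1 / (‖x‖ * ‖y‖ ^ 3) + 1 / (‖x‖ ^ 2 * ‖y‖ ^ 2)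
      + 1 / (‖x‖ ^ 3 * ‖y‖)) (by positivity), mul_assoc]
    have e3 : (1 / (‖x‖ * ‖y‖ ^ 3) + 1 / (‖x‖ ^ 2 * ‖y‖ ^ 2) + 1 / (‖x‖ ^ 3 * ‖y‖)) * ‖y‖
        = 1 / (‖x‖ * ‖y‖ ^ 2) + 1 / (‖x‖ ^ 2 * ‖y‖) + 1 / (‖x‖ ^ 3) := by
      field_simp
    rw [e3]
    have e4 : 1 / (‖x‖ * ‖y‖ ^ 2) + 1 / (‖x‖ ^ 2 * ‖y‖) + 1 / (‖x‖ ^ 3) ≤ 3 / d ^ 3 := by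
      have a1 : 1 / (‖x‖ * ‖y‖ ^ 2) ≤ 1 / (d * d ^ 2) := by gcongr
      have a2 : 1 / (‖x‖ ^ 2 * ‖y‖) ≤ 1 / (d ^ 2 * d) := by gcongr
      have a3 : 1 / (‖x‖ ^ 3) ≤ 1 / d ^ 3 := by gcongr
      have : 3 / d ^ 3 = 1 / (d * d ^ 2) + 1 / (d ^ 2 * d) + 1 / d ^ 3 := by ring
      linarith
    have e5 : |‖y‖ - ‖x‖| ≤ ‖x - y‖ := by
      rw [abs_sub_comm]; exact abs_norm_sub_norm_le x y
    calc _ ≤ ‖x - y‖ * (3 / d ^ 3) := by gcongr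
      _ = _ := by ring
  rw [e]
  refine (norm_add_le _ _).trans ?_
  have : 4 / d ^ 3 * ‖x - y‖ = 1 / d ^ 3 * ‖x - y‖ + 3 / d ^ 3 * ‖x - y‖ := by ring
  linarith

lemma acc_eq {m : Fin 3 → ℝ} (hm : ∀ i, 0 < m i) (q : Fin 3 → E4) (i : Fin 3) :
    acc m q i = ∑ j ∈ Finset.univ.erase i, m j • ((1 / ‖q j - q i‖ ^ 3) • (q j - q i)) := by
  unfold acc
  rw [Finset.smul_sum]
  refine Finset.sum_congr rfl fun j _ => ?_
  rw [smul_smul, smul_smul]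
  congr 1
  have := (hm i).ne'
  field_simp

lemma acc_lip {m : Fin 3 → ℝ} (hm : ∀ i, 0 < m i) {d : ℝ} (hd : 0 < d) {z z' : PS}
    (hz : z ∈ SepSet d) (hz' : z' ∈ SepSet d) :
    ‖acc m z.1 - acc m z'.1‖ ≤ (∑ j, m j) * (8 / d ^ 3) * ‖z - z'‖ := by
  have hM : 0 ≤ ∑ j, m j := Finset.sum_nonneg fun j _ => (hm j).le
  rw [pi_norm_le_iff_of_nonneg (by positivity)]
  intro i
  rw [Pi.sub_apply, acc_eq hm, acc_eq hm, ← Finset.sum_sub_distrib]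
  refine (norm_sum_le _ _).trans ?_
  have key : ∀ j ∈ Finset.univ.erase i,
      ‖m j • ((1 / ‖z.1 j - z.1 i‖ ^ 3) • (z.1 j - z.1 i)) -
        m j • ((1 / ‖z'.1 j - z'.1 i‖ ^ 3) • (z'.1 j - z'.1 i))‖ ≤
        m j * (8 / d ^ 3 * ‖z - z'‖) := by
    intro j hj
    have hji : j ≠ i := Finset.ne_of_mem_erase hj
    rw [← smul_sub, norm_smul, Real.norm_of_nonneg (hm j).le]
    have h1 := ker_lip hd (hz j i hji) (hz' j i hji)
    have h2 : ‖(z.1 j - z.1 i) - (z'.1 j - z'.1 i)‖ ≤ 2 * ‖z - z'‖ := by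
      have e : (z.1 j - z.1 i) - (z'.1 j - z'.1 i) = (z - z').1 j - (z - z').1 i := by
        simp only [Prod.fst_sub, Pi.sub_apply]; abel
      rw [e]
      refine (norm_sub_le _ _).trans ?_
      have a1 := norm_le_pi_norm (z - z').1 j
      have a2 := norm_le_pi_norm (z - z').1 i
      have a3 := norm_fst_le (z - z')
      linarith
    have h3 : 4 / d ^ 3 * ‖(z.1 j - z.1 i) - (z'.1 j - z'.1 i)‖ ≤ 4 / d ^ 3 * (2 * ‖z - z'‖) := by
      gcongr
    have h4 : 4 / d ^ 3 * (2 * ‖z - z'‖) = 8 / d ^ 3 * ‖z - z'‖ := by ring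
    exact mul_le_mul_of_nonneg_left (by linarith) (hm j).le
  refine (Finset.sum_le_sum key).trans ?_
  rw [← Finset.sum_mul, mul_assoc]
  refine mul_le_mul_of_nonneg_right ?_ (by positivity)
  exact Finset.sum_le_sum_of_subset_of_nonneg (Finset.erase_subset _ _) fun j _ _ => (hm j).le

lemma acc_bound {m : Fin 3 → ℝ} (hm : ∀ i, 0 < m i) {d : ℝ} (hd : 0 < d) {z : PS}
    (hz : z ∈ SepSet d) : ‖acc m z.1‖ ≤ (∑ j, m j) * (1 / d ^ 2) := by
  have hM : 0 ≤ ∑ j, m j := Finset.sum_nonneg fun j _ => (hm j).le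
  rw [pi_norm_le_iff_of_nonneg (by positivity)]
  intro i
  rw [acc_eq hm]
  refine (norm_sum_le _ _).trans ?_
  have key : ∀ j ∈ Finset.univ.erase i,
      ‖m j • ((1 / ‖z.1 j - z.1 i‖ ^ 3) • (z.1 j - z.1 i))‖ ≤ m j * (1 / d ^ 2) := by
    intro j hj
    have hji : j ≠ i := Finset.ne_of_mem_erase hj
    have h1 := hz j i hji
    have h0 : 0 < ‖z.1 j - z.1 i‖ := hd.trans_le h1
    rw [norm_smul, norm_smul, Real.norm_of_nonneg (hm j).le, Real.norm_of_nonneg (by positivity)]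
    refine mul_le_mul_of_nonneg_left ?_ (hm j).le
    have : 1 / ‖z.1 j - z.1 i‖ ^ 3 * ‖z.1 j - z.1 i‖ = 1 / ‖z.1 j - z.1 i‖ ^ 2 := by
      field_simp
    rw [this]
    gcongr
  refine (Finset.sum_le_sum key).trans ?_
  rw [← Finset.sum_mul]
  refine mul_le_mul_of_nonneg_right ?_ (by positivity)
  exact Finset.sum_le_sum_of_subset_of_nonneg (Finset.erase_subset _ _) fun j _ _ => (hm j).le

lemma vf_lip {m : Fin 3 → ℝ} (hm : ∀ i, 0 < m i) {d : ℝ} (hd : 0 < d) :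
    ∃ K : NNReal, LipschitzOnWith K (vf m) (SepSet d) := by
  have hM : 0 ≤ ∑ j, m j := Finset.sum_nonneg fun j _ => (hm j).le
  have hC : 0 ≤ (∑ j, m j) * (8 / d ^ 3) := by positivity
  refine ⟨⟨1 + (∑ j, m j) * (8 / d ^ 3), by positivity⟩, ?_⟩
  apply LipschitzOnWith.of_dist_le_mul
  intro z hz z' hz'
  rw [dist_eq_norm, dist_eq_norm]
  change ‖vf m z - vf m z'‖ ≤ (1 + (∑ j, m j) * (8 / d ^ 3)) * ‖z - z'‖
  rw [Prod.norm_def]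
  apply max_le
  · have : ‖(vf m z - vf m z').1‖ ≤ ‖z - z'‖ := norm_snd_le (z - z')
    nlinarith [mul_nonneg hC (norm_nonneg (z - z'))]
  · have : ‖(vf m z - vf m z').2‖ ≤ _ := acc_lip hm hd hz hz'
    nlinarith [norm_nonneg (z - z')]

lemma ball_sub_sep {δ : ℝ} {z₀ : PS} (hz : z₀ ∈ SepSet δ) :
    Metric.closedBall z₀ (δ / 4) ⊆ SepSet (δ / 2) := by
  intro z hzb i j hij
  rw [mem_closedBall_iff_norm] at hzb
  have h0 := hz i j hij
  have a1 := norm_le_pi_norm (z - z₀).1 i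
  have a2 := norm_le_pi_norm (z - z₀).1 j
  have a3 := norm_fst_le (z - z₀)
  have e : z₀.1 i - z₀.1 j = (z.1 i - z.1 j) - ((z - z₀).1 i - (z - z₀).1 j) := by
    simp only [Prod.fst_sub, Pi.sub_apply]; abel
  have h1 := norm_sub_le (z.1 i - z.1 j) ((z - z₀).1 i - (z - z₀).1 j)
  have h2 := norm_sub_le ((z - z₀).1 i) ((z - z₀).1 j)
  rw [← e] at h1
  linarith

lemma picard_ball {E : Type*} [NormedAddCommGroup E] [NormedSpace ℝ E] [CompleteSpace E]
    {f : ℝ → E → E} {tmin tmax : ℝ} {t₀ : Set.Icc tmin tmax} {x₀ : E} {a L K : NNReal}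
    (hf : IsPicardLindelof f t₀ x₀ a 0 L K) :
    ∃ α : ℝ → E, α t₀ = x₀ ∧ ∀ t ∈ Set.Icc tmin tmax,
      HasDerivWithinAt α (f t (α t)) (Set.Icc tmin tmax) t ∧ α t ∈ Metric.closedBall x₀ a := by
  have hx : x₀ ∈ Metric.closedBall x₀ ((0 : NNReal) : ℝ) := Metric.mem_closedBall_self le_rfl
  obtain ⟨α, hα⟩ := ODE.FunSpace.exists_isFixedPt_next hf hx
  refine ⟨α.compProj, by rw [ODE.FunSpace.compProj_val, ← hα, ODE.FunSpace.next_apply₀],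
    fun t ht ↦ ⟨?_, α.compProj_mem_closedBall hf.mul_max_le⟩⟩
  apply ODE.hasDerivWithinAt_picard_Icc t₀.2 hf.continuousOn_uncurry
    α.continuous_compProj.continuousOn (fun _ ht' ↦ α.compProj_mem_closedBall hf.mul_max_le)
    x₀ ht |>.congr_of_mem _ ht
  intro t' ht'
  nth_rw 1 [← hα]
  rw [ODE.FunSpace.compProj_of_mem ht', ODE.FunSpace.next_apply]

lemma local_exist {m : Fin 3 → ℝ} (hm : ∀ i, 0 < m i) {δ V : ℝ} (hδ : 0 < δ) (hV : 0 ≤ V) :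
    ∃ τ > 0, ∀ z₀ ∈ SepSet δ, ‖z₀.2‖ ≤ V → ∀ t₀ : ℝ, ∃ α : ℝ → PS, α t₀ = z₀ ∧
      ∀ t ∈ Set.Ioo (t₀ - τ) (t₀ + τ), HasDerivAt α (vf m (α t)) t ∧ α t ∈ SepSet (δ / 2) := by
  have hM : 0 ≤ ∑ j, m j := Finset.sum_nonneg fun j _ => (hm j).le
  obtain ⟨K, hK⟩ := vf_lip hm (half_pos hδ)
  set A := (∑ j, m j) * (1 / (δ / 2) ^ 2) with hA
  have hA0 : 0 ≤ A := by positivity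
  set L := V + δ / 4 + A with hL
  have hL0 : 0 < L := by positivity
  refine ⟨δ / 4 / L, by positivity, ?_⟩
  intro z₀ hz hzV t₀
  set τ := δ / 4 / L with hτ
  have hτ0 : 0 < τ := by positivity
  have ht₀ : t₀ ∈ Set.Icc (t₀ - τ) (t₀ + τ) := ⟨by linarith, by linarith⟩
  have hpl : IsPicardLindelof (fun _ => vf m) (⟨t₀, ht₀⟩ : Set.Icc (t₀ - τ) (t₀ + τ)) z₀
      ⟨δ / 4, by positivity⟩ 0 ⟨L, hL0.le⟩ K := by
    apply IsPicardLindelof.of_time_independent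
    · intro z hzb
      change z ∈ Metric.closedBall z₀ (δ / 4) at hzb
      change ‖vf m z‖ ≤ L
      rw [Prod.norm_def]
      apply max_le
      · change ‖z.2‖ ≤ L
        rw [mem_closedBall_iff_norm] at hzb
        have a3 := norm_snd_le (z - z₀)
        have a4 : z.2 = (z - z₀).2 + z₀.2 := by simp
        have a5 := norm_add_le (z - z₀).2 z₀.2
        rw [← a4] at a5
        linarith
      · have : ‖(vf m z).2‖ ≤ A := acc_bound hm (half_pos hδ) (ball_sub_sep hz hzb)
        linarith
    · exact hK.mono (ball_sub_sep hz)
    · change L * max (t₀ + τ - t₀) (t₀ - (t₀ - τ)) ≤ δ / 4 - 0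
      rw [add_sub_cancel_left, sub_sub_cancel, max_self, hτ]
      apply le_of_eq; field_simp; simp
  obtain ⟨α, hα0, hα⟩ := picard_ball hpl
  refine ⟨α, hα0, fun t ht ↦ ?_⟩
  obtain ⟨h1, h2⟩ := hα t (Set.Ioo_subset_Icc_self ht)
  exact ⟨h1.hasDerivAt (Icc_mem_nhds ht.1 ht.2), ball_sub_sep hz h2⟩

lemma SolvesOn.congr {m : Fin 3 → ℝ} {r r' : Fin 3 → ℝ → E4} {I : Set ℝ} (hI : IsOpen I)
    (h : SolvesOn m r I) (heq : ∀ i, ∀ t ∈ I, r' i t = r i t) : SolvesOn m r' I := by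
  intro t ht
  obtain ⟨h1, h2⟩ := h t ht
  have hev : ∀ i, ∀ s ∈ I, r' i =ᶠ[nhds s] r i := fun i s hs =>
    Filter.eventuallyEq_of_mem (hI.mem_nhds hs) (fun u hu => heq i u hu)
  refine ⟨fun i j hij => ?_, fun i => ⟨?_, ?_⟩⟩
  · rw [heq i t ht, heq j t ht]; exact h1 i j hij
  · rw [(hev i t ht).deriv_eq]
    exact (h2 i).1.congr_of_eventuallyEq (hev i t ht)
  · simp only [heq _ t ht]
    refine (h2 i).2.congr_of_eventuallyEq ?_
    exact (hev i t ht).deriv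

lemma SolvesOn.of_curve {m : Fin 3 → ℝ} {α : ℝ → PS} {I : Set ℝ} (hI : IsOpen I) {d : ℝ}
    (hd : 0 < d) (h : ∀ t ∈ I, HasDerivAt α (vf m (α t)) t ∧ α t ∈ SepSet d) :
    SolvesOn m (fun i t => (α t).1 i) I := by
  have hder : ∀ t ∈ I, ∀ i, HasDerivAt (fun t => (α t).1 i) ((α t).2 i) t := by
    intro t ht i
    have h1 : HasDerivAt (fun t => (α t).1) (α t).2 t := (h t ht).1.fst
    exact (hasDerivAt_pi.mp h1) i
  intro t ht
  refine ⟨fun i j hij heq => ?_, fun i => ⟨?_, ?_⟩⟩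
  · have := (h t ht).2 i j hij
    simp only at heq
    rw [heq, sub_self, norm_zero] at this
    linarith
  · rw [(hder t ht i).deriv]; exact hder t ht i
  · have h1 : HasDerivAt (fun t => (α t).2) (acc m (α t).1) t := (h t ht).1.snd
    refine ((hasDerivAt_pi.mp h1) i).congr_of_eventuallyEq ?_
    exact Filter.eventuallyEq_of_mem (hI.mem_nhds ht) (fun u hu => (hder u hu i).deriv)

lemma SolvesOn.curve {m : Fin 3 → ℝ} {r : Fin 3 → ℝ → E4} {I : Set ℝ}
    (h : SolvesOn m r I) : ∀ t ∈ I, HasDerivAt (fun t => ((fun i => r i t, fun i => deriv (r i) t) : PS))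
      (vf m (fun i => r i t, fun i => deriv (r i) t)) t := by
  intro t ht
  have h2 := (h t ht).2
  exact HasDerivAt.prodMk (hasDerivAt_pi.mpr fun i => (h2 i).1) (hasDerivAt_pi.mpr fun i => (h2 i).2)

lemma extend_univ {m : Fin 3 → ℝ} (hm : ∀ i, 0 < m i) {δ V : ℝ} (hδ : 0 < δ) (hV : 0 ≤ V)
    {r : Fin 3 → ℝ → E4} {I : Set ℝ} (hI : IsOpen I) (hIc : I.OrdConnected) (h0 : (0 : ℝ) ∈ I)
    (hs : SolvesOn m r I)
    (hsep : ∀ t ∈ I, ∀ i j, i ≠ j → δ ≤ ‖r i t - r j t‖)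
    (hvel : ∀ t ∈ I, ∀ i, ‖deriv (r i) t‖ ≤ V)
    (hmax : ∀ (J : Set ℝ), IsOpen J → J.OrdConnected → I ⊆ J →
          ∀ r' : Fin 3 → ℝ → E4, SolvesOn m r' J →
            (∀ i, ∀ t ∈ I, r' i t = r i t) → J = I) : I = Set.univ := by
  obtain ⟨τ, hτ, hloc⟩ := local_exist hm hδ hV
  have step : ∀ t₀ ∈ I, Set.Ioo (t₀ - τ) (t₀ + τ) ⊆ I := by
    intro t₀ ht₀
    set z : ℝ → PS := fun t => (fun i => r i t, fun i => deriv (r i) t) with hz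
    obtain ⟨α, hα0, hα⟩ := hloc (z t₀) (fun i j hij => hsep t₀ ht₀ i j hij)
      ((pi_norm_le_iff_of_nonneg hV).mpr fun i => hvel t₀ ht₀ i) t₀
    have htm : t₀ ∈ Set.Ioo (t₀ - τ) (t₀ + τ) := ⟨by linarith, by linarith⟩
    have hzd := hs.curve
    have hzsep : ∀ t ∈ I, z t ∈ SepSet (δ / 2) := fun t ht i j hij => by
      have := hsep t ht i j hij
      change δ / 2 ≤ ‖r i t - r j t‖
      linarith
    obtain ⟨K, hK⟩ := vf_lip hm (half_pos hδ)
    have huniq : ∀ t ∈ I, t ∈ Set.Ioo (t₀ - τ) (t₀ + τ) → α t = z t := by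
      intro t htI htJ
      rcases le_total t₀ t with hle | hle
      · have sub1 : Set.Icc t₀ t ⊆ I := hIc.out ht₀ htI
        have sub2 : Set.Icc t₀ t ⊆ Set.Ioo (t₀ - τ) (t₀ + τ) := Set.ordConnected_Ioo.out htm htJ
        refine ODE_solution_unique_of_mem_Icc_right (v := fun _ => vf m) (s := fun _ => SepSet (δ / 2))
          (K := K) (fun _ _ => hK)
          (fun u hu => (hα u (sub2 hu)).1.continuousAt.continuousWithinAt)
          (fun u hu => (hα u (sub2 (Set.Ico_subset_Icc_self hu))).1.hasDerivWithinAt)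
          (fun u hu => (hα u (sub2 (Set.Ico_subset_Icc_self hu))).2)
          (fun u hu => (hzd u (sub1 hu)).continuousAt.continuousWithinAt)
          (fun u hu => (hzd u (sub1 (Set.Ico_subset_Icc_self hu))).hasDerivWithinAt)
          (fun u hu => hzsep u (sub1 (Set.Ico_subset_Icc_self hu)))
          hα0 ⟨hle, le_rfl⟩
      · have sub1 : Set.Icc t t₀ ⊆ I := hIc.out htI ht₀
        have sub2 : Set.Icc t t₀ ⊆ Set.Ioo (t₀ - τ) (t₀ + τ) := Set.ordConnected_Ioo.out htJ htm
        refine ODE_solution_unique_of_mem_Icc_left (v := fun _ => vf m) (s := fun _ => SepSet (δ / 2))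
          (K := K) (fun _ _ => hK)
          (fun u hu => (hα u (sub2 hu)).1.continuousAt.continuousWithinAt)
          (fun u hu => (hα u (sub2 (Set.Ioc_subset_Icc_self hu))).1.hasDerivWithinAt)
          (fun u hu => (hα u (sub2 (Set.Ioc_subset_Icc_self hu))).2)
          (fun u hu => (hzd u (sub1 hu)).continuousAt.continuousWithinAt)
          (fun u hu => (hzd u (sub1 (Set.Ioc_subset_Icc_self hu))).hasDerivWithinAt)
          (fun u hu => hzsep u (sub1 (Set.Ioc_subset_Icc_self hu)))
          hα0 ⟨le_rfl, hle⟩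
    classical
    let r' : Fin 3 → ℝ → E4 := fun i t => if t ∈ I then r i t else (α t).1 i
    have hr'I : ∀ i, ∀ t ∈ I, r' i t = r i t := fun i t ht => if_pos ht
    have hr'J : ∀ i, ∀ t ∈ Set.Ioo (t₀ - τ) (t₀ + τ), r' i t = (α t).1 i := by
      intro i t ht
      by_cases htI : t ∈ I
      · rw [hr'I i t htI, huniq t htI ht]
      · exact if_neg htI
    have s1 : SolvesOn m r' I := hs.congr hI hr'I
    have s2 : SolvesOn m r' (Set.Ioo (t₀ - τ) (t₀ + τ)) :=
      (SolvesOn.of_curve isOpen_Ioo (half_pos hδ) hα).congr isOpen_Ioo hr'J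
    have hJ := hmax (I ∪ Set.Ioo (t₀ - τ) (t₀ + τ)) (hI.union isOpen_Ioo) ?_
      Set.subset_union_left r' (fun t ht => ht.elim (s1 t) (s2 t)) hr'I
    · rw [← hJ]; exact Set.subset_union_right
    · apply IsPreconnected.ordConnected
      exact hIc.isPreconnected.union t₀ ht₀ htm isPreconnected_Ioo
  have hcl : IsClosed I := by
    rw [← closure_subset_iff_isClosed]
    intro x hx
    obtain ⟨t₀, ht₀, hd⟩ := Metric.mem_closure_iff.mp hx τ hτ
    apply step t₀ ht₀
    rw [Real.dist_eq, abs_lt] at hd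
    exact ⟨by linarith, by linarith⟩
  exact IsClopen.eq_univ ⟨hcl, hI⟩ ⟨0, h0⟩

lemma wedge_deriv {r v : ℝ → E4} {v' : E4} {t : ℝ} (hr : HasDerivAt r (v t) t)
    (hv : HasDerivAt v v' t) (x : E4) :
    HasDerivAt (fun s => wedge (r s) (v s) x) (wedge (r t) v' x) t := by
  simp only [wedge_apply]
  have h1 := (hv.inner ℝ (hasDerivAt_const t x)).smul hr
  have h2 := (hr.inner ℝ (hasDerivAt_const t x)).smul hv
  have h3 := h1.sub h2
  refine h3.congr_deriv ?_
  simp only [inner_zero_right, zero_add]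
  abel

lemma inv_norm_deriv {r : ℝ → E4} {r' : E4} {t : ℝ} (c : ℝ) (hr : HasDerivAt r r' t)
    (h0 : r t ≠ 0) :
    HasDerivAt (fun s => c / ‖r s‖) (- (c * inner ℝ (r t) r' * (1 / ‖r t‖ ^ 3))) t := by
  have hp : 0 < ‖r t‖ := norm_pos_iff.mpr h0
  have h1 := hr.norm_sq
  have h2 := h1.sqrt (by positivity)
  simp only [Real.sqrt_sq (norm_nonneg _)] at h2
  have h3 := (hasDerivAt_const t c).div h2 hp.ne'
  refine h3.congr_deriv ?_
  field_simp
  ring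

section
variable {ma mb mc : ℝ} {ra rb rc va vb vc : ℝ → E4} {aa ab ac : E4} {t : ℝ}

lemma Lam_deriv (kab kbc kca : ℝ)
    (hra : HasDerivAt ra (va t) t) (hrb : HasDerivAt rb (vb t) t) (hrc : HasDerivAt rc (vc t) t)
    (hva : HasDerivAt va aa t) (hvb : HasDerivAt vb ab t) (hvc : HasDerivAt vc ac t)
    (haa : aa = mb • kab • (rb t - ra t) + mc • kca • (rc t - ra t))
    (hab : ab = mc • kbc • (rc t - rb t) + ma • kab • (ra t - rb t))
    (hac : ac = ma • kca • (ra t - rc t) + mb • kbc • (rb t - rc t)) (x : E4) :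
    HasDerivAt (fun s => Lam ma mb mc (ra s) (rb s) (rc s) (va s) (vb s) (vc s) x) 0 t := by
  simp only [Lam, add_apply, smul_apply]
  have h1 := wedge_deriv (r := fun s => ra s - rb s) (v := fun s => va s - vb s)
    (hra.sub hrb) (hva.sub hvb) x
  have h2 := wedge_deriv (r := fun s => rb s - rc s) (v := fun s => vb s - vc s)
    (hrb.sub hrc) (hvb.sub hvc) x
  have h3 := wedge_deriv (r := fun s => rc s - ra s) (v := fun s => vc s - va s)
    (hrc.sub hra) (hvc.sub hva) x
  refine (((h1.const_smul (ma * mb)).add (h2.const_smul (mb * mc))).add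
    (h3.const_smul (mc * ma))).congr_deriv ?_
  simp only [wedge_apply, haa, hab, hac, inner_sub_left, inner_add_left, inner_smul_left,
    conj_trivial]
  module

lemma En_deriv
    (hra : HasDerivAt ra (va t) t) (hrb : HasDerivAt rb (vb t) t) (hrc : HasDerivAt rc (vc t) t)
    (hva : HasDerivAt va aa t) (hvb : HasDerivAt vb ab t) (hvc : HasDerivAt vc ac t)
    (nab : ra t ≠ rb t) (nbc : rb t ≠ rc t) (nca : rc t ≠ ra t)
    (haa : aa = mb • (1 / ‖ra t - rb t‖ ^ 3) • (rb t - ra t)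
      + mc • (1 / ‖rc t - ra t‖ ^ 3) • (rc t - ra t))
    (hab : ab = mc • (1 / ‖rb t - rc t‖ ^ 3) • (rc t - rb t)
      + ma • (1 / ‖ra t - rb t‖ ^ 3) • (ra t - rb t))
    (hac : ac = ma • (1 / ‖rc t - ra t‖ ^ 3) • (ra t - rc t)
      + mb • (1 / ‖rb t - rc t‖ ^ 3) • (rb t - rc t)) :
    HasDerivAt (fun s => En ma mb mc (ra s) (rb s) (rc s) (va s) (vb s) (vc s)) 0 t := by
  unfold En
  have h1 := inv_norm_deriv (r := fun s => ra s - rb s) (ma * mb) (hra.sub hrb)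
    (sub_ne_zero.mpr nab)
  have h2 := inv_norm_deriv (r := fun s => rb s - rc s) (mb * mc) (hrb.sub hrc)
    (sub_ne_zero.mpr nbc)
  have h3 := inv_norm_deriv (r := fun s => rc s - ra s) (mc * ma) (hrc.sub hra)
    (sub_ne_zero.mpr nca)
  have h4 := (((((hva.norm_sq.const_mul (1 / 2 * ma)).add (hvb.norm_sq.const_mul (1 / 2 * mb))).add
    (hvc.norm_sq.const_mul (1 / 2 * mc))).sub h1).sub h2).sub h3
  refine h4.congr_deriv ?_
  simp only [haa, hab, hac, inner_sub_left, inner_sub_right, inner_add_right, inner_smul_right]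
  generalize (1 / ‖ra t - rb t‖ ^ 3) = k1
  generalize (1 / ‖rb t - rc t‖ ^ 3) = k2
  generalize (1 / ‖rc t - ra t‖ ^ 3) = k3
  simp only [real_inner_comm _ (va t), real_inner_comm _ (vb t), real_inner_comm _ (vc t)]
  ring
end

/-- Angular momentum of a phase point. -/
def LamZ (m : Fin 3 → ℝ) (z : PS) : E4 →L[ℝ] E4 :=
  Lam (m 0) (m 1) (m 2) (z.1 0) (z.1 1) (z.1 2) (z.2 0) (z.2 1) (z.2 2)

/-- Energy of a phase point. -/
def EnZ (m : Fin 3 → ℝ) (z : PS) : ℝ :=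
  En (m 0) (m 1) (m 2) (z.1 0) (z.1 1) (z.1 2) (z.2 0) (z.2 1) (z.2 2)

lemma acc_zero {m : Fin 3 → ℝ} (hm : ∀ i, 0 < m i) (q : Fin 3 → E4) :
    acc m q 0 = m 1 • (1 / ‖q 0 - q 1‖ ^ 3) • (q 1 - q 0)
      + m 2 • (1 / ‖q 2 - q 0‖ ^ 3) • (q 2 - q 0) := by
  rw [acc_eq hm, show (Finset.univ.erase (0 : Fin 3)) = {1, 2} by decide,
    Finset.sum_pair (by decide), norm_sub_rev (q 0) (q 1)]

lemma acc_one {m : Fin 3 → ℝ} (hm : ∀ i, 0 < m i) (q : Fin 3 → E4) :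
    acc m q 1 = m 2 • (1 / ‖q 1 - q 2‖ ^ 3) • (q 2 - q 1)
      + m 0 • (1 / ‖q 0 - q 1‖ ^ 3) • (q 0 - q 1) := by
  rw [acc_eq hm, show (Finset.univ.erase (1 : Fin 3)) = {2, 0} by decide,
    Finset.sum_pair (by decide), norm_sub_rev (q 1) (q 2)]

lemma acc_two {m : Fin 3 → ℝ} (hm : ∀ i, 0 < m i) (q : Fin 3 → E4) :
    acc m q 2 = m 0 • (1 / ‖q 2 - q 0‖ ^ 3) • (q 0 - q 2)
      + m 1 • (1 / ‖q 1 - q 2‖ ^ 3) • (q 1 - q 2) := by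
  rw [acc_eq hm, show (Finset.univ.erase (2 : Fin 3)) = {0, 1} by decide,
    Finset.sum_pair (by decide), norm_sub_rev (q 2) (q 0)]

lemma const_of_hasDerivAt {F : Type*} [NormedAddCommGroup F] [NormedSpace ℝ F] {f : ℝ → F}
    {I : Set ℝ} (hI : IsOpen I) (hIc : I.OrdConnected) (h : ∀ t ∈ I, HasDerivAt f 0 t)
    {s t : ℝ} (hs : s ∈ I) (ht : t ∈ I) : f s = f t :=
  hI.is_const_of_deriv_eq_zero hIc.isPreconnected
    (fun u hu => (h u hu).differentiableAt.differentiableWithinAt)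
    (fun u hu => (h u hu).deriv) hs ht

lemma conserved {m : Fin 3 → ℝ} (hm : ∀ i, 0 < m i)
    {r : Fin 3 → ℝ → E4} {I : Set ℝ} (hI : IsOpen I) (hIc : I.OrdConnected)
    (hs : SolvesOn m r I) {z : ℝ → PS} (hz : z = fun t => (fun i => r i t, fun i => deriv (r i) t))
    {s t : ℝ} (hsI : s ∈ I) (htI : t ∈ I) :
    (∀ x, LamZ m (z s) x = LamZ m (z t) x) ∧ EnZ m (z s) = EnZ m (z t) := by
  subst hz
  constructor
  · intro x
    refine const_of_hasDerivAt hI hIc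
      (f := fun t => LamZ m (fun i => r i t, fun i => deriv (r i) t) x) (fun u hu => ?_) hsI htI
    obtain ⟨h1, h2⟩ := hs u hu
    exact Lam_deriv _ _ _ (h2 0).1 (h2 1).1 (h2 2).1 (h2 0).2 (h2 1).2 (h2 2).2
      (acc_zero hm fun i => r i u) (acc_one hm fun i => r i u) (acc_two hm fun i => r i u) x
  · refine const_of_hasDerivAt hI hIc
      (f := fun t => EnZ m (fun i => r i t, fun i => deriv (r i) t)) (fun u hu => ?_) hsI htI
    obtain ⟨h1, h2⟩ := hs u hu
    exact En_deriv (h2 0).1 (h2 1).1 (h2 2).1 (h2 0).2 (h2 1).2 (h2 2).2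
      (h1 0 1 (by decide)) (h1 1 2 (by decide)) (h1 2 0 (by decide))
      (acc_zero hm fun i => r i u) (acc_one hm fun i => r i u) (acc_two hm fun i => r i u)

lemma exists_dataZ {m : Fin 3 → ℝ} (hm : ∀ i, 0 < m i) :
    ∃ (l G : ℝ) (z : PS), 0 < l ∧ 0 < G ∧ z.1 0 ≠ z.1 1 ∧ z.1 1 ≠ z.1 2 ∧ z.1 2 ≠ z.1 0 ∧
      (∀ x, (m 0 + m 1 + m 2) * l * ‖x‖ ≤ ‖LamZ m z x‖) ∧
      EnZ m z < - G / (2 * l ^ 2) ∧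
      m 0 ^ 3 * m 1 ^ 3 ≤ G * (m 0 + m 1) ∧ m 1 ^ 3 * m 2 ^ 3 ≤ G * (m 1 + m 2) ∧
      m 2 ^ 3 * m 0 ^ 3 ≤ G * (m 2 + m 0) := by
  have h0 := hm 0
  have h1 := hm 1
  have h2 := hm 2
  set g1 := m 0 ^ 3 * m 1 ^ 3 / (m 0 + m 1) with hg1
  set g2 := m 1 ^ 3 * m 2 ^ 3 / (m 1 + m 2) with hg2
  set g3 := m 2 ^ 3 * m 0 ^ 3 / (m 2 + m 0) with hg3
  have key : ∀ G, 0 < G → g1 ≤ G → g2 ≤ G → g3 ≤ G → (∃ (l : ℝ) (z : PS), 0 < l ∧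
      z.1 0 ≠ z.1 1 ∧ z.1 1 ≠ z.1 2 ∧ z.1 2 ≠ z.1 0 ∧
      (∀ x, (m 0 + m 1 + m 2) * l * ‖x‖ ≤ ‖LamZ m z x‖) ∧
      EnZ m z < - G / (2 * l ^ 2)) → ∃ (l G : ℝ) (z : PS), 0 < l ∧ 0 < G ∧
      z.1 0 ≠ z.1 1 ∧ z.1 1 ≠ z.1 2 ∧ z.1 2 ≠ z.1 0 ∧
      (∀ x, (m 0 + m 1 + m 2) * l * ‖x‖ ≤ ‖LamZ m z x‖) ∧
      EnZ m z < - G / (2 * l ^ 2) ∧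
      m 0 ^ 3 * m 1 ^ 3 ≤ G * (m 0 + m 1) ∧ m 1 ^ 3 * m 2 ^ 3 ≤ G * (m 1 + m 2) ∧
      m 2 ^ 3 * m 0 ^ 3 ≤ G * (m 2 + m 0) := by
    rintro G hG b1 b2 b3 ⟨l, z, c1, c2, c3, c4, c5, c6⟩
    refine ⟨l, G, z, c1, hG, c2, c3, c4, c5, c6, ?_, ?_, ?_⟩
    · rw [hg1, div_le_iff₀ (by positivity)] at b1; exact b1
    · rw [hg2, div_le_iff₀ (by positivity)] at b2; exact b2
    · rw [hg3, div_le_iff₀ (by positivity)] at b3; exact b3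
  have conv : ∀ {s e p l : ℝ}, 0 < s → 0 < l → s * e < - p / (2 * l ^ 2) →
      e < - (p / s) / (2 * l ^ 2) := by
    intro s e p l hs hl h
    have : - (p / s) / (2 * l ^ 2) = (- p / (2 * l ^ 2)) / s := by field_simp
    rw [this, lt_div_iff₀ hs]; linarith
  have c1 : g2 ≤ g1 → g3 ≤ g1 → _ := fun a b => key g1 (by positivity) le_rfl a b
  have c2 : g1 ≤ g2 → g3 ≤ g2 → _ := fun a b => key g2 (by positivity) a le_rfl b
  have c3 : g1 ≤ g3 → g2 ≤ g3 → _ := fun a b => key g3 (by positivity) a b le_rfl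
  have x1 : ∃ (l : ℝ) (z : PS), 0 < l ∧ z.1 0 ≠ z.1 1 ∧ z.1 1 ≠ z.1 2 ∧ z.1 2 ≠ z.1 0 ∧
      (∀ x, (m 0 + m 1 + m 2) * l * ‖x‖ ≤ ‖LamZ m z x‖) ∧ EnZ m z < - g1 / (2 * l ^ 2) := by
    obtain ⟨l, ra, rb, rc, va, vb, vc, hl, nab, nbc, nca, hL, hE⟩ := exists_data h0 h1 h2
    exact ⟨l, (![ra, rb, rc], ![va, vb, vc]), hl, nab, nbc, nca, hL,
      conv (by positivity) hl hE⟩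
  have x2 : ∃ (l : ℝ) (z : PS), 0 < l ∧ z.1 0 ≠ z.1 1 ∧ z.1 1 ≠ z.1 2 ∧ z.1 2 ≠ z.1 0 ∧
      (∀ x, (m 0 + m 1 + m 2) * l * ‖x‖ ≤ ‖LamZ m z x‖) ∧ EnZ m z < - g2 / (2 * l ^ 2) := by
    obtain ⟨l, ra, rb, rc, va, vb, vc, hl, nab, nbc, nca, hL, hE⟩ := exists_data h1 h2 h0
    refine ⟨l, (![rc, ra, rb], ![vc, va, vb]), hl, nca, nab, nbc, fun x => ?_, ?_⟩
    · have := hL x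
      rw [Lam_rot, show m 1 + m 2 + m 0 = m 0 + m 1 + m 2 by ring] at this
      exact this
    · have := conv (by positivity) hl hE
      rw [En_rot] at this
      exact this
  have x3 : ∃ (l : ℝ) (z : PS), 0 < l ∧ z.1 0 ≠ z.1 1 ∧ z.1 1 ≠ z.1 2 ∧ z.1 2 ≠ z.1 0 ∧
      (∀ x, (m 0 + m 1 + m 2) * l * ‖x‖ ≤ ‖LamZ m z x‖) ∧ EnZ m z < - g3 / (2 * l ^ 2) := by
    obtain ⟨l, ra, rb, rc, va, vb, vc, hl, nab, nbc, nca, hL, hE⟩ := exists_data h2 h0 h1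
    refine ⟨l, (![rb, rc, ra], ![vb, vc, va]), hl, nbc, nca, nab, fun x => ?_, ?_⟩
    · have := hL x
      rw [← Lam_rot, show m 2 + m 0 + m 1 = m 0 + m 1 + m 2 by ring] at this
      exact this
    · have := conv (by positivity) hl hE
      rw [← En_rot] at this
      exact this
  rcases le_total g1 g2 with a | a
  · rcases le_total g2 g3 with b | b
    · exact c3 (a.trans b) b x3
    · exact c2 a b x2
  · rcases le_total g1 g3 with b | b
    · exact c3 b (a.trans b) x3
    · exact c1 a b x1

lemma LamZ_continuous (m : Fin 3 → ℝ) : Continuous (LamZ m) := by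
  have hw : Continuous fun p : E4 × E4 => wedge p.1 p.2 := by
    have hb : Continuous fun p : E4 × E4 => (innerSL ℝ p.2).smulRight p.1 := by
      have e : (fun p : E4 × E4 => (innerSL ℝ p.2).smulRight p.1) =
          fun p : E4 × E4 => ContinuousLinearMap.smulRightL ℝ E4 E4 (innerSL ℝ p.2) p.1 := rfl
      rw [e]
      fun_prop
    have hb' : Continuous fun p : E4 × E4 => (innerSL ℝ p.1).smulRight p.2 :=
      hb.comp continuous_swap
    exact hb.sub hb'
  have hc : ∀ i j : Fin 3, Continuous fun z : PS => wedge (z.1 i - z.1 j) (z.2 i - z.2 j) := by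
    intro i j
    exact hw.comp (f := fun z : PS => (z.1 i - z.1 j, z.2 i - z.2 j)) (by fun_prop)
  exact (((hc 0 1).const_smul (m 0 * m 1)).add ((hc 1 2).const_smul (m 1 * m 2))).add
    ((hc 2 0).const_smul (m 2 * m 0))

lemma EnZ_continuousAt (m : Fin 3 → ℝ) {z : PS} (h01 : z.1 0 ≠ z.1 1) (h12 : z.1 1 ≠ z.1 2)
    (h20 : z.1 2 ≠ z.1 0) : ContinuousAt (EnZ m) z := by
  have a1 : ‖z.1 0 - z.1 1‖ ≠ 0 := norm_ne_zero_iff.mpr (sub_ne_zero.mpr h01)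
  have a2 : ‖z.1 1 - z.1 2‖ ≠ 0 := norm_ne_zero_iff.mpr (sub_ne_zero.mpr h12)
  have a3 : ‖z.1 2 - z.1 0‖ ≠ 0 := norm_ne_zero_iff.mpr (sub_ne_zero.mpr h20)
  unfold EnZ En
  fun_prop (disch := assumption)

lemma pair_cases {P : Fin 3 → Fin 3 → Prop} (hsymm : ∀ i j, P i j → P j i)
    (h01 : P 0 1) (h12 : P 1 2) (h20 : P 2 0) : ∀ i j, i ≠ j → P i j := by
  intro i j hij
  fin_cases i <;> fin_cases j <;> first | exact absurd rfl hij | assumption | (apply hsymm; assumption)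

/-- There is a nonempty open set of initial conditions (with pairwise distinct
positions) of the three-body problem in `ℝ⁴` such that every maximal solution starting
in it is global and has mutual distances bounded away from `0` and `∞`; in particular
it contains no unbounded orbits. -/
theorem exists_open_set_of_bounded_orbits (m : Fin 3 → ℝ) (hm : ∀ i, 0 < m i) :
    ∃ U : Set ((Fin 3 → E4) × (Fin 3 → E4)),
      IsOpen U ∧ U.Nonempty ∧
      (∀ x ∈ U, ∀ i j : Fin 3, i ≠ j → x.1 i ≠ x.1 j) ∧
      ∀ (r : Fin 3 → ℝ → E4) (I : Set ℝ),
        IsOpen I → I.OrdConnected → (0 : ℝ) ∈ I →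
        SolvesOn m r I →
        ((fun i => r i 0), fun i => deriv (r i) 0) ∈ U →
        -- maximality of the solution `r` on `I`
        (∀ (J : Set ℝ), IsOpen J → J.OrdConnected → I ⊆ J →
          ∀ r' : Fin 3 → ℝ → E4, SolvesOn m r' J →
            (∀ i, ∀ t ∈ I, r' i t = r i t) → J = I) →
        I = Set.univ ∧
        (∃ δ > 0, ∀ t ∈ I, ∀ i j : Fin 3, i ≠ j → δ ≤ ‖r i t - r j t‖) ∧
        (∃ R : ℝ, ∀ t ∈ I, ∀ i j : Fin 3, ‖r i t - r j t‖ ≤ R) := by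
  obtain ⟨l₀, G, z₀, hl₀, hG, n01, n12, n20, hL, hE, hG1, hG2, hG3⟩ := exists_dataZ hm
  have h0 := hm 0
  have h1 := hm 1
  have h2 := hm 2
  obtain ⟨h, hEh, hhG⟩ := exists_between hE
  have hneg : h < 0 := by
    have : - G / (2 * l₀ ^ 2) < 0 := div_neg_of_neg_of_pos (by linarith) (by positivity)
    linarith
  have hev : ∀ᶠ l in nhds l₀, 0 < l ∧ h < - G / (2 * l ^ 2) := by
    have hc : ContinuousAt (fun l : ℝ => - G / (2 * l ^ 2)) l₀ := by
      have : 2 * l₀ ^ 2 ≠ 0 := by positivity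
      fun_prop (disch := assumption)
    exact (lt_mem_nhds hl₀).and (hc.eventually (lt_mem_nhds hhG))
  obtain ⟨l, ⟨hl, hhl⟩, hll⟩ := ((hev.filter_mono nhdsWithin_le_nhds).and
    (self_mem_nhdsWithin : Set.Iio l₀ ∈ nhdsWithin l₀ (Set.Iio l₀))).exists
  have hll : l < l₀ := hll
  set M := m 0 + m 1 + m 2 with hM
  have hMpos : 0 < M := by positivity
  set good : Set PS := {z | (∀ i j, i ≠ j → z.1 i ≠ z.1 j) ∧
    (∀ x, M * l * ‖x‖ ≤ ‖LamZ m z x‖) ∧ EnZ m z ≤ h} with hgood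
  have hmem : good ∈ nhds z₀ := by
    have e1 : ∀ i j : Fin 3, i ≠ j → z₀.1 i ≠ z₀.1 j :=
      pair_cases (P := fun i j => z₀.1 i ≠ z₀.1 j) (fun i j h => h.symm) n01 n12 n20
    have e2 : ∀ᶠ z in nhds z₀, ∀ i j, i ≠ j → z.1 i ≠ z.1 j := by
      rw [Filter.eventually_all]; intro i
      rw [Filter.eventually_all]; intro j
      by_cases hij : i = j
      · exact Filter.Eventually.of_forall fun z hh => absurd hij hh
      · have c1 : Continuous (fun z : PS => z.1 i) := by fun_prop
        have c2 : Continuous (fun z : PS => z.1 j) := by fun_prop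
        filter_upwards [(isOpen_ne_fun c1 c2).mem_nhds (e1 i j hij)] with z hz _ using hz
    have e3 : ∀ᶠ z in nhds z₀, dist (LamZ m z) (LamZ m z₀) < M * (l₀ - l) :=
      (LamZ_continuous m).continuousAt.eventually
        (Metric.ball_mem_nhds _ (mul_pos hMpos (by linarith)))
    have e4 : ∀ᶠ z in nhds z₀, EnZ m z < h :=
      (EnZ_continuousAt m n01 n12 n20).eventually (gt_mem_nhds hEh)
    filter_upwards [e2, e3, e4] with z z2 z3 z4
    refine ⟨z2, fun x => ?_, z4.le⟩
    rw [dist_comm, dist_eq_norm] at z3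
    have k1 := hL x
    have k2 := (LamZ m z₀ - LamZ m z).le_opNorm x
    rw [sub_apply] at k2
    have k3 := norm_sub_norm_le (LamZ m z₀ x) (LamZ m z x)
    have k4 := mul_le_mul_of_nonneg_right z3.le (norm_nonneg x)
    linarith
  refine ⟨interior good, isOpen_interior, ⟨z₀, mem_interior_iff_mem_nhds.mpr hmem⟩,
    fun x hx => (interior_subset hx).1, ?_⟩
  intro r I hI hIc h0I hs hU hmax
  obtain ⟨-, hgL, hgE⟩ := interior_subset hU
  set S := m 0 * m 1 + m 1 * m 2 + m 2 * m 0 with hS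
  have hSpos : 0 < S := by positivity
  set gap := - G / (2 * l ^ 2) - h with hgap
  have hgappos : 0 < gap := by linarith
  set δ := l ^ 2 / (2 * M * S) with hδ
  have hδpos : 0 < δ := by positivity
  set R := 2 * S / gap with hR
  have hRpos : 0 < R := by positivity
  have bounds : ∀ t ∈ I, EnZ m (fun i => r i t, fun i => deriv (r i) t) ≤ h ∧
      (∀ i j : Fin 3, i ≠ j → δ ≤ ‖r i t - r j t‖) ∧
      (∀ i j : Fin 3, i ≠ j → ‖r i t - r j t‖ ≤ R) := by
    intro t ht
    obtain ⟨cL, cE⟩ := conserved hm hI hIc hs rfl ht h0I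
    have hEt : EnZ m (fun i => r i t, fun i => deriv (r i) t) ≤ h := cE.trans_le hgE
    have hLt : ∀ x, M * l * ‖x‖ ≤ ‖LamZ m (fun i => r i t, fun i => deriv (r i) t) x‖ := by
      intro x; rw [cL x]; exact hgL x
    have hne := (hs t ht).1
    obtain ⟨⟨b1, b2, b3⟩, b4, b5, b6⟩ := all_bound h0 h1 h2 hl hLt hEt hneg.le hG1 hG2 hG3 hgappos
      (by rw [hgap]; linarith) (hne 0 1 (by decide)) (hne 1 2 (by decide)) (hne 2 0 (by decide))
      hδ hR
    refine ⟨hEt, ?_, ?_⟩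
    · exact pair_cases (P := fun i j => δ ≤ ‖r i t - r j t‖)
        (fun i j hh => by rw [norm_sub_rev]; exact hh) b1 b2 b3
    · exact pair_cases (P := fun i j => ‖r i t - r j t‖ ≤ R)
        (fun i j hh => by rw [norm_sub_rev]; exact hh) b4 b5 b6
  set A := ∑ i, 2 * (S / δ) / m i with hA
  have hApos : ∀ i, 2 * (S / δ) / m i ≤ A := fun i =>
    Finset.single_le_sum (f := fun i => 2 * (S / δ) / m i)
      (fun j _ => by have := hm j; positivity) (Finset.mem_univ i)
  have hA0 : 0 ≤ A := Finset.sum_nonneg (fun j _ => by have := hm j; positivity)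
  have hvel : ∀ t ∈ I, ∀ i, ‖deriv (r i) t‖ ≤ 1 + A := by
    intro t ht i
    obtain ⟨bE, bd, -⟩ := bounds t ht
    unfold EnZ En at bE
    simp only at bE
    have p1 : m 0 * m 1 / ‖r 0 t - r 1 t‖ ≤ m 0 * m 1 / δ := by
      gcongr; exact bd 0 1 (by decide)
    have p2 : m 1 * m 2 / ‖r 1 t - r 2 t‖ ≤ m 1 * m 2 / δ := by
      gcongr; exact bd 1 2 (by decide)
    have p3 : m 2 * m 0 / ‖r 2 t - r 0 t‖ ≤ m 2 * m 0 / δ := by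
      gcongr; exact bd 2 0 (by decide)
    have p4 : S / δ = m 0 * m 1 / δ + m 1 * m 2 / δ + m 2 * m 0 / δ := by rw [hS]; ring
    have q0 : 0 ≤ 1 / 2 * m 0 * ‖deriv (r 0) t‖ ^ 2 := by positivity
    have q1 : 0 ≤ 1 / 2 * m 1 * ‖deriv (r 1) t‖ ^ 2 := by positivity
    have q2 : 0 ≤ 1 / 2 * m 2 * ‖deriv (r 2) t‖ ^ 2 := by positivity
    have hi : 1 / 2 * m i * ‖deriv (r i) t‖ ^ 2 ≤ S / δ := by
      fin_cases i <;> simp only [Fin.zero_eta, Fin.mk_one, Fin.reduceFinMk] <;> linarith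
    have hi2 : ‖deriv (r i) t‖ ^ 2 ≤ A := by
      refine le_trans ?_ (hApos i)
      rw [le_div_iff₀ (hm i)]; linarith
    nlinarith [norm_nonneg (deriv (r i) t)]
  refine ⟨?_, ⟨δ, hδpos, fun t ht => (bounds t ht).2.1⟩, ⟨R, fun t ht i j => ?_⟩⟩
  · exact extend_univ hm hδpos (by linarith) hI hIc h0I hs (fun t ht => (bounds t ht).2.1) hvel hmax
  · by_cases hij : i = j
    · rw [hij, sub_self, norm_zero]; exact hRpos.le
    · exact (bounds t ht).2.2 i j hij

end
end
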